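/- arXiv:1704.02407 — 3 statements merged into one kernel-verified Lean document; each statement's English description precedes it below -/
import Mathlib

section
/- For every integer d ≥ 4 there is a constant C_d such that for every n ≥ 1, every finite abelian group G of order n, and every function f : {1,…,n} → G with Σ_{i=1}^n f(i) = d·ΣG, the number T of d-tuples (π₁,…,π_d) ∈ S^d with π₁ + ⋯ + π_d = f satisfies T = (1 + E) · (n!)^d / n^{n−1} with |E| ≤ C_d · n^{3−d}. -/
/-!
Identify the index set with `G`, and for a tuple `χ` of characters of `G` let `amp χ` be the average
of `∏ i, χ i (σ i)` over the permutations `σ` of `G`. Fourier inversion on `G ^ n` gives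
`n ^ n * T = ∑ χ, (n! * amp χ) ^ d * ∏ i, χ i (-f i)` (`fourier_count`). Each of the `n` constant
tuples contributes exactly `n! ^ d`, because `∑ f = d • ∑ G`; this is the main term. It remains to
show that the sum of `‖amp χ‖ ^ d` over the nonconstant tuples is `O(n ^ (4 - d))`
(`exists_nonconst_bound`).

*Tuples near a constant.* Subtracting a constant tuple does not change `‖amp χ‖`, so at the cost of
a factor `n` one may assume that `χ` has `m` nontrivial coordinates, with `1 ≤ m ≤ n / 5`. A
nontrivial character sums to zero over `G`, which gives a recursion for `amp` merging two
coordinates; it yields `‖amp χ‖ ^ 2 ≤ 1 / n.choose m` (`sq_norm_amp_le`). By Parseval and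
Möbius inversion, the sum of `‖amp χ‖ ^ 2` over the tuples with a given support of size `m` is an
explicit `R n m` (`sum_sq_supp_eq`), with `R n 1 = 0` and `∑ m, R n m = O(1 / n)` (`sum_R_le`).
Using the pointwise bound for `d - 2` of the factors and the `L²` mass for the other two, the near
tuples contribute `O(n * n ^ (4 - d) * (1 / n))`.

*Tuples far from all constants.* Suppose that the character `ψ` has multiplicity `a ψ` in `χ`, with
all `a ψ ≤ 4 n / 5`. Up to normalisation `amp χ` is a coefficient of
`∏ x, ∑ ψ, z ψ * ψ x` as a polynomial in `z`. Averaging over the phases of `z` with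
`|z ψ| ^ 2 = a ψ`, and using Parseval with the inequality of arithmetic and geometric means, gives
`‖amp χ‖ ^ 2 ≤ (∏ ψ, (a ψ)! ^ 2 / a ψ ^ a ψ) * n ^ n / n! ^ 2` (`sq_norm_amp_le_type`). Summing the
square of this bound over all multiplicities by a generating function shows that the far tuples
contribute `O((8 / 9) ^ n)` (`exists_far_bound`).
-/

namespace BijectionSums

open Finset
open scoped Classical

set_option linter.unusedSectionVars false

variable {G : Type} [AddCommGroup G] [Fintype G]

/-! ### Fourier coefficients of the set of bijections -/

/-- The normalised Fourier coefficient at `χ` of the set of bijections: the average of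
`∏ i, χ i (σ i)` over all permutations `σ` of `G`. The index set of the coordinates is taken
to be `G` itself. -/
noncomputable def amp (χ : G → AddChar G ℂ) : ℂ :=
  (∑ σ : Equiv.Perm G, ∏ i, χ i (σ i)) / (Fintype.card G).factorial

/-- The set of coordinates at which `χ` is a nontrivial character. -/
noncomputable def supp (χ : G → AddChar G ℂ) : Finset G := {i | χ i ≠ 0}

/-- Coordinate `i₀` of `χ` is made trivial and its character is moved to coordinate `j`. -/
noncomputable def merge (χ : G → AddChar G ℂ) (i₀ j : G) : G → AddChar G ℂ :=
  Function.update (Function.update χ j (χ j + χ i₀)) i₀ 0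

lemma addChar_sum {α : Type*} (ψ : AddChar G ℂ) (s : Finset α) (g : α → G) :
    ψ (∑ i ∈ s, g i) = ∏ i ∈ s, ψ (g i) :=
  map_prod ψ.toMonoidHom (fun i => Multiplicative.ofAdd (g i)) s

lemma mem_supp {χ : G → AddChar G ℂ} {i : G} : i ∈ supp χ ↔ χ i ≠ 0 := by simp [supp]

lemma amp_comp (χ : G → AddChar G ℂ) (τ : Equiv.Perm G) : amp (χ ∘ τ) = amp χ := by
  unfold amp
  congr 1
  refine Fintype.sum_equiv (Equiv.mulRight τ⁻¹) _ _ fun σ => ?_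
  refine Fintype.prod_equiv τ _ _ fun i => ?_
  simp

lemma norm_amp_le_one (χ : G → AddChar G ℂ) : ‖amp χ‖ ≤ 1 := by
  unfold amp
  rw [norm_div, div_le_one (by simpa using Nat.factorial_pos _)]
  refine (norm_sum_le _ _).trans ?_
  simp [AddChar.norm_apply, Fintype.card_perm]

lemma norm_amp_add_const (χ : G → AddChar G ℂ) (ψ : AddChar G ℂ) :
    ‖amp (fun i => χ i + ψ)‖ = ‖amp χ‖ := by
  have h : amp (fun i => χ i + ψ) = ψ (∑ x, x) * amp χ := by
    unfold amp
    rw [← mul_div_assoc, mul_sum]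
    congr 1
    refine sum_congr rfl fun σ _ => ?_
    simp only [AddChar.add_apply, prod_mul_distrib]
    rw [mul_comm, ← Equiv.sum_comp σ (fun x => x), addChar_sum]
  rw [h, norm_mul, AddChar.norm_apply, one_mul]

lemma amp_const (ψ : AddChar G ℂ) : amp (fun _ => ψ) = ψ (∑ x, x) := by
  unfold amp
  have : ∀ σ : Equiv.Perm G, ∏ i, ψ (σ i) = ψ (∑ x, x) := fun σ => by
    rw [← Equiv.sum_comp σ (fun x => x), addChar_sum]
  simp only [this, sum_const, card_univ, Fintype.card_perm, nsmul_eq_mul]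
  field_simp [Nat.factorial_ne_zero]

/-- The sum of a nontrivial character `χ i₀` over all values `σ j` vanishes. -/
lemma amp_add_sum_merge (χ : G → AddChar G ℂ) (i₀ : G) (h : χ i₀ ≠ 0) :
    amp χ + ∑ j ∈ univ.erase i₀, amp (merge χ i₀ j) = 0 := by
  have key : ∀ σ : Equiv.Perm G, ∀ j ∈ univ.erase i₀,
      ∏ i, merge χ i₀ j i (σ i) = (∏ i ∈ univ.erase i₀, χ i (σ i)) * χ i₀ (σ j) := by
    intro σ j hj
    have hj' : j ≠ i₀ := (mem_erase.1 hj).1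
    rw [← mul_prod_erase univ _ (mem_univ i₀), ← mul_prod_erase _ _ hj,
      ← mul_prod_erase (univ.erase i₀) (fun i => χ i (σ i)) hj]
    have : ∏ i ∈ (univ.erase i₀).erase j, merge χ i₀ j i (σ i)
        = ∏ i ∈ (univ.erase i₀).erase j, χ i (σ i) := by
      refine prod_congr rfl fun i hi => ?_
      simp only [mem_erase] at hi
      simp [merge, hi.1, hi.2.1]
    rw [this]
    simp [merge, hj']
    ring
  unfold amp
  rw [← sum_div, ← add_div, sum_comm, ← sum_add_distrib]
  rw [sum_eq_zero, zero_div]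
  intro σ _
  rw [sum_congr rfl (key σ), ← mul_prod_erase univ _ (mem_univ i₀), ← mul_sum, mul_comm, ← mul_add,
    add_sum_erase univ (fun j => χ i₀ (σ j)) (mem_univ i₀), Equiv.sum_comp σ (fun x => χ i₀ x),
    AddChar.sum_eq_zero_iff_ne_zero.2 h, mul_zero]

lemma merge_of_zero (χ : G → AddChar G ℂ) (i₀ j : G) (hj : χ j = 0) (hij : j ≠ i₀) :
    merge χ i₀ j = χ ∘ Equiv.swap i₀ j := by
  funext i
  by_cases h1 : i = i₀
  · subst h1; simp [merge, hj]
  · by_cases h2 : i = j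
    · subst h2; simp [merge, hj, h1]
    · simp [merge, h1, h2, Equiv.swap_apply_of_ne_of_ne]

/-- In `amp_add_sum_merge`, moving the character to a trivial coordinate only permutes the
coordinates and so leaves `amp` unchanged; collecting these terms on the left gives a recursion to
smaller supports. -/
lemma amp_merge (χ : G → AddChar G ℂ) (i₀ : G) (h : χ i₀ ≠ 0) :
    ((Fintype.card G - #(supp χ) + 1 : ℕ) : ℂ) * amp χ =
      - ∑ j ∈ (supp χ).erase i₀, amp (merge χ i₀ j) := by
  have h0 := amp_add_sum_merge χ i₀ h
  have hsub : (supp χ).erase i₀ ⊆ univ.erase i₀ := erase_subset_erase _ (subset_univ _)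
  rw [← sum_sdiff hsub] at h0
  have h1 : ∑ j ∈ univ.erase i₀ \ (supp χ).erase i₀, amp (merge χ i₀ j)
      = ((Fintype.card G - #(supp χ) : ℕ) : ℂ) * amp χ := by
    rw [sum_congr rfl (g := fun _ => amp χ)]
    · rw [sum_const, nsmul_eq_mul, card_sdiff_of_subset hsub, card_erase_of_mem (mem_univ _),
        card_erase_of_mem (mem_supp.2 h), card_univ]
      have : 1 ≤ #(supp χ) := card_pos.2 ⟨i₀, mem_supp.2 h⟩
      congr 2
      omega
    · intro j hj
      simp only [mem_sdiff, mem_erase, mem_univ, and_true, mem_supp, not_and, not_not] at hj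
      rw [merge_of_zero χ i₀ j (hj.2 hj.1) hj.1, amp_comp]
  rw [h1] at h0
  push_cast
  linear_combination h0

lemma supp_merge (χ : G → AddChar G ℂ) (i₀ j : G) (h : χ i₀ ≠ 0) (hj : j ∈ (supp χ).erase i₀) :
    #(supp (merge χ i₀ j)) + 1 = #(supp χ) ∨ #(supp (merge χ i₀ j)) + 2 = #(supp χ) := by
  have hj' := mem_erase.1 hj
  by_cases hs : χ j + χ i₀ = 0
  · right
    have : supp (merge χ i₀ j) = ((supp χ).erase i₀).erase j := by
      ext i
      simp only [mem_supp, mem_erase, merge]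
      by_cases h1 : i = i₀
      · simp [h1]
      · by_cases h2 : i = j
        · simp [h2, hs, hj'.1]
        · simp [h1, h2]
    rw [this, card_erase_of_mem hj, card_erase_of_mem (mem_supp.2 h)]
    have : 1 < #(supp χ) := one_lt_card.2 ⟨i₀, mem_supp.2 h, j, hj'.2, hj'.1.symm⟩
    omega
  · left
    have : supp (merge χ i₀ j) = (supp χ).erase i₀ := by
      ext i
      simp only [mem_supp, mem_erase, merge]
      by_cases h1 : i = i₀
      · simp [h1]
      · by_cases h2 : i = j
        · subst h2; simp [hs, h1, mem_supp.1 hj'.2]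
        · simp [h1, h2]
    rw [this, card_erase_of_mem (mem_supp.2 h)]
    have : 1 ≤ #(supp χ) := card_pos.2 ⟨i₀, mem_supp.2 h⟩
    omega

/-- Iterating `amp_merge`: a coefficient with `m ≤ n/2` nontrivial coordinates has modulus at most
`(n.choose m)^(-1/2)`. -/
lemma sq_norm_amp_le (χ : G → AddChar G ℂ) (hm : 2 * #(supp χ) ≤ Fintype.card G) :
    ‖amp χ‖ ^ 2 * ((Fintype.card G).choose #(supp χ) : ℝ) ≤ 1 := by
  obtain ⟨m, hmm⟩ : ∃ m, #(supp χ) = m := ⟨_, rfl⟩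
  induction m using Nat.strong_induction_on generalizing χ with
  | _ m ih =>
  subst hmm
  set n := Fintype.card G with hn
  rcases Nat.eq_zero_or_pos #(supp χ) with h0 | hpos
  · rw [h0]
    have := norm_amp_le_one χ
    simp only [Nat.choose_zero_right, Nat.cast_one, mul_one]
    exact pow_le_one₀ (norm_nonneg _) this
  obtain ⟨i₀, hi₀⟩ := card_pos.1 hpos
  have hne := mem_supp.1 hi₀
  obtain ⟨k, hk⟩ : ∃ k, #(supp χ) = k + 1 := ⟨#(supp χ) - 1, by omega⟩
  have hrec := amp_merge χ i₀ hne
  rw [← hn, hk] at hrec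
  rw [hk] at hm
  have hnk : n - (k + 1) + 1 = n - k := by omega
  rw [hnk] at hrec
  obtain ⟨r, hr⟩ : ∃ r, n = k + r := ⟨n - k, by omega⟩
  have hrk : n - k = r := by omega
  rw [hrk] at hrec
  have hrpos : 0 < r := by omega
  -- Pascal-type ratios of binomial coefficients with `n = k + r`.
  have hc1 : ((n.choose (k + 1) : ℕ) : ℝ) * (k + 1) = n.choose k * r := by
    have := Nat.choose_succ_right_eq n k
    rw [hrk] at this
    exact_mod_cast this
  have hbound : ∀ j ∈ (supp χ).erase i₀,
      ‖amp (merge χ i₀ j)‖ ^ 2 * (k : ℝ) ^ 2 * (n.choose (k + 1)) ≤ r ^ 2 := by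
    intro j hj
    have hsub := supp_merge χ i₀ j hne hj
    rw [hk] at hsub
    have hk1 : 1 ≤ k := by
      have : #((supp χ).erase i₀) = k := by rw [card_erase_of_mem hi₀, hk]; rfl
      have : 0 < #((supp χ).erase i₀) := card_pos.2 ⟨j, hj⟩
      omega
    set A := ‖amp (merge χ i₀ j)‖ ^ 2 with hA
    have hA0 : 0 ≤ A := by positivity
    have hk1R : (1 : ℝ) ≤ k := by exact_mod_cast hk1
    rcases hsub with hs | hs
    · have e : #(supp (merge χ i₀ j)) = k := by omega
      have h1 := ih k (by omega) (merge χ i₀ j) (by rw [e]; omega) e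
      rw [e, ← hA] at h1
      have hkr : (k : ℝ) ≤ r := by exact_mod_cast (by omega : k ≤ r)
      have hr0 : (0 : ℝ) < r := by exact_mod_cast hrpos
      have e2 : A * (k : ℝ) ^ 2 * (n.choose (k + 1)) * (k + 1)
          = (A * n.choose k) * (k ^ 2 * r) := by linear_combination A * (k : ℝ) ^ 2 * hc1
      have e3 : (A * n.choose k) * ((k : ℝ) ^ 2 * r) ≤ 1 * (k ^ 2 * r) := by gcongr
      have e4 : (k : ℝ) ^ 2 * r ≤ r ^ 2 * (k + 1) := by
        nlinarith [mul_le_mul_of_nonneg_left hkr (mul_nonneg (by positivity : (0:ℝ) ≤ k) hr0.le)]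
      have : A * (k : ℝ) ^ 2 * (n.choose (k + 1)) * (k + 1) ≤ r ^ 2 * (k + 1) := by linarith
      exact le_of_mul_le_mul_right this (by positivity)
    · obtain ⟨l, rfl⟩ : ∃ l, k = l + 1 := ⟨k - 1, by omega⟩
      have e : #(supp (merge χ i₀ j)) = l := by omega
      have h1 := ih l (by omega) (merge χ i₀ j) (by rw [e]; omega) e
      rw [e, ← hA] at h1
      have hc2 : ((n.choose (l + 1) : ℕ) : ℝ) * (l + 1) = n.choose l * (r + 1) := by
        have := Nat.choose_succ_right_eq n l
        rw [show n - l = r + 1 by omega] at this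
        exact_mod_cast this
      have hlr : (l : ℝ) + 2 ≤ r := by exact_mod_cast (by omega : l + 2 ≤ r)
      push_cast at hc1 ⊢
      have hl0 : (0 : ℝ) ≤ l := by positivity
      have hr0 : (0 : ℝ) < r := by exact_mod_cast hrpos
      have e2 : A * ((l : ℝ) + 1) ^ 2 * (n.choose (l + 1 + 1)) * (l + 1 + 1)
          = (A * n.choose l) * ((l + 1) * (r * (r + 1))) := by
        linear_combination A * ((l : ℝ) + 1) ^ 2 * hc1 + A * ((l : ℝ) + 1) * r * hc2
      have e3 : (A * n.choose l) * (((l : ℝ) + 1) * (r * (r + 1)))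
          ≤ 1 * ((l + 1) * (r * (r + 1))) := by gcongr
      have e4 : ((l : ℝ) + 1) * (r * (r + 1)) ≤ r ^ 2 * (l + 1 + 1) := by nlinarith
      have : A * ((l : ℝ) + 1) ^ 2 * (n.choose (l + 1 + 1)) * (l + 1 + 1) ≤ r ^ 2 * (l + 1 + 1) := by
        linarith
      exact le_of_mul_le_mul_right this (by positivity)
  have hcardE : #((supp χ).erase i₀) = k := by rw [card_erase_of_mem hi₀, hk]; rfl
  have hsum : ((r : ℝ) * ‖amp χ‖) ^ 2 ≤ k * ∑ j ∈ (supp χ).erase i₀, ‖amp (merge χ i₀ j)‖ ^ 2 := by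
    have h1 : (r : ℝ) * ‖amp χ‖ ≤ ∑ j ∈ (supp χ).erase i₀, ‖amp (merge χ i₀ j)‖ := by
      have := congrArg norm hrec
      rw [norm_mul, norm_neg, Complex.norm_natCast] at this
      rw [this]
      exact norm_sum_le _ _
    refine (pow_le_pow_left₀ (by positivity) h1 2).trans ?_
    have := sq_sum_le_card_mul_sum_sq (s := (supp χ).erase i₀)
      (f := fun j => ‖amp (merge χ i₀ j)‖)
    rwa [hcardE] at this
  rw [hk]
  have hr0 : (0 : ℝ) < r := by exact_mod_cast hrpos
  rcases Nat.eq_zero_or_pos k with hk0 | hkpos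
  · subst hk0
    simp only [Nat.cast_zero, zero_mul] at hsum
    have : (r : ℝ) * ‖amp χ‖ = 0 := by
      have := sq_nonneg ((r : ℝ) * ‖amp χ‖)
      exact pow_eq_zero_iff (two_ne_zero) |>.1 (le_antisymm hsum this)
    have : ‖amp χ‖ = 0 := by
      rcases mul_eq_zero.1 this with h | h
      · exact absurd h hr0.ne'
      · exact h
    simp [this]
  · have hk0 : (0 : ℝ) < k := by exact_mod_cast hkpos
    have h2 : (∑ j ∈ (supp χ).erase i₀, ‖amp (merge χ i₀ j)‖ ^ 2) * (k : ℝ) ^ 2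
        * (n.choose (k + 1)) ≤ k * r ^ 2 := by
      rw [sum_mul, sum_mul]
      refine (sum_le_sum hbound).trans ?_
      rw [sum_const, hcardE, nsmul_eq_mul]
    have h3 : ((r : ℝ) * ‖amp χ‖) ^ 2 * (n.choose (k + 1)) * k ≤ r ^ 2 * k := by
      calc ((r : ℝ) * ‖amp χ‖) ^ 2 * (n.choose (k + 1)) * k
          ≤ (k * ∑ j ∈ (supp χ).erase i₀, ‖amp (merge χ i₀ j)‖ ^ 2) * (n.choose (k + 1)) * k := by
            gcongr
        _ = (∑ j ∈ (supp χ).erase i₀, ‖amp (merge χ i₀ j)‖ ^ 2) * (k : ℝ) ^ 2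
              * (n.choose (k + 1)) := by ring
        _ ≤ _ := by linarith
    have h4 := le_of_mul_le_mul_right h3 hk0
    have h5 : r ^ 2 * (‖amp χ‖ ^ 2 * (n.choose (k + 1) : ℝ)) ≤ (r : ℝ) ^ 2 * 1 := by
      linarith [h4]
    exact le_of_mul_le_mul_left h5 (by positivity)

/-! ### The `L²` mass of coefficients with a given support -/

/-- The indicator of `0` as a character sum, over a coordinate in `U` (all characters) or outside
`U` (only the trivial character). -/
lemma sum_char_ite (U : Finset G) (i x : G) :
    ∑ ψ ∈ (if i ∈ U then (univ : Finset (AddChar G ℂ)) else {0}), ψ x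
      = if i ∈ U then (if x = 0 then (Fintype.card G : ℂ) else 0) else 1 := by
  split_ifs with h1 h2
  · rw [AddChar.sum_apply_eq_ite, if_pos h2]
  · rw [AddChar.sum_apply_eq_ite, if_neg h2]
  · simp

lemma card_agree (U : Finset G) (τ : Equiv.Perm G) :
    #{σ : Equiv.Perm G | ∀ i ∈ U, σ i = τ i} = (Fintype.card G - #U).factorial := by
  have e1 : #{σ : Equiv.Perm G | ∀ i ∈ U, σ i = τ i}
      = #{σ : Equiv.Perm G | ∀ i, ¬ (i ∉ U) → σ i = i} := by
    refine card_equiv (Equiv.mulLeft τ⁻¹) fun σ => ?_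
    simp [Equiv.symm_apply_eq]
  rw [e1, ← Fintype.card_subtype, ← Fintype.card_congr (Equiv.Perm.subtypeEquivSubtypePerm (· ∉ U)),
    Fintype.card_perm]
  congr 1
  simp [Fintype.card_subtype_compl]

/-- Parseval's identity on the coordinates in `U`. -/
lemma sum_sq_supp_subset (U : Finset G) :
    ∑ χ : G → AddChar G ℂ with supp χ ⊆ U, ‖amp χ‖ ^ 2
      = (Fintype.card G : ℝ) ^ #U * (Fintype.card G - #U).factorial
          / (Fintype.card G).factorial := by
  set n := Fintype.card G with hn
  have hset : ({χ : G → AddChar G ℂ | supp χ ⊆ U} : Finset _)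
      = Fintype.piFinset fun i => if i ∈ U then (univ : Finset (AddChar G ℂ)) else {0} := by
    ext χ
    simp only [mem_filter, mem_univ, true_and, Fintype.mem_piFinset, subset_iff, mem_supp]
    refine forall_congr' fun i => ?_
    by_cases h : i ∈ U <;> simp [h]
  have hsq : ∀ χ : G → AddChar G ℂ, ((‖amp χ‖ ^ 2 : ℝ) : ℂ)
      = (∑ σ : Equiv.Perm G, ∑ τ : Equiv.Perm G, ∏ i, χ i (σ i - τ i)) / (n.factorial : ℂ) ^ 2 := by
    intro χ
    rw [Complex.ofReal_pow, ← Complex.mul_conj']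
    unfold amp
    rw [map_div₀, map_sum, div_mul_div_comm, sum_mul_sum, Complex.conj_natCast, ← sq]
    congr 1
    refine sum_congr rfl fun σ _ => sum_congr rfl fun τ _ => ?_
    rw [map_prod, ← prod_mul_distrib]
    refine prod_congr rfl fun i _ => ?_
    rw [sub_eq_add_neg, AddChar.map_add_eq_mul, AddChar.map_neg_eq_conj]
  have hmain : ∑ χ : G → AddChar G ℂ with supp χ ⊆ U, ((‖amp χ‖ ^ 2 : ℝ) : ℂ)
      = (n : ℂ) ^ #U * (n - #U).factorial / n.factorial := by
    simp only [hsq]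
    rw [← sum_div, sum_comm]
    have hinner : ∀ σ τ : Equiv.Perm G,
        ∑ χ : G → AddChar G ℂ with supp χ ⊆ U, ∏ i, χ i (σ i - τ i)
          = if ∀ i ∈ U, σ i = τ i then (n : ℂ) ^ #U else 0 := by
      intro σ τ
      rw [hset, ← prod_univ_sum (fun i => if i ∈ U then (univ : Finset (AddChar G ℂ)) else {0})
        (fun i (ψ : AddChar G ℂ) => ψ (σ i - τ i))]
      simp only [sum_char_ite]
      rw [prod_ite_mem, univ_inter]
      split_ifs with h
      · rw [prod_congr rfl (g := fun _ => (n : ℂ))]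
        · simp
        · intro i hi
          rw [if_pos (sub_eq_zero.2 (h i hi))]
      · push Not at h
        obtain ⟨i, hi, hne⟩ := h
        exact prod_eq_zero hi (if_neg (sub_ne_zero.2 hne))
    have : ∑ σ : Equiv.Perm G, ∑ χ : G → AddChar G ℂ with supp χ ⊆ U,
        ∑ τ : Equiv.Perm G, ∏ i, χ i (σ i - τ i)
          = (n.factorial : ℂ) * ((n - #U).factorial * (n : ℂ) ^ #U) := by
      have h1 : ∀ σ : Equiv.Perm G, ∑ χ : G → AddChar G ℂ with supp χ ⊆ U,
          ∑ τ : Equiv.Perm G, ∏ i, χ i (σ i - τ i) = (n - #U).factorial * (n : ℂ) ^ #U := by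
        intro σ
        rw [sum_comm]
        simp only [hinner]
        rw [← sum_filter, sum_const, nsmul_eq_mul, ← card_agree U σ]
        simp only [eq_comm]
      simp only [h1, sum_const, card_univ, Fintype.card_perm, nsmul_eq_mul, ← hn]
    rw [this]
    have : (n.factorial : ℂ) ≠ 0 := by exact_mod_cast n.factorial_ne_zero
    field_simp
  apply Complex.ofReal_injective
  push_cast at hmain ⊢
  exact hmain

/-- The common value of `∑ ‖amp χ‖²` over all `χ` with a fixed support of size `m`, given by the
recursion `(n - m) R (m + 1) = m (R (m - 1) + 2 R m)`. -/
noncomputable def R (n : ℕ) : ℕ → ℝ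
  | 0 => 1
  | 1 => 0
  | m + 2 => (m + 1) / (n - (m + 1)) * (R n m + 2 * R n (m + 1))

/-- The binomial transform of a sequence. -/
noncomputable def binomT (r : ℕ → ℝ) (m : ℕ) : ℝ := ∑ k ∈ range (m + 1), m.choose k * r k

lemma binomT_succ (r : ℕ → ℝ) (m : ℕ) :
    binomT r (m + 1) = binomT r m + binomT (fun k => r (k + 1)) m := by
  unfold binomT
  rw [sum_range_succ' _ (m + 1)]
  simp only [Nat.choose_succ_succ, Nat.cast_add, add_mul, sum_add_distrib]
  have : ∑ k ∈ range (m + 1), (m.choose (k + 1) : ℝ) * r (k + 1) + (m.choose 0 : ℝ) * r 0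
      = ∑ k ∈ range (m + 1), (m.choose k : ℝ) * r k := by
    rw [← sum_range_succ' (fun k => (m.choose k : ℝ) * r k) (m + 1), sum_range_succ]
    simp
  rw [← this]
  simp
  ring

lemma binomT_mul_index (g : ℕ → ℝ) (m : ℕ) :
    binomT (fun k => k * g k) (m + 1) = (m + 1) * binomT (fun k => g (k + 1)) m := by
  unfold binomT
  rw [sum_range_succ', mul_sum]
  simp only [Nat.cast_zero, zero_mul, mul_zero, add_zero]
  refine sum_congr rfl fun k _ => ?_
  have h : ((m + 1 : ℕ) : ℝ) * m.choose k = (m + 1).choose (k + 1) * (k + 1 : ℕ) := by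
    exact_mod_cast Nat.add_one_mul_choose_eq m k
  push_cast at h ⊢
  linear_combination -g (k + 1) * h

lemma binomT_R_step (n m : ℕ) (h : m + 1 < n) :
    ((n : ℝ) - (m + 1)) * binomT (R n) (m + 2) = n * binomT (R n) (m + 1) := by
  have hrec : ∀ k ∈ range (m + 2), (((m + 1).choose k : ℕ) : ℝ) * (n * R n (k + 1))
      = ((m + 1).choose k : ℕ) * (k * (R n (k - 1) + 2 * R n k + R n (k + 1))) := by
    intro k hk
    congr 1
    rcases k with _ | k
    · simp [R]
    · have hk' : (k : ℝ) + 1 < n := by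
        have := mem_range.1 hk
        exact_mod_cast (by omega : k + 1 < n)
      simp only [R, Nat.add_sub_cancel]
      have : (n : ℝ) - (k + 1) ≠ 0 := by linarith
      push_cast
      field_simp
      ring
  have h1 : n * binomT (fun k => R n (k + 1)) (m + 1)
      = (m + 1) * binomT (R n) (m + 2) := by
    have e1 : n * binomT (fun k => R n (k + 1)) (m + 1)
        = binomT (fun k => k * (R n (k - 1) + 2 * R n k + R n (k + 1))) (m + 1) := by
      unfold binomT
      rw [mul_sum, ← sum_congr rfl hrec]
      refine sum_congr rfl fun k _ => ?_
      ring
    rw [e1, binomT_mul_index (fun k => R n (k - 1) + 2 * R n k + R n (k + 1)),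
      binomT_succ _ (m + 1), binomT_succ (R n), binomT_succ (fun k => R n (k + 1))]
    congr 1
    unfold binomT
    simp only [Nat.add_sub_cancel, mul_add, sum_add_distrib]
    have : ∀ k, (m.choose k : ℝ) * (2 * R n (k + 1)) = 2 * (m.choose k * R n (k + 1)) :=
      fun k => by ring
    simp only [this, ← mul_sum]
    ring
  have h2 := binomT_succ (R n) (m + 1)
  linear_combination h1 + (n : ℝ) * h2

/-- The sequence `R` is the inverse binomial transform of the Parseval values of
`sum_sq_supp_subset`. -/
lemma binomT_R (n m : ℕ) (h : m ≤ n) :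
    binomT (R n) m = (n : ℝ) ^ m * (n - m).factorial / n.factorial := by
  have hf : (n.factorial : ℝ) ≠ 0 := by exact_mod_cast n.factorial_ne_zero
  induction m with
  | zero => simp [binomT, R, hf]
  | succ m ih =>
    have ih := ih (by omega)
    have hfac : ((n - m : ℕ) : ℝ) * (n - (m + 1)).factorial = (n - m).factorial := by
      have : n - m = (n - (m + 1)) + 1 := by omega
      rw [this]
      exact_mod_cast (Nat.factorial_succ _).symm
    rw [Nat.cast_sub (by omega)] at hfac
    have hm : (m : ℝ) < n := by exact_mod_cast h
    rcases m with _ | m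
    · simp only [Nat.cast_zero, sub_zero] at hfac
      simp [binomT, R, sum_range_succ]
      rw [eq_div_iff hf, one_mul]
      simpa using hfac.symm
    · have hs := binomT_R_step n m (by omega)
      rw [ih] at hs
      push_cast at hfac hm
      have hne : (n : ℝ) - (m + 1) ≠ 0 := by linarith
      apply mul_left_cancel₀ hne
      rw [hs, ← hfac]
      field_simp
      ring

lemma sum_sq_supp_eq (U : Finset G) :
    ∑ χ : G → AddChar G ℂ with supp χ = U, ‖amp χ‖ ^ 2 = R (Fintype.card G) #U := by
  induction U using Finset.strongInduction with
  | H U ih =>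
  set n := Fintype.card G with hn
  have h1 := sum_sq_supp_subset U
  rw [← hn, ← binomT_R n #U (card_le_univ U)] at h1
  have h2 : ∑ χ : G → AddChar G ℂ with supp χ ⊆ U, ‖amp χ‖ ^ 2
      = ∑ V ∈ U.powerset, ∑ χ : G → AddChar G ℂ with supp χ = V, ‖amp χ‖ ^ 2 := by
    rw [← sum_fiberwise_of_maps_to (t := U.powerset) (g := supp)]
    · refine sum_congr rfl fun V hV => ?_
      congr 1
      ext χ
      have := mem_powerset.1 hV
      simp only [mem_filter, mem_univ, true_and]
      constructor
      · exact fun h => h.2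
      · exact fun h => ⟨h ▸ this, h⟩
    · intro χ hχ
      exact mem_powerset.2 (mem_filter.1 hχ).2
  have h3 : binomT (R n) #U = ∑ V ∈ U.powerset, R n #V := by
    rw [sum_powerset_apply_card]
    simp [binomT]
  rw [h2, h3, ← add_sum_erase _ _ (mem_powerset_self U),
    ← add_sum_erase U.powerset (fun V => R n #V) (mem_powerset_self U)] at h1
  have h4 : ∑ V ∈ U.powerset.erase U, ∑ χ : G → AddChar G ℂ with supp χ = V, ‖amp χ‖ ^ 2
      = ∑ V ∈ U.powerset.erase U, R n #V := by
    refine sum_congr rfl fun V hV => ih V ?_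
    rw [mem_erase, mem_powerset] at hV
    exact hV.2.ssubset_of_ne hV.1
  linarith

lemma R_nonneg (n m : ℕ) (h : m ≤ n) : 0 ≤ R n m := by
  induction m using Nat.strong_induction_on with
  | _ m ih =>
  match m with
  | 0 => simp [R]
  | 1 => simp [R]
  | m + 2 =>
    simp only [R]
    have h1 := ih m (by omega) (by omega)
    have h2 := ih (m + 1) (by omega) (by omega)
    have : (m : ℝ) + 2 ≤ n := by exact_mod_cast h
    have : 0 ≤ (n : ℝ) - (m + 1) := by linarith
    positivity

/-- For `5 m ≤ n` the recursion gives `R (m + 1) ≤ (R (m - 1) + 2 R m) / 4`, so that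
`∑_{k ≤ m} R k + 3 R m + R (m - 1)` is nonincreasing in `m ≥ 2`. -/
lemma sum_R_potential (n m : ℕ) (h : 5 * (m + 2) ≤ n) :
    ∑ k ∈ Icc 1 (m + 2), R n k + 3 * R n (m + 2) + R n (m + 1) ≤ 4 * R n 2 := by
  induction m with
  | zero => norm_num [sum_Icc_succ_top, R]; linarith
  | succ m ih =>
    have ih := ih (by omega)
    rw [sum_Icc_succ_top (by omega)]
    have h0 := R_nonneg n (m + 1) (by omega)
    have h1 := R_nonneg n (m + 2) (by omega)
    have hstep : R n (m + 1 + 2) ≤ (R n (m + 1) + 2 * R n (m + 2)) / 4 := by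
      have hn : 5 * ((m : ℝ) + 3) ≤ n := by exact_mod_cast h
      have hq : (((m + 1 : ℕ) : ℝ) + 1) / (n - (((m + 1 : ℕ) : ℝ) + 1)) ≤ 1 / 4 := by
        push_cast
        rw [div_le_div_iff₀ (by linarith) (by norm_num)]
        linarith
      calc R n (m + 1 + 2) = _ := by rw [R]
        _ ≤ 1 / 4 * (R n (m + 1) + 2 * R n (m + 1 + 1)) := by
            gcongr
        _ = _ := by ring_nf
    have : ∑ k ∈ Icc 1 (m + 1 + 1), R n k = ∑ k ∈ Icc 1 (m + 2), R n k := rfl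
    rw [show m + 1 + 1 = m + 2 from rfl] at *
    rw [show m + 2 + 1 = m + 1 + 2 from rfl] at *
    linarith

lemma sum_R_le (n M : ℕ) (hn : 2 ≤ n) (h : 5 * M ≤ n) :
    ∑ k ∈ Icc 1 M, R n k ≤ 8 / n := by
  have hn' : (2 : ℝ) ≤ n := by exact_mod_cast hn
  match M with
  | 0 => simp; positivity
  | 1 => simp [R]; positivity
  | m + 2 =>
    have h1 := sum_R_potential n m h
    have h2 := R_nonneg n (m + 2) (by omega)
    have h3 := R_nonneg n (m + 1) (by omega)
    have h4 : R n 2 = 1 / (n - 1) := by norm_num [R]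
    have h5 : 4 * (1 / ((n : ℝ) - 1)) ≤ 8 / n := by
      rw [← mul_div_assoc, div_le_div_iff₀ (by linarith) (by linarith)]
      linarith
    rw [h4] at h1
    linarith

/-! ### A pointwise bound for coefficients in terms of multiplicities -/

/-- The multiplicity of the character `ψ` in `χ`. -/
noncomputable def cnt (χ : G → AddChar G ℂ) (ψ : AddChar G ℂ) : ℕ := #{i | χ i = ψ}

lemma sum_cnt (χ : G → AddChar G ℂ) : ∑ ψ, cnt χ ψ = Fintype.card G := by
  have := card_eq_sum_card_fiberwise (s := (univ : Finset G)) (t := univ) (f := χ) (by simp)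
  simpa [cnt] using this.symm

lemma cnt_le (χ : G → AddChar G ℂ) (ψ : AddChar G ℂ) : cnt χ ψ ≤ Fintype.card G :=
  card_le_univ _

lemma prod_comp_cnt {M : Type*} [CommMonoid M] (χ : G → AddChar G ℂ) (g : AddChar G ℂ → M) :
    ∏ x, g (χ x) = ∏ ψ, g ψ ^ cnt χ ψ := by
  rw [← prod_fiberwise univ χ]
  refine prod_congr rfl fun ψ _ => ?_
  rw [prod_congr rfl (g := fun _ => g ψ), prod_const, cnt]
  intro x hx
  rw [(mem_filter.1 hx).2]

lemma cnt_comp (χ : G → AddChar G ℂ) (σ : Equiv.Perm G) : cnt (χ ∘ σ) = cnt χ := by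
  funext ψ
  exact card_equiv σ fun i => by simp

lemma card_orbit_fiber (χ c : G → AddChar G ℂ) (h : cnt c = cnt χ) :
    #{σ : Equiv.Perm G | χ ∘ σ = c} = ∏ ψ, (cnt χ ψ).factorial := by
  obtain ⟨τ, hτ⟩ : ∃ τ : Equiv.Perm G, χ ∘ τ = c := by
    have e : ∀ ψ, Nonempty ({a // c a = ψ} ≃ {b // χ b = ψ}) := fun ψ => by
      refine ⟨Fintype.equivOfCardEq ?_⟩
      rw [Fintype.card_subtype, Fintype.card_subtype]
      exact congrFun h ψ
    refine ⟨Equiv.ofFiberEquiv fun ψ => (e ψ).some, ?_⟩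
    funext a
    exact Equiv.ofFiberEquiv_map _ a
  have h1 : #{σ : Equiv.Perm G | χ ∘ σ = c} = #{σ : Equiv.Perm G | χ ∘ σ = χ} := by
    refine card_equiv (Equiv.mulRight τ⁻¹) fun σ => ?_
    simp only [mem_filter, mem_univ, true_and, Equiv.coe_mulRight, ← hτ]
    constructor
    · intro H
      funext x
      simpa using congrFun H (τ⁻¹ x)
    · intro H
      funext x
      simpa using congrFun H (τ x)
  rw [h1, ← Fintype.card_subtype, DomMulAct.stabilizer_card]
  refine prod_congr rfl fun ψ _ => ?_
  rw [Fintype.card_subtype, cnt]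

lemma sum_orbit {M : Type*} [AddCommMonoid M] (χ : G → AddChar G ℂ)
    (F : (G → AddChar G ℂ) → M) :
    ∑ σ : Equiv.Perm G, F (χ ∘ σ)
      = (∏ ψ, (cnt χ ψ).factorial) • ∑ c : G → AddChar G ℂ with cnt c = cnt χ, F c := by
  rw [← sum_fiberwise_of_maps_to (g := fun σ : Equiv.Perm G => χ ∘ σ)
    (t := ({c | cnt c = cnt χ} : Finset (G → AddChar G ℂ))), smul_sum]
  · refine sum_congr rfl fun c hc => ?_
    rw [sum_congr rfl (g := fun _ => F c), sum_const,
      card_orbit_fiber χ c (mem_filter.1 hc).2]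
    intro σ hσ
    rw [(mem_filter.1 hσ).2]
  · intro σ _
    simp [cnt_comp]

lemma card_same_cnt (χ : G → AddChar G ℂ) :
    (∏ ψ, (cnt χ ψ).factorial) * #{c : G → AddChar G ℂ | cnt c = cnt χ}
      = (Fintype.card G).factorial := by
  have := sum_orbit χ (fun _ => (1 : ℕ))
  simpa [Fintype.card_perm] using this.symm

lemma sum_perm_eq (χ : G → AddChar G ℂ) :
    ∑ σ : Equiv.Perm G, ∏ i, χ i (σ i)
      = (∏ ψ, ((cnt χ ψ).factorial : ℂ))
          * ∑ c : G → AddChar G ℂ with cnt c = cnt χ, ∏ x, c x x := by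
  have h := sum_orbit χ (fun c => ∏ x, c x x)
  rw [nsmul_eq_mul] at h
  push_cast at h
  rw [← h]
  refine Fintype.sum_equiv (Equiv.inv (Equiv.Perm G)) _ _ fun σ => ?_
  refine Fintype.prod_equiv σ _ _ fun i => ?_
  simp

lemma parseval_dual (z : AddChar G ℂ → ℂ) :
    ∑ x : G, ‖∑ ψ, z ψ * ψ x‖ ^ 2 = Fintype.card G * ∑ ψ, ‖z ψ‖ ^ 2 := by
  apply Complex.ofReal_injective
  push_cast
  simp only [← Complex.mul_conj', map_sum, map_mul, sum_mul_sum]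
  rw [sum_comm, mul_sum]
  refine sum_congr rfl fun ψ _ => ?_
  rw [sum_comm]
  have : ∀ φ : AddChar G ℂ, ∑ x, z ψ * ψ x * ((starRingEnd ℂ) (z φ) * (starRingEnd ℂ) (φ x))
      = if φ = ψ then (Fintype.card G : ℂ) * (z ψ * (starRingEnd ℂ) (z ψ)) else 0 := by
    intro φ
    have h1 : ∀ x, z ψ * ψ x * ((starRingEnd ℂ) (z φ) * (starRingEnd ℂ) (φ x))
        = z ψ * (starRingEnd ℂ) (z φ) * (ψ - φ) x := by
      intro x
      rw [AddChar.sub_apply, AddChar.map_neg_eq_conj]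
      ring
    simp only [h1]
    rw [← mul_sum, AddChar.sum_eq_ite]
    by_cases h : φ = ψ
    · subst h; simp; ring
    · have : ψ - φ ≠ 0 := sub_ne_zero.2 (Ne.symm h)
      simp [h, this]
  simp only [this, sum_ite_eq', mem_univ, if_true]

lemma prod_le_mean_pow (y : G → ℝ) (hy : ∀ x, 0 ≤ y x) (S : ℝ)
    (hS : ∑ x, y x = Fintype.card G * S) : ∏ x, y x ≤ S ^ Fintype.card G := by
  have hn : (0 : ℝ) < Fintype.card G := by exact_mod_cast Fintype.card_pos
  have h := Real.geom_mean_le_arith_mean univ (fun _ => (1 : ℝ)) y (by simp)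
    (by simpa using hn) (fun i _ => hy i)
  simp only [Real.rpow_one, sum_const, card_univ, nsmul_eq_mul, mul_one, one_mul, hS] at h
  rw [mul_div_cancel_left₀ _ hn.ne'] at h
  have hp : 0 ≤ ∏ x, y x := prod_nonneg fun x _ => hy x
  calc ∏ x, y x = ((∏ x, y x) ^ ((Fintype.card G : ℝ)⁻¹)) ^ (Fintype.card G) := by
        rw [Real.rpow_inv_natCast_pow hp Fintype.card_ne_zero]
    _ ≤ S ^ Fintype.card G := by gcongr

lemma prod_norm_sq_le (z : AddChar G ℂ → ℂ) :
    ∏ x : G, ‖∑ ψ, z ψ * ψ x‖ ^ 2 ≤ (∑ ψ, ‖z ψ‖ ^ 2) ^ Fintype.card G :=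
  prod_le_mean_pow _ (fun _ => by positivity) _ (parseval_dual z)

/-- Orthogonality of the monomials `∏ x, u (c x)` in independent phases `u ψ`, where each phase
runs over the roots of unity of order `n + 1`; this order exceeds every multiplicity. -/
lemma phase_orthogonality (χ c : G → AddChar G ℂ) :
    ∑ θ : AddChar G ℂ → ZMod (Fintype.card G + 1),
      (∏ x, ZMod.stdAddChar (θ (c x))) * ∏ x, ZMod.stdAddChar (-θ (χ x))
      = if cnt c = cnt χ then ((Fintype.card G : ℂ) + 1) ^ Fintype.card G else 0 := by
  set N := Fintype.card G + 1 with hN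
  have h1 : ∀ θ : AddChar G ℂ → ZMod N,
      (∏ x, ZMod.stdAddChar (θ (c x))) * ∏ x, ZMod.stdAddChar (-θ (χ x))
      = ∏ ψ, (ZMod.stdAddChar (θ ψ * (((cnt c ψ : ℕ) : ZMod N) - ((cnt χ ψ : ℕ) : ZMod N))) : ℂ) := by
    intro θ
    rw [prod_comp_cnt c (fun ψ => ZMod.stdAddChar (θ ψ)),
      prod_comp_cnt χ (fun ψ => ZMod.stdAddChar (-θ ψ)), ← prod_mul_distrib]
    refine prod_congr rfl fun ψ _ => ?_
    rw [← AddChar.map_nsmul_eq_pow, ← AddChar.map_nsmul_eq_pow, ← AddChar.map_add_eq_mul]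
    congr 1
    simp only [nsmul_eq_mul]
    ring
  simp only [h1]
  rw [← Fintype.prod_sum (fun ψ (t : ZMod N) =>
    (ZMod.stdAddChar (t * (((cnt c ψ : ℕ) : ZMod N) - ((cnt χ ψ : ℕ) : ZMod N))) : ℂ))]
  have h2 : ∀ ψ, ∑ t : ZMod N, (ZMod.stdAddChar (t * (((cnt c ψ : ℕ) : ZMod N) - ((cnt χ ψ : ℕ) : ZMod N))) : ℂ)
      = if cnt c ψ = cnt χ ψ then (N : ℂ) else 0 := by
    intro ψ
    rw [AddChar.sum_mulShift _ (ZMod.isPrimitive_stdAddChar N), ZMod.card]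
    have : (((cnt c ψ : ℕ) : ZMod N) - ((cnt χ ψ : ℕ) : ZMod N) = 0) ↔ cnt c ψ = cnt χ ψ := by
      rw [sub_eq_zero, ZMod.natCast_eq_natCast_iff']
      have a1 := cnt_le c ψ
      have a2 := cnt_le χ ψ
      rw [Nat.mod_eq_of_lt (by omega), Nat.mod_eq_of_lt (by omega)]
    simp only [this]
    split_ifs <;> simp
  simp only [h2]
  split_ifs with h
  · simp [h, AddChar.card_eq, hN]
  · obtain ⟨ψ, hψ⟩ := Function.ne_iff.1 h
    exact prod_eq_zero (mem_univ ψ) (if_neg hψ)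

/-- Extract from `∏ x, ∑ ψ, √(cnt χ ψ) u ψ ψ(x)` the coefficient of the monomial `∏ x, u (χ x)`
in the phases `u`, and bound the product by the inequality of arithmetic and geometric means. -/
lemma norm_sum_type_le (χ : G → AddChar G ℂ) :
    (∏ ψ, (cnt χ ψ : ℝ) ^ cnt χ ψ)
        * ‖∑ c : G → AddChar G ℂ with cnt c = cnt χ, ∏ x, c x x‖ ^ 2
      ≤ (Fintype.card G : ℝ) ^ Fintype.card G := by
  set n := Fintype.card G with hn
  set a := cnt χ with ha
  let Θ := AddChar G ℂ → ZMod (n + 1)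
  let s : AddChar G ℂ → ℂ := fun ψ => ((Real.sqrt (a ψ) : ℝ) : ℂ)
  let B : Θ → ℂ := fun θ => ∏ x : G, ∑ ψ, (s ψ * ZMod.stdAddChar (θ ψ)) * ψ x
  let D : Θ → ℂ := fun θ => ∏ x, ZMod.stdAddChar (-θ (χ x))
  have hs : (n : ℝ) = ∑ ψ, (a ψ : ℝ) := by
    rw [hn, ← sum_cnt χ]
    push_cast
    rfl
  have hB : ∀ θ, ‖B θ‖ ≤ Real.sqrt ((n : ℝ) ^ n) := by
    intro θ
    apply Real.le_sqrt_of_sq_le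
    have := prod_norm_sq_le (fun ψ => s ψ * ZMod.stdAddChar (θ ψ))
    rw [prod_pow, ← norm_prod] at this
    refine this.trans (le_of_eq ?_)
    rw [← hn]
    congr 1
    refine Eq.trans ?_ hs.symm
    refine sum_congr rfl fun ψ _ => ?_
    rw [norm_mul, AddChar.norm_apply, mul_one, Complex.norm_real, Real.norm_eq_abs, sq_abs,
      Real.sq_sqrt (by positivity)]
  have hcardΘ : (Fintype.card Θ : ℝ) = ((n : ℝ) + 1) ^ n := by
    simp [Θ, ZMod.card, AddChar.card_eq, hn]
  have hex : ∑ θ : Θ, B θ * D θ = ((n : ℂ) + 1) ^ n * ((∏ ψ, s ψ ^ a ψ)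
      * ∑ c : G → AddChar G ℂ with cnt c = a, ∏ x, c x x) := by
    have e1 : ∀ θ : Θ, B θ * D θ = ∑ c : G → AddChar G ℂ, ((∏ x, s (c x)) * ∏ x, c x x)
        * ((∏ x, ZMod.stdAddChar (θ (c x))) * D θ) := by
      intro θ
      simp only [B]
      rw [Fintype.prod_sum, sum_mul]
      refine sum_congr rfl fun c _ => ?_
      simp only [prod_mul_distrib]
      ring
    simp only [e1]
    rw [sum_comm]
    simp only [← mul_sum]
    have e2 : ∀ c : G → AddChar G ℂ,
        ∑ θ : Θ, (∏ x, (ZMod.stdAddChar (θ (c x)) : ℂ)) * D θ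
          = if cnt c = a then ((n : ℂ) + 1) ^ n else 0 := fun c => phase_orthogonality χ c
    simp only [e2, mul_ite, mul_zero]
    rw [← sum_filter, mul_sum, mul_sum]
    refine sum_congr rfl fun c hc => ?_
    rw [prod_comp_cnt c s, (mem_filter.1 hc).2]
    ring
  have hnorm : ‖∑ θ : Θ, B θ * D θ‖ ≤ ((n : ℝ) + 1) ^ n * Real.sqrt ((n : ℝ) ^ n) := by
    refine (norm_sum_le _ _).trans ?_
    rw [← hcardΘ, ← nsmul_eq_mul, ← card_univ, ← sum_const]
    refine sum_le_sum fun θ _ => ?_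
    rw [norm_mul]
    have : ‖D θ‖ = 1 := by simp [D, norm_prod]
    rw [this, mul_one]
    exact hB θ
  rw [hex, norm_mul] at hnorm
  have hc : ‖((n : ℂ) + 1) ^ n‖ = ((n : ℝ) + 1) ^ n := by
    rw [norm_pow]
    congr 1
    exact_mod_cast Complex.norm_natCast (n + 1)
  rw [hc] at hnorm
  have h2 := le_of_mul_le_mul_left hnorm (by positivity)
  have h3 := pow_le_pow_left₀ (norm_nonneg _) h2 2
  rw [Real.sq_sqrt (by positivity), norm_mul, mul_pow, norm_prod, ← prod_pow] at h3
  refine le_trans (le_of_eq ?_) h3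
  congr 1
  refine prod_congr rfl fun ψ _ => ?_
  rw [norm_pow, ← pow_mul, mul_comm, pow_mul, Complex.norm_real, Real.norm_eq_abs, sq_abs,
      Real.sq_sqrt (by positivity)]

/-- If `ψ` has multiplicity `a ψ` in `χ`, then `|amp χ|² ≤ ∏ (a ψ)!² / (a ψ)^(a ψ) · nⁿ / n!²`. -/
lemma sq_norm_amp_le_type (χ : G → AddChar G ℂ) :
    ‖amp χ‖ ^ 2 ≤ (∏ ψ, ((cnt χ ψ).factorial : ℝ) ^ 2 / (cnt χ ψ : ℝ) ^ cnt χ ψ)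
      * ((Fintype.card G : ℝ) ^ Fintype.card G / ((Fintype.card G).factorial : ℝ) ^ 2) := by
  have h := norm_sum_type_le χ
  have hp : 0 < ∏ ψ, (cnt χ ψ : ℝ) ^ cnt χ ψ := by
    refine prod_pos fun ψ _ => ?_
    rcases Nat.eq_zero_or_pos (cnt χ ψ) with h0 | h0
    · simp [h0]
    · positivity
  unfold amp
  rw [norm_div, div_pow, sum_perm_eq, norm_mul, mul_pow, norm_prod, prod_div_distrib,
    Complex.norm_natCast, ← mul_div_assoc, prod_pow]
  simp only [Complex.norm_natCast]
  refine div_le_div_of_nonneg_right ?_ (by positivity)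
  rw [div_mul_eq_mul_div, mul_div_assoc]
  gcongr
  rw [le_div_iff₀ hp, mul_comm]
  exact h

/-! ### Coefficients with no dominant character -/

/-- The weight of one character of multiplicity `a` in the sum over types in `sum_far_le`. -/
noncomputable def weight (a : ℕ) : ℝ := (a.factorial : ℝ) ^ 3 / ((a : ℝ) ^ a) ^ 2

lemma weight_nonneg (a : ℕ) : 0 ≤ weight a := by unfold weight; positivity

/-- Sum the bound of `sq_norm_amp_le_type` over all `χ` whose multiplicities are at most `A`. There
are `n! / ∏ (a ψ)!` tuples with multiplicities `a`, and since `∑ a ψ = n` a factor `l ^ (a ψ)` can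
be inserted for each character; dropping the constraint `∑ a ψ = n` then makes the sum factor. -/
lemma sum_far_le (A : ℕ) (l : ℝ) (hl : 0 < l) :
    ∑ χ : G → AddChar G ℂ with ∀ ψ, cnt χ ψ ≤ A, ‖amp χ‖ ^ 4
      ≤ (Fintype.card G : ℝ) ^ (2 * Fintype.card G) / ((Fintype.card G).factorial : ℝ) ^ 3
        * ((∑ a ∈ range (A + 1), weight a * l ^ a) / l) ^ Fintype.card G := by
  set n := Fintype.card G with hn
  have hnf : (0 : ℝ) < n.factorial := by exact_mod_cast n.factorial_pos
  set K : ℝ := (n : ℝ) ^ (2 * n) / (n.factorial : ℝ) ^ 3 with hK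
  -- The bound summed over one type.
  have hfib : ∀ χ : G → AddChar G ℂ,
      ∑ c : G → AddChar G ℂ with cnt c = cnt χ, ‖amp c‖ ^ 4
        ≤ K / l ^ n * ∏ ψ, weight (cnt χ ψ) * l ^ cnt χ ψ := by
    intro χ
    have h1 : ∀ c ∈ ({c | cnt c = cnt χ} : Finset (G → AddChar G ℂ)), ‖amp c‖ ^ 4
        ≤ ((∏ ψ, ((cnt χ ψ).factorial : ℝ) ^ 2 / (cnt χ ψ : ℝ) ^ cnt χ ψ)
      * ((n : ℝ) ^ n / (n.factorial : ℝ) ^ 2)) ^ 2 := by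
      intro c hc
      have h := sq_norm_amp_le_type c
      rw [(mem_filter.1 hc).2, ← hn] at h
      calc ‖amp c‖ ^ 4 = (‖amp c‖ ^ 2) ^ 2 := by ring
        _ ≤ _ := pow_le_pow_left₀ (by positivity) h 2
    refine (sum_le_sum h1).trans ?_
    rw [sum_const, nsmul_eq_mul]
    have hcard : (#{c : G → AddChar G ℂ | cnt c = cnt χ} : ℝ)
        = n.factorial / ∏ ψ, ((cnt χ ψ).factorial : ℝ) := by
      rw [eq_div_iff (prod_pos fun ψ _ => by exact_mod_cast Nat.factorial_pos _).ne', mul_comm]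
      exact_mod_cast card_same_cnt χ
    have hl' : ∏ ψ, l ^ cnt χ ψ = l ^ n := by
      rw [prod_pow_eq_pow_sum, sum_cnt]
    have hp : ∏ ψ, ((cnt χ ψ).factorial : ℝ) ≠ 0 :=
      (prod_pos fun ψ _ => by exact_mod_cast Nat.factorial_pos _).ne'
    rw [hcard, prod_mul_distrib, hl', hK]
    simp only [weight]
    rw [prod_div_distrib, prod_div_distrib, prod_pow, prod_pow, prod_pow]
    refine le_of_eq ?_
    have hp2 : ∏ ψ, (cnt χ ψ : ℝ) ^ cnt χ ψ ≠ 0 := by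
      refine (prod_pos fun ψ _ => ?_).ne'
      rcases Nat.eq_zero_or_pos (cnt χ ψ) with h0 | h0
      · simp [h0]
      · positivity
    field_simp
    ring
  set T : Finset (AddChar G ℂ → ℕ) :=
    ({χ : G → AddChar G ℂ | ∀ ψ, cnt χ ψ ≤ A} : Finset _).image cnt with hT
  have hsum : ∑ χ : G → AddChar G ℂ with ∀ ψ, cnt χ ψ ≤ A, ‖amp χ‖ ^ 4
      ≤ ∑ t ∈ T, K / l ^ n * ∏ ψ, weight (t ψ) * l ^ t ψ := by
    rw [← sum_fiberwise_of_maps_to (g := cnt) (t := T) (fun χ hχ => mem_image_of_mem _ hχ)]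
    refine sum_le_sum fun t ht => ?_
    obtain ⟨χ, -, rfl⟩ := mem_image.1 ht
    refine le_trans ?_ (hfib χ)
    refine sum_le_sum_of_subset_of_nonneg ?_ (fun _ _ _ => by positivity)
    intro c hc
    simp only [mem_filter, mem_univ, true_and] at hc ⊢
    exact hc.2
  refine hsum.trans ?_
  rw [← mul_sum]
  have hsub : T ⊆ Fintype.piFinset fun _ : AddChar G ℂ => range (A + 1) := by
    intro t ht
    obtain ⟨χ, hχ, rfl⟩ := mem_image.1 ht
    simp only [Fintype.mem_piFinset, mem_range]
    intro ψ
    have := (mem_filter.1 hχ).2 ψ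
    omega
  have hpi : ∑ t ∈ T, ∏ ψ, weight (t ψ) * l ^ t ψ
      ≤ (∑ a ∈ range (A + 1), weight a * l ^ a) ^ n := by
    refine (sum_le_sum_of_subset_of_nonneg hsub fun t _ _ =>
      prod_nonneg fun ψ _ => mul_nonneg (weight_nonneg _) (by positivity)).trans ?_
    rw [← prod_univ_sum (fun _ : AddChar G ℂ => range (A + 1)) (fun _ a => weight a * l ^ a)]
    simp [AddChar.card_eq, hn]
  calc K / l ^ n * ∑ t ∈ T, ∏ ψ, weight (t ψ) * l ^ t ψ
      ≤ K / l ^ n * (∑ a ∈ range (A + 1), weight a * l ^ a) ^ n := by gcongr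
    _ = _ := by rw [div_pow]; field_simp

lemma factorial_mul_exp_le (a : ℕ) :
    ((a + 1).factorial : ℝ) * Real.exp (a + 1) ≤ Real.exp 1 * (a + 1 : ℝ) ^ (a + 2) := by
  induction a with
  | zero => simp
  | succ a ih =>
    have h1 : ((a : ℝ) + 1) ^ (a + 2) * Real.exp 1 ≤ (a + 2 : ℝ) ^ (a + 2) := by
      have h2 : ((a : ℝ) + 1) / (a + 2) ≤ Real.exp (-(1 / (a + 2))) := by
        refine le_trans (le_of_eq ?_) (Real.add_one_le_exp _)
        field_simp
        ring
      have h3 := pow_le_pow_left₀ (by positivity) h2 (a + 2)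
      rw [← Real.exp_nat_mul, div_pow] at h3
      have : ((a + 2 : ℕ) : ℝ) * -(1 / ((a : ℝ) + 2)) = -1 := by
        push_cast
        field_simp
      rw [this, Real.exp_neg, div_le_iff₀ (by positivity), ← div_eq_inv_mul,
        le_div_iff₀ (Real.exp_pos _)] at h3
      exact h3
    rw [Nat.factorial_succ]
    push_cast
    have e1 : Real.exp ((a : ℝ) + 1 + 1) = Real.exp (a + 1) * Real.exp 1 := Real.exp_add _ _
    rw [e1]
    calc ((a : ℝ) + 1 + 1) * ((a + 1).factorial : ℝ) * (Real.exp (a + 1) * Real.exp 1)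
        = (a + 2) * Real.exp 1 * (((a + 1).factorial : ℝ) * Real.exp (a + 1)) := by ring
      _ ≤ (a + 2) * Real.exp 1 * (Real.exp 1 * (a + 1 : ℝ) ^ (a + 2)) := by gcongr
      _ = (a + 2) * Real.exp 1 * ((a + 1 : ℝ) ^ (a + 2) * Real.exp 1) := by ring
      _ ≤ (a + 2) * Real.exp 1 * (a + 2 : ℝ) ^ (a + 2) := by gcongr
      _ = _ := by ring

/-- A Stirling bound for the weights: `weight a ≤ e³ a³ (a / e³)^a` for `a ≥ 1`. -/
lemma weight_succ_le (a : ℕ) :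
    weight (a + 1) ≤ Real.exp 3 * (a + 1 : ℝ) ^ 3 * ((a + 1) / Real.exp 3) ^ (a + 1) := by
  have h := pow_le_pow_left₀ (by positivity) (factorial_mul_exp_le a) 3
  have e1 : Real.exp (a + 1) ^ 3 = Real.exp 3 ^ (a + 1) := by
    rw [← Real.exp_nat_mul, ← Real.exp_nat_mul]
    congr 1
    push_cast
    ring
  have e2 : Real.exp 1 ^ 3 = Real.exp 3 := by
    rw [← Real.exp_nat_mul]
    norm_num
  rw [mul_pow, mul_pow, e1, e2] at h
  unfold weight
  push_cast
  rw [div_pow, div_le_iff₀ (by positivity), ← mul_div_assoc, div_mul_eq_mul_div,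
    le_div_iff₀ (by positivity)]
  refine h.trans (le_of_eq ?_)
  ring

/-- The parameter `9e³ / (8n)` makes the terms with `a ≤ 4n/5` decay like `(9/10)^a` up to a
polynomial factor in `a`, while the terms with `a ≥ 1` all carry a factor `1 / n`. -/
lemma weight_sum_le : ∃ B : ℝ, 0 ≤ B ∧ ∀ n A : ℕ, 1 ≤ n → 5 * A ≤ 4 * n →
    ∑ a ∈ range (A + 1), weight a * (9 / 8 * Real.exp 3 / n) ^ a ≤ 1 + B / n := by
  have hsm : Summable fun a : ℕ => (a : ℝ) ^ 4 * (9 / 10 : ℝ) ^ a :=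
    summable_pow_mul_geometric_of_norm_lt_one 4 (by norm_num)
  refine ⟨Real.exp 3 * (9 / 8) * (10 / 9) * ∑' a : ℕ, (a : ℝ) ^ 4 * (9 / 10 : ℝ) ^ a,
    by positivity, fun n A hn hA => ?_⟩
  have hn0 : (0 : ℝ) < n := by exact_mod_cast hn
  rw [sum_range_succ', add_comm]
  have h0 : weight 0 * (9 / 8 * Real.exp 3 / n) ^ 0 = 1 := by simp [weight]
  rw [h0]
  gcongr
  have hterm : ∀ a ∈ range A, weight (a + 1) * (9 / 8 * Real.exp 3 / n) ^ (a + 1)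
      ≤ Real.exp 3 * (9 / 8) * (10 / 9) / n * (((a + 1 : ℕ) : ℝ) ^ 4 * (9 / 10 : ℝ) ^ (a + 1)) := by
    intro a ha
    have haA : 5 * ((a : ℝ) + 1) ≤ 4 * n := by
      have := mem_range.1 ha
      exact_mod_cast (by omega : 5 * (a + 1) ≤ 4 * n)
    have hq : 9 / 8 * ((a : ℝ) + 1) / n ≤ 9 / 10 := by
      rw [div_le_iff₀ hn0]
      linarith
    have hexp := Real.exp_pos 3
    calc weight (a + 1) * (9 / 8 * Real.exp 3 / n) ^ (a + 1)
        ≤ Real.exp 3 * (a + 1 : ℝ) ^ 3 * ((a + 1) / Real.exp 3) ^ (a + 1)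
            * (9 / 8 * Real.exp 3 / n) ^ (a + 1) := by
          gcongr
          exact weight_succ_le a
      _ = Real.exp 3 * (a + 1 : ℝ) ^ 3 * (9 / 8 * ((a : ℝ) + 1) / n) ^ (a + 1) := by
          rw [mul_assoc, ← mul_pow]
          congr 2
          field_simp
      _ = Real.exp 3 * (a + 1 : ℝ) ^ 3 * ((9 / 8 * ((a : ℝ) + 1) / n) ^ a
            * (9 / 8 * ((a : ℝ) + 1) / n)) := by rw [pow_succ (9 / 8 * ((a : ℝ) + 1) / n) a]
      _ ≤ Real.exp 3 * (a + 1 : ℝ) ^ 3 * ((9 / 10) ^ a * (9 / 8 * ((a : ℝ) + 1) / n)) := by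
          gcongr
      _ = _ := by
          push_cast
          field_simp
          ring
  refine (sum_le_sum hterm).trans ?_
  rw [← mul_sum, div_mul_eq_mul_div]
  gcongr
  have h1 := hsm.sum_le_tsum (range (A + 1)) (fun _ _ => by positivity)
  rw [sum_range_succ'] at h1
  simpa using h1

/-- The tuples in which no character has multiplicity above `4n/5` contribute exponentially
little. -/
lemma exists_far_bound : ∃ C : ℝ, 0 ≤ C ∧ ∀ (G : Type) [AddCommGroup G] [Fintype G],
    ∑ χ : G → AddChar G ℂ with ∀ ψ, 5 * cnt χ ψ ≤ 4 * Fintype.card G, ‖amp χ‖ ^ 4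
      ≤ C * (8 / 9) ^ Fintype.card G := by
  obtain ⟨B, hB0, hB⟩ := weight_sum_le
  refine ⟨Real.exp B, (Real.exp_pos _).le, fun G _ _ => ?_⟩
  set n := Fintype.card G with hn
  have hn1 : 1 ≤ n := Fintype.card_pos
  have hn0 : (0 : ℝ) < n := by exact_mod_cast hn1
  have hexp := Real.exp_pos 3
  have hfilter : ({χ : G → AddChar G ℂ | ∀ ψ, 5 * cnt χ ψ ≤ 4 * n} : Finset _)
      = ({χ : G → AddChar G ℂ | ∀ ψ, cnt χ ψ ≤ 4 * n / 5} : Finset _) := by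
    ext χ
    simp only [mem_filter, mem_univ, true_and]
    refine forall_congr' fun ψ => ?_
    omega
  rw [hfilter]
  set l : ℝ := 9 / 8 * Real.exp 3 / n with hl
  have hl0 : 0 < l := by positivity
  refine (sum_far_le (4 * n / 5) l hl0).trans ?_
  rw [← hn]
  have hW := hB n (4 * n / 5) hn1 (by omega)
  rw [← hl] at hW
  set W := ∑ a ∈ range (4 * n / 5 + 1), weight a * l ^ a with hWdef
  have hW0 : 0 ≤ W := sum_nonneg fun a _ => mul_nonneg (weight_nonneg a) (by positivity)
  have hWn : W ^ n ≤ Real.exp B := by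
    have h1 : W ≤ Real.exp (B / n) := hW.trans (by linarith [Real.add_one_le_exp (B / (n : ℝ))])
    refine (pow_le_pow_left₀ hW0 h1 n).trans (le_of_eq ?_)
    rw [← Real.exp_nat_mul]
    congr 1
    field_simp
  have hnf : (0 : ℝ) < n.factorial := by exact_mod_cast n.factorial_pos
  have hst : (n : ℝ) ^ (2 * n) / (n.factorial : ℝ) ^ 3 ≤ (Real.exp 3 / n) ^ n := by
    have h1 := Real.pow_div_factorial_le_exp (n : ℝ) hn0.le n
    have h2 := pow_le_pow_left₀ (by positivity) h1 3
    have e1 : Real.exp (n : ℝ) ^ 3 = Real.exp 3 ^ n := by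
      rw [← Real.exp_nat_mul, ← Real.exp_nat_mul]
      congr 1
      push_cast
      ring
    rw [e1] at h2
    rw [div_pow (Real.exp 3), le_div_iff₀ (by positivity)]
    refine le_trans (le_of_eq ?_) h2
    rw [div_pow]
    ring
  calc (n : ℝ) ^ (2 * n) / (n.factorial : ℝ) ^ 3 * (W / l) ^ n
      ≤ (Real.exp 3 / n) ^ n * (W / l) ^ n := by gcongr
    _ = W ^ n * (8 / 9) ^ n := by
        rw [← mul_pow, ← mul_pow, hl]
        congr 1
        field_simp
    _ ≤ Real.exp B * (8 / 9) ^ n := by gcongr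

/-! ### Coefficients close to a constant tuple -/

lemma sq_div_four_le_choose (n m : ℕ) (hm : 2 ≤ m) (h : 2 * m ≤ n) :
    (n : ℝ) ^ 2 / 4 ≤ n.choose m := by
  have h1 : (n : ℝ) ^ 2 / 4 ≤ n.choose 2 := by
    rw [Nat.cast_choose_two]
    have : (4 : ℝ) ≤ n := by exact_mod_cast (by omega : 4 ≤ n)
    nlinarith
  refine h1.trans ?_
  have key : ∀ k, 2 * (k + 2) ≤ n → n.choose 2 ≤ n.choose (k + 2) := by
    intro k
    induction k with
    | zero => intro _; exact le_rfl
    | succ k ih =>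
      intro hk
      exact (ih (by omega)).trans (Nat.choose_le_succ_of_lt_half_left (by omega))
  obtain ⟨k, rfl⟩ : ∃ k, m = k + 2 := ⟨m - 2, by omega⟩
  exact_mod_cast key k h

/-- All but four of the `d` factors are bounded by `2 / n`, two by the binomial bound, and two are
kept for the `L²` mass. Tuples with a single nontrivial coordinate have `amp χ = 0`. -/
lemma norm_amp_pow_le (d : ℕ) (hd : 4 ≤ d) (χ : G → AddChar G ℂ) (h1 : 1 ≤ #(supp χ))
    (h5 : 5 * #(supp χ) ≤ Fintype.card G) :
    ‖amp χ‖ ^ d ≤ (2 / Fintype.card G : ℝ) ^ (d - 4)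
      * (‖amp χ‖ ^ 2 / (Fintype.card G).choose #(supp χ)) := by
  set n := Fintype.card G with hn
  have hn0 : (0 : ℝ) < n := by exact_mod_cast (by omega : 0 < n)
  obtain ⟨k, rfl⟩ : ∃ k, d = k + 4 := ⟨d - 4, by omega⟩
  rw [Nat.add_sub_cancel]
  rcases Nat.lt_or_ge #(supp χ) 2 with h2 | h2
  · have hs : #(supp χ) = 1 := by omega
    have h := sum_sq_supp_eq (supp χ)
    have hle : ‖amp χ‖ ^ 2 ≤ ∑ c : G → AddChar G ℂ with supp c = supp χ, ‖amp c‖ ^ 2 :=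
      single_le_sum (f := fun c => ‖amp c‖ ^ 2) (fun _ _ => by positivity) (by simp)
    rw [h, hs] at hle
    simp only [R] at hle
    have h0 : ‖amp χ‖ = 0 := by
      have := norm_nonneg (amp χ)
      nlinarith
    simp [h0]
  · have hc := sq_norm_amp_le χ (by omega)
    rw [← hn] at hc
    have hch := sq_div_four_le_choose n #(supp χ) h2 (by omega)
    set c : ℝ := (n.choose #(supp χ) : ℝ) with hcdef
    have hc0 : 0 < c := lt_of_lt_of_le (by positivity) hch
    set a := ‖amp χ‖ with ha
    have ha0 : 0 ≤ a := norm_nonneg _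
    have ha2 : a ≤ 2 / n := by
      have : a ^ 2 * ((n : ℝ) ^ 2 / 4) ≤ 1 := (by gcongr : _ ≤ a ^ 2 * c).trans hc
      rw [le_div_iff₀ hn0]
      refine le_of_sq_le_sq ?_ (by norm_num)
      nlinarith
    have hac : a ^ 2 ≤ 1 / c := by rwa [le_div_iff₀ hc0]
    calc a ^ (k + 4) = a ^ k * (a ^ 2 * a ^ 2) := by ring
      _ ≤ (2 / n) ^ k * (a ^ 2 * (1 / c)) := by gcongr
      _ = _ := by ring

lemma sum_near_le (d : ℕ) (hd : 4 ≤ d) :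
    ∑ χ : G → AddChar G ℂ with 1 ≤ #(supp χ) ∧ 5 * #(supp χ) ≤ Fintype.card G, ‖amp χ‖ ^ d
      ≤ (2 / Fintype.card G : ℝ) ^ (d - 4) * (8 / Fintype.card G) := by
  set n := Fintype.card G with hn
  have hn1 : 1 ≤ n := Fintype.card_pos
  rcases Nat.lt_or_ge n 5 with hn5 | hn5
  · rw [sum_eq_zero]
    · positivity
    · intro χ hχ
      have := (mem_filter.1 hχ).2
      omega
  refine (sum_le_sum fun χ hχ =>
    norm_amp_pow_le d hd χ (mem_filter.1 hχ).2.1 (mem_filter.1 hχ).2.2).trans ?_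
  rw [← mul_sum, ← hn]
  gcongr
  refine le_trans (le_of_eq ?_) (sum_R_le n (n / 5) (by omega) (by omega))
  -- Group the tuples by the size `m` of the support, then by the support itself.
  rw [← sum_fiberwise_of_maps_to (g := fun χ : G → AddChar G ℂ => #(supp χ)) (t := Icc 1 (n / 5))]
  swap
  · intro χ hχ
    have := (mem_filter.1 hχ).2
    simp only [mem_Icc]
    omega
  refine sum_congr rfl fun m hm => ?_
  have hm' := mem_Icc.1 hm
  have hch : (n.choose m : ℝ) ≠ 0 := by
    exact_mod_cast (Nat.choose_pos (by omega : m ≤ n)).ne'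
  rw [← sum_fiberwise_of_maps_to (g := supp) (t := powersetCard m (univ : Finset G))]
  swap
  · intro χ hχ
    simp only [mem_filter] at hχ
    simp [mem_powersetCard, hχ.2]
  have hU : ∀ U ∈ powersetCard m (univ : Finset G),
      ∑ χ ∈ (({χ : G → AddChar G ℂ | 1 ≤ #(supp χ) ∧ 5 * #(supp χ) ≤ n} : Finset _).filter
        fun χ => #(supp χ) = m) with supp χ = U, ‖amp χ‖ ^ 2 / (n.choose #(supp χ) : ℝ)
      = R n m / n.choose m := by
    intro U hU
    have hUm : #U = m := (mem_powersetCard.1 hU).2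
    rw [← hUm, hn, ← sum_sq_supp_eq U, sum_div]
    refine sum_congr ?_ ?_
    · ext χ
      simp only [mem_filter, mem_univ, true_and]
      constructor
      · exact fun h => h.2
      · rintro rfl
        exact ⟨⟨⟨by omega, by omega⟩, rfl⟩, rfl⟩
    · intro χ hχ
      rw [(mem_filter.1 hχ).2]
  rw [sum_congr rfl hU, sum_const, card_powersetCard, card_univ, ← hn, nsmul_eq_mul]
  field_simp

/-- The total contribution of the nonconstant tuples to the Fourier expansion is `O(n^(4-d))`. -/
lemma exists_nonconst_bound (d : ℕ) (hd : 4 ≤ d) :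
    ∃ C : ℝ, 0 ≤ C ∧ ∀ (G : Type) [AddCommGroup G] [Fintype G],
    ∑ χ : G → AddChar G ℂ with ¬ ∃ ψ, χ = fun _ => ψ, ‖amp χ‖ ^ d
      ≤ C / (Fintype.card G : ℝ) ^ (d - 4) := by
  obtain ⟨C₁, hC₁, hfar⟩ := exists_far_bound
  have hlim := (tendsto_pow_const_mul_const_pow_of_abs_lt_one (d - 4)
    (r := (8 / 9 : ℝ)) (by rw [abs_of_pos] <;> norm_num)).bddAbove_range
  obtain ⟨K, hK⟩ := hlim
  have hK' : ∀ n : ℕ, (n : ℝ) ^ (d - 4) * (8 / 9) ^ n ≤ K := fun n => hK ⟨n, rfl⟩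
  have hK0 : 0 ≤ K := le_trans (by positivity) (hK' 1)
  refine ⟨C₁ * K + 2 ^ (d - 4) * 8, by positivity, fun G _ _ => ?_⟩
  set n := Fintype.card G with hn
  have hn1 : 1 ≤ n := Fintype.card_pos
  have hn0 : (0 : ℝ) < n := by exact_mod_cast hn1
  set P : (G → AddChar G ℂ) → Prop := fun χ => 1 ≤ #(supp χ) ∧ 5 * #(supp χ) ≤ n with hP
  have hcov : ∀ χ : G → AddChar G ℂ, (¬ ∃ ψ, χ = fun _ => ψ) →
      (∀ ψ, 5 * cnt χ ψ ≤ 4 * n) ∨ ∃ ψ, P fun i => χ i - ψ := by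
    intro χ hχ
    by_contra! hcon
    obtain ⟨⟨ψ, hψ⟩, h2⟩ := hcon
    have hcard : cnt χ ψ + #(supp fun i => χ i - ψ) = n := by
      have := card_filter_add_card_filter_not (s := (univ : Finset G)) (fun i => χ i = ψ)
      rw [card_univ, ← hn] at this
      simpa [cnt, supp, sub_eq_zero] using this
    refine h2 ψ ⟨?_, by omega⟩
    by_contra h0
    have h0' : supp (fun i => χ i - ψ) = ∅ := card_eq_zero.1 (by omega)
    refine hχ ⟨ψ, funext fun i => ?_⟩
    by_contra hi
    have : i ∈ supp (fun i => χ i - ψ) := mem_supp.2 (sub_ne_zero.2 hi)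
    simp [h0'] at this
  have hfar' : ∑ χ : G → AddChar G ℂ with ∀ ψ, 5 * cnt χ ψ ≤ 4 * n, ‖amp χ‖ ^ d
      ≤ C₁ * K / (n : ℝ) ^ (d - 4) := by
    refine (sum_le_sum fun χ _ =>
      pow_le_pow_of_le_one (norm_nonneg _) (norm_amp_le_one χ) hd).trans ((hfar G).trans ?_)
    rw [← hn, mul_div_assoc]
    gcongr
    rw [le_div_iff₀ (by positivity), mul_comm]
    exact hK' n
  have hnear : ∀ ψ : AddChar G ℂ,
      ∑ χ : G → AddChar G ℂ with P fun i => χ i - ψ, ‖amp χ‖ ^ d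
        ≤ (2 / n : ℝ) ^ (d - 4) * (8 / n) := by
    intro ψ
    refine le_trans (le_of_eq ?_) (sum_near_le (G := G) d hd)
    refine sum_equiv (Equiv.subRight fun _ => ψ) ?_ ?_
    · intro χ
      simp only [mem_filter, mem_univ, true_and, hP]
      exact Iff.rfl
    · intro χ _
      have := norm_amp_add_const (fun i => χ i - ψ) ψ
      simp only [sub_add_cancel] at this
      rw [this]
      rfl
  have hpt : ∀ χ : G → AddChar G ℂ, (if ¬ ∃ ψ, χ = fun _ => ψ then ‖amp χ‖ ^ d else 0)
      ≤ (if ∀ ψ, 5 * cnt χ ψ ≤ 4 * n then ‖amp χ‖ ^ d else 0)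
        + ∑ ψ : AddChar G ℂ, if P fun i => χ i - ψ then ‖amp χ‖ ^ d else 0 := by
    intro χ
    have h0 : 0 ≤ ‖amp χ‖ ^ d := by positivity
    have hnn : ∀ ψ ∈ (univ : Finset (AddChar G ℂ)),
        0 ≤ if P fun i => χ i - ψ then ‖amp χ‖ ^ d else 0 :=
      fun ψ _ => by split_ifs <;> simp [h0]
    have hs := sum_nonneg hnn
    by_cases hc : ∃ ψ, χ = fun _ => ψ
    · rw [if_neg (not_not.2 hc)]
      refine add_nonneg ?_ hs
      split_ifs <;> simp [h0]
    · rw [if_pos hc]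
      rcases hcov χ hc with h | ⟨ψ, h⟩
      · rw [if_pos h]
        linarith
      · have h1 := single_le_sum hnn (mem_univ ψ)
        rw [if_pos h] at h1
        refine h1.trans (le_add_of_nonneg_left ?_)
        split_ifs <;> simp [h0]
  calc ∑ χ : G → AddChar G ℂ with ¬ ∃ ψ, χ = fun _ => ψ, ‖amp χ‖ ^ d
      ≤ ∑ χ : G → AddChar G ℂ with ∀ ψ, 5 * cnt χ ψ ≤ 4 * n, ‖amp χ‖ ^ d
        + ∑ ψ : AddChar G ℂ, ∑ χ : G → AddChar G ℂ with P fun i => χ i - ψ, ‖amp χ‖ ^ d := by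
        simp only [sum_filter]
        rw [sum_comm, ← sum_add_distrib]
        exact sum_le_sum fun χ _ => hpt χ
    _ ≤ C₁ * K / (n : ℝ) ^ (d - 4) + ∑ ψ : AddChar G ℂ, (2 / n : ℝ) ^ (d - 4) * (8 / n) :=
        add_le_add hfar' (sum_le_sum fun ψ _ => hnear ψ)
    _ = _ := by
        rw [sum_const, card_univ, AddChar.card_eq, ← hn, nsmul_eq_mul, div_pow]
        field_simp

/-! ### Fourier expansion of the count -/

lemma sum_prod_char (g : G → G) :
    ∑ χ : G → AddChar G ℂ, ∏ i, χ i (g i)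
      = if ∀ i, g i = 0 then (Fintype.card G : ℂ) ^ Fintype.card G else 0 := by
  rw [← Fintype.prod_sum (fun i (ψ : AddChar G ℂ) => ψ (g i))]
  simp only [AddChar.sum_apply_eq_ite]
  split_ifs with h
  · simp [h]
  · push Not at h
    obtain ⟨i, hi⟩ := h
    exact prod_eq_zero (mem_univ i) (if_neg hi)

/-- Expansion of the number of solutions in the characters of `G ^ n`. -/
lemma fourier_count (d : ℕ) (f : G → G) :
    ∑ χ : G → AddChar G ℂ, ((Fintype.card G).factorial * amp χ) ^ d * ∏ i, χ i (-f i)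
      = (Fintype.card G : ℂ) ^ Fintype.card G
        * #{p : Fin d → Equiv.Perm G | ∀ i, ∑ j, p j i = f i} := by
  have h1 : ∀ χ : G → AddChar G ℂ,
      ((Fintype.card G).factorial * amp χ) ^ d * ∏ i, χ i (-f i)
        = ∑ p : Fin d → Equiv.Perm G, ∏ i, χ i (∑ j, p j i - f i) := by
    intro χ
    have : ((Fintype.card G).factorial : ℂ) * amp χ = ∑ σ : Equiv.Perm G, ∏ i, χ i (σ i) := by
      unfold amp
      rw [mul_div_cancel₀]
      exact_mod_cast Nat.factorial_ne_zero _
    rw [this, Fintype.sum_pow, sum_mul]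
    refine sum_congr rfl fun p _ => ?_
    rw [prod_comm, ← prod_mul_distrib]
    refine prod_congr rfl fun i _ => ?_
    rw [sub_eq_add_neg, AddChar.map_add_eq_mul, addChar_sum]
  rw [sum_congr rfl fun χ _ => h1 χ, sum_comm]
  simp only [sum_prod_char, sub_eq_zero]
  rw [← sum_filter, sum_const, nsmul_eq_mul, mul_comm]

lemma const_term (d : ℕ) (f : G → G) (hf : ∑ i, f i = d • ∑ x : G, x) (ψ : AddChar G ℂ) :
    ((Fintype.card G).factorial * amp fun _ : G => ψ) ^ d * ∏ i, ψ (-f i)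
      = ((Fintype.card G).factorial : ℂ) ^ d := by
  rw [amp_const, ← addChar_sum, sum_neg_distrib, hf, mul_pow, mul_assoc, ← AddChar.map_nsmul_eq_pow,
    ← AddChar.map_add_eq_mul, add_neg_cancel, AddChar.map_zero_eq_one, mul_one]

/-- The main term is the contribution of the `n` constant tuples. -/
lemma count_sub_main (d : ℕ) (f : G → G) (hf : ∑ i, f i = d • ∑ x : G, x) :
    |(Fintype.card G : ℝ) ^ Fintype.card G
        * #{p : Fin d → Equiv.Perm G | ∀ i, ∑ j, p j i = f i}
      - Fintype.card G * ((Fintype.card G).factorial : ℝ) ^ d|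
    ≤ ((Fintype.card G).factorial : ℝ) ^ d
      * ∑ χ : G → AddChar G ℂ with ¬ ∃ ψ, χ = fun _ => ψ, ‖amp χ‖ ^ d := by
  set n := Fintype.card G with hn
  have hconst : ∑ χ : G → AddChar G ℂ with ∃ ψ, χ = fun _ => ψ,
      ((n.factorial : ℂ) * amp χ) ^ d * ∏ i, χ i (-f i) = n * (n.factorial : ℂ) ^ d := by
    have himg : ({χ : G → AddChar G ℂ | ∃ ψ, χ = fun _ => ψ} : Finset _)
        = (univ : Finset (AddChar G ℂ)).image fun ψ _ => ψ := by
      ext χ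
      simp [eq_comm]
    rw [himg, sum_image]
    · rw [sum_congr rfl fun ψ _ => const_term d f hf ψ, sum_const, card_univ, AddChar.card_eq,
        nsmul_eq_mul]
    · intro a _ b _ hab
      exact congrFun hab 0
  have hF := fourier_count d f
  rw [← hn, ← sum_filter_add_sum_filter_not univ (fun χ : G → AddChar G ℂ => ∃ ψ, χ = fun _ => ψ),
    hconst] at hF
  have hdiff : (((n : ℝ) ^ n * #{p : Fin d → Equiv.Perm G | ∀ i, ∑ j, p j i = f i}
      - n * (n.factorial : ℝ) ^ d : ℝ) : ℂ)
      = ∑ χ : G → AddChar G ℂ with ¬ ∃ ψ, χ = fun _ => ψ,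
        ((n.factorial : ℂ) * amp χ) ^ d * ∏ i, χ i (-f i) := by
    push_cast
    rw [← hF]
    ring
  rw [← Real.norm_eq_abs, ← Complex.norm_real, hdiff, mul_sum]
  refine (norm_sum_le _ _).trans (le_of_eq (sum_congr rfl fun χ _ => ?_))
  simp [norm_prod, AddChar.norm_apply, mul_pow]

/-- Identifying the index set with `G` turns bijections into permutations of `G`. -/
lemma card_bijection_tuples (n d : ℕ) (e : Fin n ≃ G) (f : Fin n → G) :
    Nat.card {p : Fin d → (Fin n → G) // (∀ j, Function.Bijective (p j)) ∧ (∑ j, p j) = f}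
      = #{p : Fin d → Equiv.Perm G | ∀ i, ∑ j, p j i = f (e.symm i)} := by
  rw [← Nat.card_eq_finsetCard]
  refine Nat.card_congr
    { toFun := fun p => ⟨fun j => e.symm.trans (Equiv.ofBijective _ (p.2.1 j)), ?_⟩
      invFun := fun p => ⟨fun j => p.1 j ∘ e, fun j => (p.1 j).bijective.comp e.bijective, ?_⟩
      left_inv := ?_
      right_inv := ?_ }
  · simp only [mem_filter, mem_univ, true_and]
    intro i
    have := congrFun p.2.2 (e.symm i)
    simpa using this
  · have := (mem_filter.1 p.2).2
    funext i
    simpa using this (e i)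
  · intro p
    ext j i
    simp
  · intro p
    ext j i
    simp

end BijectionSums

/-- For every integer `d ≥ 4` there is a constant `C_d` such that for every `n ≥ 1`, every
finite abelian group `G` of order `n`, and every `f : Fin n → G` with `Σᵢ f i = d • Σ G`,
the number `T` of `d`-tuples `(π₁,…,π_d)` of bijections with `π₁ + ⋯ + π_d = f` satisfies
`T = (1 + E) · (n!)^d / n^{n-1}` with `|E| ≤ C_d · n^{3-d}`. -/
theorem d_fold_sums_asymptotic :
    ∀ d : ℕ, 4 ≤ d → ∃ C : ℝ, ∀ n : ℕ, 1 ≤ n →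
      ∀ (G : Type) [AddCommGroup G] [Fintype G], Fintype.card G = n →
        ∀ f : Fin n → G, (∑ i, f i) = d • (∑ x : G, x) →
        ∃ E : ℝ,
          (Nat.card {p : Fin d → (Fin n → G) //
              (∀ j, Function.Bijective (p j)) ∧ (∑ j, p j) = f} : ℝ)
            = (1 + E) * (n.factorial : ℝ) ^ d / (n : ℝ) ^ (n - 1) ∧
          |E| ≤ C * (n : ℝ) ^ ((3 : ℤ) - (d : ℤ)) := by
  intro d hd
  obtain ⟨C, -, hC⟩ := BijectionSums.exists_nonconst_bound d hd
  refine ⟨C, fun n hn G _ _ hG f hf => ?_⟩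
  have hn0 : (0 : ℝ) < n := by exact_mod_cast hn
  have hnf : (0 : ℝ) < n.factorial := by exact_mod_cast n.factorial_pos
  let e : Fin n ≃ G := (Fintype.equivFinOfCardEq hG).symm
  have hf' : ∑ i, (f ∘ e.symm) i = d • ∑ x : G, x := by
    rw [← hf]
    exact Equiv.sum_comp e.symm f
  have h := (BijectionSums.count_sub_main d (f ∘ e.symm) hf').trans
    (mul_le_mul_of_nonneg_left (hC G) (by positivity))
  have hcard := BijectionSums.card_bijection_tuples n d e f
  simp only [Function.comp_apply] at h
  rw [← hcard, hG] at h
  set T : ℝ := (Nat.card {p : Fin d → (Fin n → G) //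
    (∀ j, Function.Bijective (p j)) ∧ (∑ j, p j) = f} : ℝ) with hT
  have hpow : (n : ℝ) ^ n = n ^ (n - 1) * n := by
    rw [← pow_succ, Nat.sub_add_cancel hn]
  have hz : (n : ℝ) ^ ((3 : ℤ) - (d : ℤ)) = 1 / ((n : ℝ) ^ (d - 4) * n) := by
    rw [← pow_succ, one_div, ← zpow_natCast, ← zpow_neg]
    congr 1
    omega
  refine ⟨T * (n : ℝ) ^ (n - 1) / (n.factorial : ℝ) ^ d - 1, ?_, ?_⟩
  · field_simp
    ring
  · have heq : T * (n : ℝ) ^ (n - 1) / (n.factorial : ℝ) ^ d - 1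
        = ((n : ℝ) ^ n * T - n * (n.factorial : ℝ) ^ d) / (n * (n.factorial : ℝ) ^ d) := by
      rw [hpow]
      field_simp
    have hpos : 0 < n * (n.factorial : ℝ) ^ d := by positivity
    rw [heq, abs_div, abs_of_pos hpos, div_le_iff₀ hpos, hz]
    refine h.trans (le_of_eq ?_)
    field_simp
end

section
/- There is an absolute constant C such that the following holds. Let G be a finite abelian group of order n, let m < n, and let S_m ⊆ G^m be the set of injective tuples (tuples with pairwise distinct coordinates). Then ‖ (n^m (n−m)!/n!)² · 1_{S_m} * 1_{S_m} − 1 ‖₂ ≤ C·m/n^{3/2}, where for g, h : G^m → ℂ the convolution is (g*h)(x) = n^{−m} Σ_{y∈G^m} g(y)h(x−y) and ‖g‖₂ = ( n^{−m} Σ_{x∈G^m} |g(x)|² )^{1/2}. Consequently, if π₁, π₂ : {1,…,m} → G are independent uniformly random injections, the total variation distance between the distribution of π₁ + π₂ and the uniform distribution on G^m is at most C·m/n^{3/2}. -/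
/-!
Write `n = |G|`. By Parseval on `G^m`, the squared `L²` distance equals the sum of `|F χ|⁴` over
nontrivial tuples `χ` of characters supported on `m` coordinates, where `F χ` is the expectation of
the product character `χ` over a uniform random permutation of `G` (`l2_eq_S`). Call this sum `S`.
It remains to bound `S` by `O(m² / n³)`.

*Reduction.* `F χ = 0` if `χ` has exactly one nontrivial coordinate, so averaging over the choice
of coordinates shows that `S` decays like `m²` as `m` decreases (`S_step`). Moreover `|F χ|` does
not change when one character is added to all entries of `χ`. A double count over these shifts
bounds the case `m = n - 1` by the sum `R` of `|F χ|⁴` over nontrivial `χ` whose most frequent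
entry is the trivial character (`S_le_R`). Hence `S ≤ (m / (n - 1))² R`, and the claim becomes
`R = O(1 / n)` (`exists_R_le`).

*Two bounds for `F`.* The `L²` bound `noise_mass_le` controls `∑ x ^ |supp χ| |F χ|²`: for a
random set `J` of coordinates, the mass of the coefficients supported on `J` is exactly
`n ^ |J| (n - |J|)! / n!`. The pointwise bound `norm_F_sq_le` depends only on the multiplicities
`a ψ` of the entries of `χ`. The permanent-like sum defining `F χ` is, up to factorials, the
coefficient of `∏ u_ψ ^ a ψ` in `∏_g ∑_ψ u_ψ ψ(g)`. That coefficient is bounded by the maximum of the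
product on the torus `|u_ψ|² = a ψ`, and orthogonality of characters together with AM–GM bounds
this maximum by `n ^ (n / 2)`. Stirling's formula turns the result into an entropy bound.

*Conclusion.* `R` is at most the pointwise bound for `|F χ|²` paired with the `L²` bound. For
support size `k ≤ n / 10` one takes `x = √(k / n) / 2`; the level `k` contributes
`O(k² (9 / 10) ^ k / n)` (`level_sum_le`). For `k ≥ n / 10` one takes `x = 2 / 5`, and the total
is exponentially small in `n` (`tail_sum_le`). The total variation bound follows from the `L²`
bound by Cauchy–Schwarz.
-/

open Finset

/-- Real-valued indicator of the set of injective tuples in `G^m`. -/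
noncomputable def injInd {G : Type} [Fintype G] {m : ℕ} (x : Fin m → G) : ℝ := by
  classical exact if Function.Injective x then 1 else 0

noncomputable section

set_option linter.unusedSectionVars false

open scoped Classical ComplexConjugate Nat

namespace InjSum

variable {G : Type} [AddCommGroup G] [Fintype G]

/-! ### Product characters and Parseval -/

/-- The character of `G^ι` attached to a tuple `χ` of characters of `G`. -/
def pch {ι : Type} [Fintype ι] (χ : ι → AddChar G ℂ) (x : ι → G) : ℂ := ∏ i, χ i (x i)

section Parseval

variable {ι : Type} [Fintype ι] [DecidableEq ι]

lemma pch_add (χ : ι → AddChar G ℂ) (x y : ι → G) : pch χ (x + y) = pch χ x * pch χ y := by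
  simp [pch, AddChar.map_add_eq_mul, Finset.prod_mul_distrib]

lemma pch_neg (χ : ι → AddChar G ℂ) (x : ι → G) : pch χ (-x) = conj (pch χ x) := by
  simp [pch, AddChar.map_neg_eq_conj]

lemma pch_zero_left (x : ι → G) : pch (0 : ι → AddChar G ℂ) x = 1 := by
  simp [pch]

lemma sum_pch (x : ι → G) :
    ∑ χ : ι → AddChar G ℂ, pch χ x =
      if x = 0 then (Fintype.card G : ℂ) ^ Fintype.card ι else 0 := by
  have h := (Finset.prod_univ_sum (fun _ : ι => (univ : Finset (AddChar G ℂ)))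
    (fun i ψ => ψ (x i))).symm
  rw [Fintype.piFinset_univ] at h
  simp only [pch]
  rw [h]
  simp only [AddChar.sum_apply_eq_ite]
  split_ifs with hx
  · subst hx; simp
  · obtain ⟨i, hi⟩ := Function.ne_iff.mp hx
    exact Finset.prod_eq_zero (Finset.mem_univ i) (by simpa using hi)

/-- Parseval's identity on `G^ι`. -/
lemma parseval (u : (ι → G) → ℂ) :
    ∑ χ : ι → AddChar G ℂ, ‖∑ x, u x * pch χ x‖ ^ 2 =
      (Fintype.card G : ℝ) ^ Fintype.card ι * ∑ x, ‖u x‖ ^ 2 := by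
  have key : ∀ χ : ι → AddChar G ℂ, ((‖∑ x, u x * pch χ x‖ ^ 2 : ℝ) : ℂ) =
      ∑ x, ∑ y, u x * conj (u y) * pch χ (x - y) := by
    intro χ
    rw [Complex.ofReal_pow, ← Complex.mul_conj', map_sum, Finset.sum_mul_sum]
    refine Finset.sum_congr rfl fun x _ => Finset.sum_congr rfl fun y _ => ?_
    rw [sub_eq_add_neg, pch_add, pch_neg, map_mul]
    ring
  apply Complex.ofReal_injective
  rw [Complex.ofReal_sum, Finset.sum_congr rfl (fun χ _ => key χ), Finset.sum_comm]
  rw [Complex.ofReal_mul, Complex.ofReal_sum, Finset.mul_sum]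
  refine Finset.sum_congr rfl fun x _ => ?_
  rw [Finset.sum_comm]
  simp_rw [← Finset.mul_sum, sum_pch, sub_eq_zero]
  rw [Finset.sum_eq_single x]
  · rw [if_pos rfl, Complex.mul_conj']
    push_cast
    ring
  · intro y _ hy
    rw [if_neg (Ne.symm hy), mul_zero]
  · simp

end Parseval

/-! ### Fourier coefficients of a random bijection -/

/-- The expectation of the product character `χ` over a uniform random permutation of `G`;
the coordinates are indexed by `G` itself. -/
def F (χ : G → AddChar G ℂ) : ℂ :=
  (∑ π : Equiv.Perm G, pch χ π) / ((Fintype.card G)! : ℂ)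

lemma F_zero : F (0 : G → AddChar G ℂ) = 1 := by
  have : ((Fintype.card G)! : ℂ) ≠ 0 := by exact_mod_cast Nat.factorial_ne_zero _
  simp [F, pch_zero_left, Fintype.card_perm, this]

lemma card_filter_injective (κ : Type) [Fintype κ] [DecidableEq κ] :
    #{y : κ → G | Function.Injective y} = (Fintype.card G).descFactorial (Fintype.card κ) := by
  rw [← Fintype.card_embedding_eq, ← Fintype.card_subtype]
  exact Fintype.card_congr (Equiv.subtypeInjectiveEquivEmbedding κ G)

lemma exists_perm_comp {κ : Type} (e y : κ → G) (he : Function.Injective e)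
    (hy : Function.Injective y) : ∃ σ : Equiv.Perm G, ∀ k, σ (e k) = y k := by
  let E : {g // g ∈ Set.range e} ≃ {g // g ∈ Set.range y} :=
    (Equiv.ofInjective e he).symm.trans (Equiv.ofInjective y hy)
  refine ⟨E.extendSubtype, fun k => ?_⟩
  rw [E.extendSubtype_apply_of_mem (e k) ⟨k, rfl⟩]
  have : (⟨e k, ⟨k, rfl⟩⟩ : {g // g ∈ Set.range e}) = Equiv.ofInjective e he k := rfl
  rw [this]
  simp [E]

/-- Every injection `κ → G` is the restriction of exactly `(n - |κ|)!` permutations of `G`. -/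
lemma sum_perm_comp {κ : Type} [Fintype κ] [DecidableEq κ] (e : κ ↪ G) (h : (κ → G) → ℂ) :
    ∑ π : Equiv.Perm G, h (π ∘ e) =
      ((Fintype.card G - Fintype.card κ)! : ℂ) *
        ∑ y : κ → G with Function.Injective y, h y := by
  set c : ℕ := #{π : Equiv.Perm G | (π ∘ e : κ → G) = e} with hc
  have hfib : ∀ y : κ → G, Function.Injective y →
      #{π : Equiv.Perm G | (π ∘ e : κ → G) = y} = c := by
    intro y hy
    obtain ⟨σ, hσ⟩ := exists_perm_comp e y e.injective hy
    refine Finset.card_bij' (fun π _ => σ⁻¹ * π) (fun π _ => σ * π) ?_ ?_ ?_ ?_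
    · intro π hπ
      simp only [Finset.mem_filter, Finset.mem_univ, true_and] at hπ ⊢
      funext k
      have := congrFun hπ k
      simp only [Function.comp_apply] at this
      simp [this, ← hσ k]
    · intro π hπ
      simp only [Finset.mem_filter, Finset.mem_univ, true_and] at hπ ⊢
      funext k
      have := congrFun hπ k
      simp only [Function.comp_apply] at this
      simp [this, hσ k]
    · intros; simp
    · intros; simp
  have hgen : ∀ h : (κ → G) → ℂ, ∑ π : Equiv.Perm G, h (π ∘ e) =
      (c : ℂ) * ∑ y : κ → G with Function.Injective y, h y := by
    intro h
    rw [← Finset.sum_fiberwise_of_maps_to (s := univ)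
      (t := univ.filter fun y : κ → G => Function.Injective y)
      (g := fun π : Equiv.Perm G => (π ∘ e : κ → G)), Finset.mul_sum]
    · refine Finset.sum_congr rfl fun y hy => ?_
      rw [← hfib y (by simpa using hy), ← nsmul_eq_mul, ← Finset.sum_const]
      refine Finset.sum_congr rfl fun π hπ => ?_
      rw [(Finset.mem_filter.mp hπ).2]
    · intro π _
      simp only [Finset.mem_filter, Finset.mem_univ, true_and]
      exact π.injective.comp e.injective
  have h1 := hgen fun _ => 1
  simp only [Finset.sum_const, nsmul_eq_mul, mul_one, Finset.card_univ, Fintype.card_perm,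
    card_filter_injective] at h1
  have hle : Fintype.card κ ≤ Fintype.card G := Fintype.card_le_of_embedding e
  have h2 : (Fintype.card G)! = c * (Fintype.card G).descFactorial (Fintype.card κ) := by
    exact_mod_cast h1
  rw [← Nat.factorial_mul_descFactorial hle] at h2
  have hpos : 0 < (Fintype.card G).descFactorial (Fintype.card κ) :=
    Nat.pos_of_ne_zero (by rw [Ne, Nat.descFactorial_eq_zero_iff_lt]; omega)
  rw [hgen h, ← Nat.eq_of_mul_eq_mul_right hpos h2]

lemma pch_extend {κ : Type} [Fintype κ] [DecidableEq κ] (e : κ ↪ G) (χ : κ → AddChar G ℂ) (x : G → G) :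
    pch (Function.extend e χ 0) x = pch χ (x ∘ e) := by
  symm
  refine Fintype.prod_of_injective e e.injective _ _ ?_ ?_
  · intro g hg
    rw [Function.extend_apply' _ _ _ (by simpa using hg)]
    simp
  · intro k
    simp [e.injective.extend_apply]

/-- The Fourier coefficients of a uniform injection `κ → G` are those values of `F` supported on
a copy of `κ` in `G`. -/
lemma F_extend {κ : Type} [Fintype κ] [DecidableEq κ] (e : κ ↪ G) (χ : κ → AddChar G ℂ) :
    F (Function.extend e χ 0) =
      ((Fintype.card G - Fintype.card κ)! / (Fintype.card G)! : ℂ) *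
        ∑ y : κ → G with Function.Injective y, pch χ y := by
  simp only [F, pch_extend]
  rw [sum_perm_comp e (fun y => pch χ y)]
  ring

lemma sum_extend {κ : Type} [Fintype κ] [DecidableEq κ] (e : κ ↪ G) (Φ : (G → AddChar G ℂ) → ℝ) :
    ∑ χ : κ → AddChar G ℂ, Φ (Function.extend e χ 0) =
      ∑ χ : G → AddChar G ℂ with ∀ g, g ∉ univ.map e → χ g = 0, Φ χ := by
  refine Finset.sum_nbij' (fun χ => Function.extend e χ 0) (fun χ => χ ∘ e) ?_ ?_ ?_ ?_ ?_
  · intro χ _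
    simp only [Finset.mem_filter, Finset.mem_univ, true_and]
    intro g hg
    rw [Function.extend_apply' _ _ _ (by simpa using hg)]
    rfl
  · simp
  · intro χ _
    funext k
    simp [e.injective.extend_apply]
  · intro χ hχ
    simp only [Finset.mem_filter, Finset.mem_univ, true_and] at hχ
    funext g
    by_cases hg : ∃ k, e k = g
    · obtain ⟨k, rfl⟩ := hg
      simp [e.injective.extend_apply]
    · rw [Function.extend_apply' _ _ _ hg, hχ g (by simpa using hg)]
      rfl
  · simp

/-- The `ℓ²` mass of the Fourier coefficients supported on `J`: by Parseval, it is the squared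
`L²` norm of the density of a uniform injection `J → G`. -/
lemma sum_sq_supported (J : Finset G) :
    ∑ χ : G → AddChar G ℂ with ∀ g, g ∉ J → χ g = 0, ‖F χ‖ ^ 2 =
      (Fintype.card G : ℝ) ^ #J * ((Fintype.card G - #J)! / (Fintype.card G)!) := by
  have h := sum_extend (Function.Embedding.subtype (· ∈ J)) (fun χ : G → AddChar G ℂ => ‖F χ‖ ^ 2)
  have hJ : univ.map (Function.Embedding.subtype (· ∈ J)) = J := by
    ext g; simp
  rw [hJ] at h
  rw [← h]
  have hle : #J ≤ Fintype.card G := Finset.card_le_univ J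
  set a : ℂ := ((Fintype.card G - #J)! / (Fintype.card G)! : ℂ) with ha
  have h2 : ∀ χ : {g // g ∈ J} → AddChar G ℂ,
      F (Function.extend (Function.Embedding.subtype (· ∈ J)) χ 0) =
      ∑ y, (if Function.Injective y then a else 0) * pch χ y := by
    intro χ
    rw [F_extend, Finset.mul_sum, Finset.sum_filter]
    refine Finset.sum_congr rfl fun y _ => ?_
    simp [ha, Fintype.card_coe]
  simp_rw [h2]
  rw [parseval]
  have h3 : ∑ y : {g // g ∈ J} → G, ‖(if Function.Injective y then a else 0 : ℂ)‖ ^ 2 =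
      (Fintype.card G).descFactorial #J * ‖a‖ ^ 2 := by
    rw [← Fintype.card_coe J, ← card_filter_injective, ← nsmul_eq_mul, ← Finset.sum_const,
      Finset.sum_filter]
    refine Finset.sum_congr rfl fun y _ => ?_
    split_ifs <;> simp
  have h4 : ‖a‖ = ((Fintype.card G - #J)! / (Fintype.card G)! : ℝ) := by
    simp [ha]
  rw [h3, h4, Fintype.card_coe]
  have h5 : ((Fintype.card G)! : ℝ) =
      (Fintype.card G - #J)! * (Fintype.card G).descFactorial #J := by
    exact_mod_cast (Nat.factorial_mul_descFactorial hle).symm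
  have h6 : ((Fintype.card G)! : ℝ) ≠ 0 := by exact_mod_cast Nat.factorial_ne_zero _
  have h7 : ((Fintype.card G).descFactorial #J : ℝ) * (Fintype.card G - #J)! =
      (Fintype.card G)! := by rw [h5]; ring
  congr 1
  rw [div_pow, ← mul_div_assoc, div_eq_div_iff (by positivity) h6]
  linear_combination (Fintype.card G - #J)! * ((Fintype.card G)! : ℝ) * h7

/-! ### Noise-weighted mass, symmetries, and reduction to popular tuples -/

/-- The set of coordinates where a tuple of characters is nontrivial. -/
def supp (χ : G → AddChar G ℂ) : Finset G := {g | χ g ≠ 0}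

lemma mem_supp {χ : G → AddChar G ℂ} {g : G} : g ∈ supp χ ↔ χ g ≠ 0 := by simp [supp]

lemma supp_eq_empty {χ : G → AddChar G ℂ} : supp χ = ∅ ↔ χ = 0 := by
  rw [Finset.eq_empty_iff_forall_notMem]
  simp only [mem_supp, not_not]
  exact ⟨fun h => funext h, fun h g => by rw [h]; rfl⟩

/-- The weight `x ^ |supp χ|` is a mixture of the indicators `supp χ ⊆ J`, where `J` is a
random set containing each coordinate with probability `x`. -/
lemma pow_supp_eq (x : ℝ) (χ : G → AddChar G ℂ) :
    x ^ #(supp χ) = ∑ J : Finset G, x ^ #J * (1 - x) ^ (Fintype.card G - #J) *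
      (if ∀ g, g ∉ J → χ g = 0 then 1 else 0) := by
  have h1 : x ^ #(supp χ) = ∏ g : G, (x + if χ g = 0 then 1 - x else 0) := by
    rw [supp, ← Finset.prod_const, Finset.prod_filter]
    refine Finset.prod_congr rfl fun g _ => ?_
    split_ifs <;> simp_all
  rw [h1, Finset.prod_add, Finset.powerset_univ]
  refine Finset.sum_congr rfl fun J _ => ?_
  rw [Finset.prod_const, mul_assoc]
  congr 1
  split_ifs with h
  · rw [mul_one, Finset.prod_congr rfl (g := fun _ => 1 - x), Finset.prod_const,
      Finset.card_sdiff_of_subset (Finset.subset_univ J), Finset.card_univ]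
    intro g hg
    rw [if_pos (h g (by simpa using hg))]
  · push Not at h
    obtain ⟨g, hg, hχ⟩ := h
    rw [mul_zero]
    exact Finset.prod_eq_zero (i := g) (by simpa using hg) (if_neg hχ)

/-- Fourier mass of the density of a random bijection, damped by `x ^ |supp χ|`. Averaging
`sum_sq_supported` over random `J` gives a partial sum of an exponential series. -/
lemma noise_mass_le (x : ℝ) (hx0 : 0 ≤ x) (hx1 : x < 1) :
    ∑ χ : G → AddChar G ℂ, x ^ #(supp χ) * ‖F χ‖ ^ 2 ≤
      (1 - x) ^ Fintype.card G * Real.exp (Fintype.card G * (x / (1 - x))) := by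
  set n := Fintype.card G with hn
  have hx : 0 < 1 - x := by linarith
  have h1 : ∑ χ : G → AddChar G ℂ, x ^ #(supp χ) * ‖F χ‖ ^ 2 =
      ∑ J : Finset G, x ^ #J * (1 - x) ^ (n - #J) * ((n : ℝ) ^ #J * ((n - #J)! / n !)) := by
    simp_rw [pow_supp_eq, Finset.sum_mul]
    rw [Finset.sum_comm]
    refine Finset.sum_congr rfl fun J _ => ?_
    rw [hn, ← sum_sq_supported, Finset.mul_sum, Finset.sum_filter]
    refine Finset.sum_congr rfl fun χ _ => ?_
    split_ifs <;> simp
  have h2 : ∑ J : Finset G, x ^ #J * (1 - x) ^ (n - #J) * ((n : ℝ) ^ #J * ((n - #J)! / n !)) =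
      ∑ j ∈ range (n + 1), (1 - x) ^ n * ((n * (x / (1 - x))) ^ j / j !) := by
    rw [← Finset.powerset_univ, Finset.sum_powerset_apply_card
      (fun j => x ^ j * (1 - x) ^ (n - j) * ((n : ℝ) ^ j * ((n - j)! / n !))),
      Finset.card_univ, ← hn]
    refine Finset.sum_congr rfl fun j hj => ?_
    have hj : j ≤ n := by simpa [Nat.lt_succ_iff] using hj
    have hc : (n.choose j : ℝ) = n ! / (j ! * (n - j)!) := Nat.cast_choose ℝ hj
    have e1 : (n ! : ℝ) ≠ 0 := by positivity
    have e2 : (j ! : ℝ) ≠ 0 := by positivity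
    have e3 : ((n - j)! : ℝ) ≠ 0 := by positivity
    have e4 : (1 - x) ^ n = (1 - x) ^ (n - j) * (1 - x) ^ j := by
      rw [← pow_add, Nat.sub_add_cancel hj]
    rw [nsmul_eq_mul, hc, e4, mul_pow, div_pow]
    field_simp
  rw [h1, h2, ← Finset.mul_sum]
  refine mul_le_mul_of_nonneg_left ?_ (by positivity)
  exact Real.sum_le_exp_of_nonneg (by positivity) _

lemma F_comp_perm (σ : Equiv.Perm G) (χ : G → AddChar G ℂ) : F (χ ∘ σ) = F χ := by
  unfold F
  congr 1
  refine Fintype.sum_equiv (Equiv.mulRight σ⁻¹) _ _ fun π => ?_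
  unfold pch
  refine Fintype.prod_equiv σ _ _ fun g => ?_
  simp

lemma norm_F_add_const (χ : G → AddChar G ℂ) (ψ : AddChar G ℂ) :
    ‖F (fun g => χ g + ψ)‖ = ‖F χ‖ := by
  have h : ∀ π : Equiv.Perm G, pch (fun g => χ g + ψ) π = pch χ π * ψ (∑ g, g) := by
    intro π
    simp only [pch, AddChar.add_apply, Finset.prod_mul_distrib]
    congr 1
    rw [Equiv.prod_comp π (fun g => ψ g)]
    exact (map_sum ψ.toAddMonoidHom (fun g => g) univ).symm
  unfold F
  simp_rw [h]
  rw [← Finset.sum_mul, norm_div, norm_mul, AddChar.norm_apply, mul_one, norm_div]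

/-- A single coordinate of a uniform permutation is uniform on `G`. -/
lemma F_eq_zero_of_card_supp_eq_one (χ : G → AddChar G ℂ) (h : #(supp χ) = 1) : F χ = 0 := by
  have hQ := sum_sq_supported (supp χ)
  have hn : 0 < Fintype.card G := Fintype.card_pos
  rw [h, pow_one, ← Nat.mul_factorial_pred hn.ne'] at hQ
  have e1 : ((Fintype.card G - 1)! : ℝ) ≠ 0 := by positivity
  have e2 : (Fintype.card G : ℝ) ≠ 0 := by positivity
  have hQ1 : (Fintype.card G : ℝ) * ((Fintype.card G - 1)! /
      ((Fintype.card G * (Fintype.card G - 1)! : ℕ) : ℝ)) = 1 := by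
    push_cast
    field_simp
  rw [hQ1] at hQ
  have hne : χ ≠ 0 := by
    rintro rfl
    rw [supp_eq_empty.mpr rfl] at h
    simp at h
  have hsub : ({0, χ} : Finset (G → AddChar G ℂ)) ⊆
      univ.filter fun χ' => ∀ g, g ∉ supp χ → χ' g = 0 := by
    intro χ' hχ'
    simp only [Finset.mem_insert, Finset.mem_singleton] at hχ'
    simp only [Finset.mem_filter, Finset.mem_univ, true_and, mem_supp, not_not]
    rcases hχ' with rfl | rfl
    · exact fun g _ => rfl
    · exact fun g hg => hg
  have := Finset.sum_le_sum_of_subset_of_nonneg hsub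
    (f := fun χ => ‖F χ‖ ^ 2) (fun _ _ _ => by positivity)
  rw [hQ, Finset.sum_pair (Ne.symm hne), F_zero] at this
  have h0 : ‖F χ‖ ^ 2 = 0 := le_antisymm (by rw [norm_one] at this; linarith) (by positivity)
  simpa using h0

/-- The sum of `|F χ|⁴` over nontrivial `χ` supported on `J`. -/
def S (J : Finset G) : ℝ :=
  ∑ χ : G → AddChar G ℂ with (∀ g, g ∉ J → χ g = 0) ∧ χ ≠ 0, ‖F χ‖ ^ 4

lemma S_nonneg (J : Finset G) : 0 ≤ S J := Finset.sum_nonneg fun _ _ => by positivity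

/-- Permuting coordinates leaves `F` unchanged, so `S J` depends only on `|J|`. -/
lemma S_eq_of_card_eq (J J' : Finset G) (h : #J = #J') : S J = S J' := by
  obtain ⟨σ, hσ⟩ := Equiv.Perm.exists_map_finset_eq J' J h.symm
  have hσ' : ∀ g, σ g ∈ J ↔ g ∈ J' := by
    intro g
    rw [← hσ]
    simp
  refine Finset.sum_nbij' (fun χ => χ ∘ σ) (fun χ => χ ∘ σ.symm) ?_ ?_ ?_ ?_ ?_
  · intro χ hχ
    simp only [Finset.mem_filter, Finset.mem_univ, true_and] at hχ ⊢
    refine ⟨fun g hg => hχ.1 _ (by rwa [hσ']), fun h0 => hχ.2 ?_⟩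
    funext g
    simpa using congrFun h0 (σ.symm g)
  · intro χ hχ
    simp only [Finset.mem_filter, Finset.mem_univ, true_and] at hχ ⊢
    refine ⟨fun g hg => hχ.1 _ (by rw [← hσ']; simpa using hg), fun h0 => hχ.2 ?_⟩
    funext g
    simpa using congrFun h0 (σ g)
  · intro χ _
    funext g
    simp
  · intro χ _
    funext g
    simp
  · intro χ _
    rw [F_comp_perm]

/-- Double counting: `χ` survives the deletion of `i ∈ J` exactly when `i ∉ supp χ`. -/
lemma sum_S_erase (J : Finset G) :
    ∑ i ∈ J, S (J.erase i) = ∑ χ : G → AddChar G ℂ with (∀ g, g ∉ J → χ g = 0) ∧ χ ≠ 0,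
      ((#J : ℝ) - #(supp χ)) * ‖F χ‖ ^ 4 := by
  simp only [S, Finset.sum_filter]
  rw [Finset.sum_comm]
  refine Finset.sum_congr rfl fun χ _ => ?_
  by_cases h : (∀ g, g ∉ J → χ g = 0) ∧ χ ≠ 0
  · rw [if_pos h]
    have hsub : supp χ ⊆ J := by
      intro g hg
      by_contra hgJ
      exact mem_supp.mp hg (h.1 g hgJ)
    have hiff : ∀ i ∈ J, (((∀ g, g ∉ J.erase i → χ g = 0) ∧ χ ≠ 0) ↔ i ∈ J \ supp χ) := by
      intro i hi
      simp only [Finset.mem_erase, not_and, Finset.mem_sdiff, mem_supp, not_not]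
      constructor
      · intro h'
        exact ⟨hi, h'.1 i (fun h => absurd rfl h)⟩
      · intro h'
        refine ⟨fun g hg => ?_, h.2⟩
        by_cases hgi : g = i
        · rw [hgi]; exact h'.2
        · exact h.1 g (hg hgi)
    rw [Finset.sum_congr rfl (fun i hi => if_congr (hiff i hi) rfl rfl), ← Finset.sum_filter,
      Finset.sum_const, nsmul_eq_mul]
    congr 1
    have : J.filter (fun i => i ∈ J \ supp χ) = J \ supp χ := by
      ext i
      simp only [Finset.mem_filter, Finset.mem_sdiff]
      tauto
    rw [this, Finset.cast_card_sdiff hsub]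
  · rw [if_neg h]
    refine Finset.sum_eq_zero fun i _ => if_neg fun h' => h ⟨fun g hg => ?_, h'.2⟩
    exact h'.1 g (fun hm => hg (Finset.mem_of_mem_erase hm))

lemma two_le_card_supp {χ : G → AddChar G ℂ} (h0 : χ ≠ 0) (hF : F χ ≠ 0) : 2 ≤ #(supp χ) := by
  have h1 : #(supp χ) ≠ 0 := fun h => h0 (supp_eq_empty.mp (Finset.card_eq_zero.mp h))
  have h2 : #(supp χ) ≠ 1 := fun h => hF (F_eq_zero_of_card_supp_eq_one χ h)
  omega

/-- Since `|supp χ| ≥ 2` whenever `F χ ≠ 0`, deleting a random coordinate of `J` multiplies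
`S J` by at most `(|J| - 2) / |J|`. -/
lemma S_step (J J' : Finset G) (h : #J' + 1 = #J) :
    (#J' + 1 : ℝ) * S J' ≤ (#J' - 1) * S J := by
  have h1 : ∑ i ∈ J, S (J.erase i) = (#J' + 1 : ℝ) * S J' := by
    rw [Finset.sum_congr rfl (fun i hi => S_eq_of_card_eq (J.erase i) J'
      (by rw [Finset.card_erase_of_mem hi]; omega)), Finset.sum_const, nsmul_eq_mul, ← h]
    push_cast
    rfl
  rw [← h1, sum_S_erase, S, Finset.mul_sum]
  refine Finset.sum_le_sum fun χ hχ => ?_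
  simp only [Finset.mem_filter, Finset.mem_univ, true_and] at hχ
  by_cases hF : F χ = 0
  · simp [hF]
  · refine mul_le_mul_of_nonneg_right ?_ (by positivity)
    have h2 : (2 : ℝ) ≤ #(supp χ) := by exact_mod_cast two_le_card_supp hχ.2 hF
    have h3 : (#J : ℝ) = #J' + 1 := by exact_mod_cast h.symm
    linarith

/-- The number of coordinates at which `χ` takes the value `ψ`. -/
def mult (χ : G → AddChar G ℂ) (ψ : AddChar G ℂ) : ℕ := #{g | χ g = ψ}

lemma sum_mult (χ : G → AddChar G ℂ) : ∑ ψ, mult χ ψ = Fintype.card G := by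
  have := Finset.card_eq_sum_card_fiberwise (s := (univ : Finset G))
    (t := (univ : Finset (AddChar G ℂ))) (f := χ) (fun _ _ => Finset.mem_coe.mpr (Finset.mem_univ _))
  rw [Finset.card_univ] at this
  exact this.symm

lemma mult_zero_add_card_supp (χ : G → AddChar G ℂ) :
    mult χ 0 + #(supp χ) = Fintype.card G := by
  rw [mult, supp, Finset.card_filter_add_card_filter_not, Finset.card_univ]

lemma mult_sub_const (χ : G → AddChar G ℂ) (ψ ϑ : AddChar G ℂ) :
    mult (fun g => χ g - ψ) ϑ = mult χ (ϑ + ψ) := by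
  simp only [mult, sub_eq_iff_eq_add]

/-- The fourth-moment sum over nontrivial tuples whose most popular value is `0`. -/
def R (G : Type) [AddCommGroup G] [Fintype G] : ℝ :=
  ∑ χ : G → AddChar G ℂ with (∀ ψ, mult χ ψ ≤ mult χ 0) ∧ χ ≠ 0, ‖F χ‖ ^ 4

lemma mult_zero_eq_zero_of_const {χ : G → AddChar G ℂ} {ψ : AddChar G ℂ}
    (h : (fun g => χ g - ψ) = 0) (h0 : χ ≠ 0) : mult χ 0 = 0 := by
  have hχ : ∀ g, χ g = ψ := fun g => sub_eq_zero.mp (congrFun h g)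
  rw [mult, Finset.card_eq_zero, Finset.filter_eq_empty_iff]
  intro g _ hg
  apply h0
  funext g'
  rw [hχ g', ← hχ g, hg]
  rfl

/-- Shifting all the characters by a common one does not change `|F χ|`, so that each tuple may
be replaced by a shift with most popular value `0`. A tuple has at most `n` preimages under this
replacement when each preimage `χ` is weighted by `mult χ 0`, and that weight appears on averaging
`S` over the sets of size `n - 1`. -/
lemma S_le_R (J : Finset G) (h : #J + 1 = Fintype.card G) : S J ≤ R G := by
  have hn : (0 : ℝ) < Fintype.card G := by exact_mod_cast Fintype.card_pos
  have h1 : ∑ i : G, S (univ.erase i) = Fintype.card G * S J := by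
    rw [Finset.sum_congr rfl (fun i _ => S_eq_of_card_eq (univ.erase i) J
      (by rw [Finset.card_erase_of_mem (Finset.mem_univ i), Finset.card_univ]; omega)),
      Finset.sum_const, nsmul_eq_mul, Finset.card_univ]
  rw [sum_S_erase] at h1
  set P : (G → AddChar G ℂ) → ℝ := fun χ =>
    if (∀ ψ, mult χ ψ ≤ mult χ 0) ∧ χ ≠ 0 then ‖F χ‖ ^ 4 else 0 with hP
  have hP0 : ∀ χ, 0 ≤ P χ := fun χ => by
    simp only [hP]; split_ifs <;> positivity
  have hpoint : ∀ χ : G → AddChar G ℂ, χ ≠ 0 →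
      (mult χ 0 : ℝ) * ‖F χ‖ ^ 4 ≤ ∑ ψ, (mult χ 0 : ℝ) * P (fun g => χ g - ψ) := by
    intro χ h0
    obtain ⟨ψ, -, hψ⟩ := Finset.exists_max_image (univ : Finset (AddChar G ℂ)) (mult χ)
      ⟨0, Finset.mem_univ _⟩
    refine le_trans ?_ (Finset.single_le_sum (f := fun ψ => (mult χ 0 : ℝ) * P (fun g => χ g - ψ))
      (fun ψ _ => mul_nonneg (by positivity) (hP0 _)) (Finset.mem_univ ψ))
    by_cases hc : (fun g => χ g - ψ) = 0
    · rw [mult_zero_eq_zero_of_const hc h0]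
      simp
    · have hcond : (∀ ϑ, mult (fun g => χ g - ψ) ϑ ≤ mult (fun g => χ g - ψ) 0) ∧
          (fun g => χ g - ψ) ≠ 0 := by
        refine ⟨fun ϑ => ?_, hc⟩
        rw [mult_sub_const, mult_sub_const, zero_add]
        exact hψ _ (Finset.mem_univ _)
      have hF : ‖F (fun g => χ g - ψ)‖ = ‖F χ‖ := by
        have := norm_F_add_const χ (-ψ)
        simpa [sub_eq_add_neg] using this
      simp only [hP]
      rw [if_pos hcond, hF]
  have h2 : ∑ χ : G → AddChar G ℂ with (∀ g, g ∉ (univ : Finset G) → χ g = 0) ∧ χ ≠ 0,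
      ((#(univ : Finset G) : ℝ) - #(supp χ)) * ‖F χ‖ ^ 4 ≤
      ∑ χ : G → AddChar G ℂ, ∑ ψ, (mult χ 0 : ℝ) * P (fun g => χ g - ψ) := by
    refine (Finset.sum_le_sum (g := fun χ => ∑ ψ, (mult χ 0 : ℝ) * P (fun g => χ g - ψ))
      fun χ hχ => ?_).trans (Finset.sum_le_sum_of_subset_of_nonneg (Finset.subset_univ _)
        fun χ _ _ => Finset.sum_nonneg fun ψ _ => mul_nonneg (by positivity) (hP0 _))
    simp only [Finset.mem_filter, Finset.mem_univ, true_and] at hχ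
    have hm : (mult χ 0 : ℝ) = #(univ : Finset G) - #(supp χ) := by
      rw [Finset.card_univ, ← mult_zero_add_card_supp χ]
      push_cast
      ring
    rw [← hm]
    exact hpoint χ hχ.2
  have h3 : ∑ χ : G → AddChar G ℂ, ∑ ψ, (mult χ 0 : ℝ) * P (fun g => χ g - ψ) =
      Fintype.card G * R G := by
    rw [Finset.sum_comm]
    have : ∀ ψ : AddChar G ℂ, ∑ χ : G → AddChar G ℂ, (mult χ 0 : ℝ) * P (fun g => χ g - ψ) =
        ∑ χ : G → AddChar G ℂ, (mult χ (-ψ) : ℝ) * P χ := by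
      intro ψ
      refine Fintype.sum_equiv (Equiv.subRight (fun _ => ψ)) _ _ fun χ => ?_
      have e : (Equiv.subRight (fun _ : G => ψ)) χ = fun g => χ g - ψ := rfl
      rw [e, mult_sub_const]
      simp
    rw [Finset.sum_congr rfl fun ψ _ => this ψ, Finset.sum_comm, R, Finset.sum_filter,
      Finset.mul_sum]
    refine Finset.sum_congr rfl fun χ _ => ?_
    rw [← Finset.sum_mul]
    congr 1
    rw [← sum_mult χ, Nat.cast_sum]
    exact Equiv.sum_comp (Equiv.neg (AddChar G ℂ)) (fun ψ => (mult χ ψ : ℝ))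
  have h4 : (Fintype.card G : ℝ) * S J ≤ Fintype.card G * R G := by
    rw [← h1, ← h3]; exact h2
  exact le_of_mul_le_mul_left h4 hn

/-- `S J = O((|J| / n) ^ 2) * R G`, by iterating `S_step` from a set of size `n - 1` down to `|J|`. -/
lemma S_le (J : Finset G) (h : #J < Fintype.card G) :
    S J * ((Fintype.card G : ℝ) - 1) ^ 2 ≤ (#J : ℝ) ^ 2 * R G := by
  obtain ⟨d, hd⟩ : ∃ d, #J + 1 + d = Fintype.card G := ⟨Fintype.card G - (#J + 1), by omega⟩
  induction d generalizing J with
  | zero =>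
    have e : (Fintype.card G : ℝ) - 1 = #J := by
      rw [← hd]; push_cast; ring
    rw [e, mul_comm]
    exact mul_le_mul_of_nonneg_left (S_le_R J (by omega)) (by positivity)
  | succ d ih =>
    obtain ⟨g, hg⟩ : ∃ g, g ∉ J := by
      by_contra! hall
      have : J = univ := Finset.eq_univ_of_forall hall
      rw [this, Finset.card_univ] at h
      exact lt_irrefl _ h
    have hc : #(insert g J) = #J + 1 := Finset.card_insert_of_notMem hg
    have h1 := ih (insert g J) (by omega) (by omega)
    have h2 := S_step (insert g J) J hc.symm
    have hR : 0 ≤ R G := Finset.sum_nonneg fun _ _ => by positivity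
    rw [hc] at h1
    push_cast at h1
    set N := ((Fintype.card G : ℝ) - 1) ^ 2
    have hN : 0 ≤ N := sq_nonneg _
    rcases Nat.eq_zero_or_pos (#J) with h0 | hpos
    · rw [h0] at h2 ⊢
      have := S_nonneg J
      have h3 := S_nonneg (insert g J)
      have : S J = 0 := by norm_num at h2; linarith
      rw [this]; simp
    · have hj : (1 : ℝ) ≤ #J := by exact_mod_cast hpos
      have h4 : (#J + 1 : ℝ) * (S J * N) ≤ (#J - 1) * ((#J + 1) ^ 2 * R G) :=
        calc (#J + 1 : ℝ) * (S J * N) = ((#J + 1 : ℝ) * S J) * N := by ring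
          _ ≤ ((#J - 1) * S (insert g J)) * N := mul_le_mul_of_nonneg_right h2 hN
          _ = (#J - 1) * (S (insert g J) * N) := by ring
          _ ≤ _ := mul_le_mul_of_nonneg_left h1 (by linarith)
      have h5 : (#J + 1 : ℝ) * (S J * N) ≤ (#J + 1) * ((#J : ℝ) ^ 2 * R G) := by
        nlinarith
      exact le_of_mul_le_mul_left h5 (by linarith)

/-! ### A pointwise bound for the Fourier coefficients -/

lemma prod_mult {M : Type} [CommMonoid M] (τ : G → AddChar G ℂ) (f : AddChar G ℂ → M) :
    ∏ g, f (τ g) = ∏ ψ, f ψ ^ mult τ ψ := by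
  rw [← Finset.prod_fiberwise univ τ]
  refine Finset.prod_congr rfl fun ψ _ => ?_
  rw [mult, ← Finset.prod_const]
  refine Finset.prod_congr rfl fun g hg => ?_
  rw [(Finset.mem_filter.mp hg).2]

lemma mult_comp_perm (χ : G → AddChar G ℂ) (σ : Equiv.Perm G) (ψ : AddChar G ℂ) :
    mult (χ ∘ σ) ψ = mult χ ψ := by
  rw [mult, mult, ← Fintype.card_subtype, ← Fintype.card_subtype]
  exact Fintype.card_congr (σ.subtypeEquiv fun a => by simp)

lemma exists_perm_of_mult_eq (χ τ : G → AddChar G ℂ) (h : mult τ = mult χ) :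
    ∃ σ : Equiv.Perm G, χ ∘ σ = τ := by
  have h' : ∀ ψ, Nonempty ({g // τ g = ψ} ≃ {g // χ g = ψ}) := by
    intro ψ
    refine ⟨Fintype.equivOfCardEq ?_⟩
    rw [Fintype.card_subtype, Fintype.card_subtype]
    exact congrFun h ψ
  refine ⟨Equiv.ofFiberEquiv fun ψ => (h' ψ).some, funext fun g => ?_⟩
  exact Equiv.ofFiberEquiv_map _ g

/-- Number of permutations carrying `χ` to a rearrangement `τ` of it. -/
lemma card_perm_comp_eq (χ τ : G → AddChar G ℂ) :
    #{π : Equiv.Perm G | χ ∘ π = τ} = if mult τ = mult χ then ∏ ψ, (mult χ ψ)! else 0 := by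
  split_ifs with h
  · obtain ⟨σ, rfl⟩ := exists_perm_of_mult_eq χ τ h
    have h1 : #{π : Equiv.Perm G | χ ∘ π = χ ∘ σ} = #{π : Equiv.Perm G | χ ∘ π = χ} := by
      rw [← Fintype.card_subtype, ← Fintype.card_subtype]
      refine Fintype.card_congr ((Equiv.mulRight σ⁻¹).subtypeEquiv fun π => ?_)
      constructor
      · intro hπ
        funext g
        have := congrFun hπ (σ⁻¹ g)
        simpa using this
      · intro hπ
        funext g
        have := congrFun hπ (σ g)
        simpa using this
    rw [h1, ← Fintype.card_subtype]
    have h2 := DomMulAct.stabilizer_card (f := χ)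
    rw [h2]
    refine Finset.prod_congr rfl fun ψ _ => ?_
    rw [Fintype.card_subtype]
    rfl
  · rw [Finset.card_eq_zero, Finset.filter_eq_empty_iff]
    rintro π - rfl
    exact h (funext fun ψ => mult_comp_perm χ π ψ)

/-- The sum defining `F`, grouped by the rearrangement of `χ` that each permutation produces. -/
lemma sum_perm_eq (χ : G → AddChar G ℂ) :
    ∑ π : Equiv.Perm G, pch χ π = ((∏ ψ, (mult χ ψ)! : ℕ) : ℂ) *
      ∑ τ : G → AddChar G ℂ with mult τ = mult χ, ∏ g, τ g g := by
  have h1 : ∑ π : Equiv.Perm G, pch χ π = ∑ π : Equiv.Perm G, ∏ g, (χ ∘ π) g g := by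
    refine Fintype.sum_equiv (Equiv.inv (Equiv.Perm G)) _ _ fun π => ?_
    refine Fintype.prod_equiv π _ _ fun g => ?_
    simp
  rw [h1, ← Finset.sum_fiberwise univ (fun π : Equiv.Perm G => χ ∘ π), Finset.mul_sum,
    Finset.sum_filter]
  refine Finset.sum_congr rfl fun τ _ => ?_
  rw [Finset.sum_congr rfl (g := fun _ => ∏ g, τ g g) fun π hπ => by
    rw [(Finset.mem_filter.mp hπ).2]]
  rw [Finset.sum_const, card_perm_comp_eq, nsmul_eq_mul]
  split_ifs <;> simp

lemma mult_le (χ : G → AddChar G ℂ) (ψ : AddChar G ℂ) : mult χ ψ ≤ Fintype.card G :=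
  Finset.card_le_univ _

/-- Averaging over phases `t ψ` extracts the monomial `∏ ψ, r ψ ^ mult χ ψ` from the product of
linear forms `∑ ψ, r ψ * ψ g`; a modulus exceeding `card G` separates all multiplicities. -/
lemma average_phases (N : ℕ) [NeZero N] (hN : Fintype.card G < N) (χ : G → AddChar G ℂ)
    (r : AddChar G ℂ → ℂ) :
    ∑ t : AddChar G ℂ → ZMod N, (∏ ψ, ZMod.stdAddChar (t ψ * -(mult χ ψ : ZMod N))) *
        ∏ g, ∑ ψ : AddChar G ℂ, r ψ * ZMod.stdAddChar (t ψ) * ψ g =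
      (N : ℂ) ^ Fintype.card (AddChar G ℂ) * (∏ ψ, r ψ ^ mult χ ψ) *
        ∑ τ : G → AddChar G ℂ with mult τ = mult χ, ∏ g, τ g g := by
  have h1 : ∀ t : AddChar G ℂ → ZMod N,
      (∏ ψ, ZMod.stdAddChar (t ψ * -(mult χ ψ : ZMod N))) *
        ∏ g, ∑ ψ : AddChar G ℂ, r ψ * ZMod.stdAddChar (t ψ) * ψ g =
      ∑ τ : G → AddChar G ℂ, (∏ ψ, r ψ ^ mult τ ψ) * (∏ g, τ g g) *
        ∏ ψ, ZMod.stdAddChar (t ψ * ((mult τ ψ : ZMod N) - (mult χ ψ : ZMod N))) := by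
    intro t
    rw [Finset.prod_univ_sum, Fintype.piFinset_univ, Finset.mul_sum]
    refine Finset.sum_congr rfl fun τ _ => ?_
    rw [Finset.prod_mul_distrib, Finset.prod_mul_distrib, prod_mult τ r,
      prod_mult τ (fun ψ => (ZMod.stdAddChar (t ψ) : ℂ))]
    have h2 : ∏ ψ, (ZMod.stdAddChar (t ψ * ((mult τ ψ : ZMod N) - (mult χ ψ : ZMod N))) : ℂ) =
        (∏ ψ, (ZMod.stdAddChar (t ψ) : ℂ) ^ mult τ ψ) *
        ∏ ψ, (ZMod.stdAddChar (t ψ * -(mult χ ψ : ZMod N)) : ℂ) := by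
      rw [← Finset.prod_mul_distrib]
      refine Finset.prod_congr rfl fun ψ _ => ?_
      rw [← AddChar.map_nsmul_eq_pow, ← AddChar.map_add_eq_mul, nsmul_eq_mul]
      congr 1
      ring
    rw [h2]
    ring
  have h3 : ∀ τ : G → AddChar G ℂ, ∑ t : AddChar G ℂ → ZMod N,
      ∏ ψ, (ZMod.stdAddChar (t ψ * ((mult τ ψ : ZMod N) - (mult χ ψ : ZMod N))) : ℂ) =
      if mult τ = mult χ then (N : ℂ) ^ Fintype.card (AddChar G ℂ) else 0 := by
    intro τ
    have h4 := (Finset.prod_univ_sum (fun _ : AddChar G ℂ => (univ : Finset (ZMod N)))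
      (fun ψ s => (ZMod.stdAddChar (s * ((mult τ ψ : ZMod N) - (mult χ ψ : ZMod N))) : ℂ))).symm
    rw [Fintype.piFinset_univ] at h4
    rw [h4]
    simp only [AddChar.sum_mulShift _ (ZMod.isPrimitive_stdAddChar N), sub_eq_zero, ZMod.card]
    have h5 : ∀ ψ, ((mult τ ψ : ZMod N) = (mult χ ψ : ZMod N)) ↔ mult τ ψ = mult χ ψ := by
      intro ψ
      rw [ZMod.natCast_eq_natCast_iff']
      rw [Nat.mod_eq_of_lt ((mult_le τ ψ).trans_lt hN),
        Nat.mod_eq_of_lt ((mult_le χ ψ).trans_lt hN)]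
    simp only [h5]
    split_ifs with h
    · simp [h]
    · obtain ⟨ψ, hψ⟩ := Function.ne_iff.mp h
      exact Finset.prod_eq_zero (Finset.mem_univ ψ) (by simp [hψ])
  simp only [h1]
  rw [Finset.sum_comm]
  simp only [← Finset.mul_sum, h3]
  rw [Finset.mul_sum, Finset.sum_filter]
  refine Finset.sum_congr rfl fun τ _ => ?_
  split_ifs with h
  · rw [h]; ring
  · simp

/-- Orthogonality of characters. -/
lemma sum_norm_sq_linear (c : AddChar G ℂ → ℂ) :
    ∑ g, ‖∑ ψ : AddChar G ℂ, c ψ * ψ g‖ ^ 2 = Fintype.card G * ∑ ψ, ‖c ψ‖ ^ 2 := by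
  have h : ∀ g, ((‖∑ ψ : AddChar G ℂ, c ψ * ψ g‖ ^ 2 : ℝ) : ℂ) =
      ∑ ψ : AddChar G ℂ, ∑ ϑ : AddChar G ℂ, c ψ * conj (c ϑ) * (ψ - ϑ) g := by
    intro g
    rw [Complex.ofReal_pow, ← Complex.mul_conj', map_sum, Finset.sum_mul_sum]
    refine Finset.sum_congr rfl fun ψ _ => Finset.sum_congr rfl fun ϑ _ => ?_
    rw [AddChar.sub_apply', map_mul, ← AddChar.map_neg_eq_conj, AddChar.map_neg_eq_inv]
    ring
  apply Complex.ofReal_injective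
  rw [Complex.ofReal_sum]
  simp only [h]
  rw [Finset.sum_comm]
  have h2 : ∀ ψ : AddChar G ℂ, ∑ g, ∑ ϑ : AddChar G ℂ, c ψ * conj (c ϑ) * (ψ - ϑ) g =
      Fintype.card G * (‖c ψ‖ ^ 2 : ℝ) := by
    intro ψ
    rw [Finset.sum_comm]
    simp only [← Finset.mul_sum, AddChar.sum_eq_ite, sub_eq_zero]
    rw [Finset.sum_eq_single ψ]
    · rw [if_pos rfl, Complex.mul_conj']
      push_cast
      ring
    · intro ϑ _ hϑ
      rw [if_neg (Ne.symm hϑ), mul_zero]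
    · simp
  simp only [h2]
  push_cast
  rw [Finset.mul_sum]

/-- AM–GM in exponential form. -/
lemma prod_le_one_of_sum_le (y : G → ℝ) (h0 : ∀ g, 0 ≤ y g) (h : ∑ g, y g ≤ Fintype.card G) :
    ∏ g, y g ≤ 1 := by
  calc ∏ g, y g ≤ ∏ g, Real.exp (y g - 1) :=
        Finset.prod_le_prod (fun g _ => h0 g) fun g _ => by
          have := Real.add_one_le_exp (y g - 1); linarith
    _ = Real.exp (∑ g, (y g - 1)) := (Real.exp_sum _ _).symm
    _ ≤ 1 := by
        rw [Real.exp_le_one_iff, Finset.sum_sub_distrib]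
        simp
        linarith

lemma prod_norm_linear_le (c : AddChar G ℂ → ℂ) (hc : ∑ ψ, ‖c ψ‖ ^ 2 = Fintype.card G) :
    (∏ g, ‖∑ ψ : AddChar G ℂ, c ψ * ψ g‖) ^ 2 ≤
      (Fintype.card G : ℝ) ^ Fintype.card G := by
  have hn : (0 : ℝ) < Fintype.card G := by exact_mod_cast Fintype.card_pos
  have h := prod_le_one_of_sum_le
    (fun g => ‖∑ ψ : AddChar G ℂ, c ψ * ψ g‖ ^ 2 / Fintype.card G)
    (fun g => by positivity) (by
      rw [← Finset.sum_div, sum_norm_sq_linear, hc]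
      apply le_of_eq
      field_simp)
  rw [Finset.prod_div_distrib, Finset.prod_const, Finset.card_univ, Finset.prod_pow] at h
  rwa [div_le_one (by positivity)] at h

/-- The permanent-type sum behind `F χ` is a coefficient of a product of linear forms, and is
bounded by the maximum of that product at `|r ψ| ^ 2 = mult χ ψ`. -/
lemma norm_coeff_le (χ : G → AddChar G ℂ) :
    ‖∑ τ : G → AddChar G ℂ with mult τ = mult χ, ∏ g, τ g g‖ ^ 2 *
      ∏ ψ, (mult χ ψ : ℝ) ^ mult χ ψ ≤ (Fintype.card G : ℝ) ^ Fintype.card G := by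
  obtain ⟨N, hN, hN1⟩ : ∃ N, Fintype.card G < N ∧ N ≠ 0 :=
    ⟨Fintype.card G + 1, Nat.lt_succ_self _, Nat.succ_ne_zero _⟩
  have : NeZero N := ⟨hN1⟩
  set K := ∑ τ : G → AddChar G ℂ with mult τ = mult χ, ∏ g, τ g g with hK
  have hunit : ∀ s : ZMod N, ‖(ZMod.stdAddChar s : ℂ)‖ = 1 := fun s => AddChar.norm_apply _ _
  let r : AddChar G ℂ → ℂ := fun ψ => (Real.sqrt (mult χ ψ) : ℂ)
  have hr : ∀ ψ, ‖r ψ‖ ^ 2 = mult χ ψ := by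
    intro ψ
    simp only [r, Complex.norm_real, Real.norm_eq_abs, sq_abs]
    exact Real.sq_sqrt (Nat.cast_nonneg _)
  have hav := average_phases N hN χ r
  rw [← hK] at hav
  set B := Real.sqrt ((Fintype.card G : ℝ) ^ Fintype.card G) with hB
  have hle : ∀ t : AddChar G ℂ → ZMod N,
      ‖(∏ ψ, (ZMod.stdAddChar (t ψ * -(mult χ ψ : ZMod N)) : ℂ)) *
        ∏ g, ∑ ψ : AddChar G ℂ, r ψ * ZMod.stdAddChar (t ψ) * ψ g‖ ≤ B := by
    intro t
    rw [norm_mul, norm_prod, norm_prod]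
    simp only [hunit, Finset.prod_const_one, one_mul]
    apply Real.le_sqrt_of_sq_le
    apply prod_norm_linear_le (fun ψ => r ψ * ZMod.stdAddChar (t ψ))
    simp only [norm_mul, hunit, mul_one, hr]
    rw [← sum_mult χ, Nat.cast_sum]
  have h1 := norm_sum_le_of_le univ (fun t _ => hle t)
  rw [hav, Finset.sum_const, Finset.card_univ, Fintype.card_fun, ZMod.card, nsmul_eq_mul,
    norm_mul, norm_mul, norm_pow, Complex.norm_natCast, Nat.cast_pow, mul_assoc] at h1
  have hN0 : (0 : ℝ) < (N : ℝ) ^ Fintype.card (AddChar G ℂ) := by positivity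
  have h2 := le_of_mul_le_mul_left h1 hN0
  have h3 : (‖∏ ψ, r ψ ^ mult χ ψ‖ * ‖K‖) ^ 2 ≤ B ^ 2 :=
    pow_le_pow_left₀ (by positivity) h2 2
  rw [hB, Real.sq_sqrt (by positivity), mul_pow, norm_prod, ← Finset.prod_pow] at h3
  rw [mul_comm]
  convert h3 using 2
  refine Finset.prod_congr rfl fun ψ _ => ?_
  rw [norm_pow, ← pow_mul, mul_comm, pow_mul, hr]

lemma norm_F_sq_le (χ : G → AddChar G ℂ) :
    ‖F χ‖ ^ 2 * ((Fintype.card G)! : ℝ) ^ 2 * ∏ ψ, (mult χ ψ : ℝ) ^ mult χ ψ ≤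
      (Fintype.card G : ℝ) ^ Fintype.card G * (∏ ψ, ((mult χ ψ)! : ℝ)) ^ 2 := by
  have h := norm_coeff_le χ
  have hf : ((Fintype.card G)! : ℝ) ≠ 0 := by positivity
  have hF : ‖F χ‖ ^ 2 * ((Fintype.card G)! : ℝ) ^ 2 = (∏ ψ, ((mult χ ψ)! : ℝ)) ^ 2 *
      ‖∑ τ : G → AddChar G ℂ with mult τ = mult χ, ∏ g, τ g g‖ ^ 2 := by
    rw [F, sum_perm_eq, norm_div, norm_mul, Complex.norm_natCast, Complex.norm_natCast]
    push_cast
    field_simp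
  rw [hF, mul_assoc, mul_comm _ ((∏ ψ, ((mult χ ψ)! : ℝ)) ^ 2)]
  exact mul_le_mul_of_nonneg_left h (by positivity)

/-! ### Stirling estimates -/

lemma log_factorial_le (a : ℕ) (ha : 1 ≤ a) :
    2 * Real.log (a !) ≤ 2 + Real.log a + 2 * (a * Real.log a) - 2 * a := by
  obtain ⟨b, rfl⟩ : ∃ b, a = b + 1 := ⟨a - 1, by omega⟩
  have h := Stirling.stirlingSeq'_antitone (Nat.zero_le b)
  simp only [Function.comp, Nat.succ_eq_add_one, zero_add] at h
  have hpos : 0 < Stirling.stirlingSeq (b + 1) := Stirling.stirlingSeq'_pos b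
  have h1 := Real.log_le_log hpos h
  rw [Stirling.stirlingSeq_one, Stirling.log_stirlingSeq_formula, Real.log_div (by positivity)
    (by positivity), Real.log_mul (by norm_num) (by positivity),
    Real.log_div (by positivity) (by positivity), Real.log_exp,
    Real.log_sqrt (by norm_num)] at h1
  linarith

lemma le_log_factorial (a : ℕ) (ha : 1 ≤ a) :
    Real.log a + 2 * (a * Real.log a) - 2 * a ≤ 2 * Real.log (a !) := by
  have h := Stirling.le_log_factorial_stirling (n := a) (by omega)
  have h2 : 0 ≤ Real.log (2 * Real.pi) := Real.log_nonneg (by linarith [Real.pi_gt_three])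
  linarith

/-- An upper bound for `log (a ! ^ 2 / a ^ a) / a + 2` coming from Stirling's formula; it is
monotone for `a ≥ 1`. -/
def gs (a : ℝ) : ℝ := (2 + Real.log a) / a + Real.log a

lemma gs_mono {a b : ℝ} (ha : 1 ≤ a) (hab : a ≤ b) : gs a ≤ gs b := by
  have hd : ∀ x : ℝ, 1 ≤ x → HasDerivAt gs ((x - 1 - Real.log x) / x ^ 2) x := by
    intro x hx
    have hx0 : x ≠ 0 := by linarith
    have h1 := Real.hasDerivAt_log hx0
    have h2 := ((h1.const_add 2).fun_div (hasDerivAt_id' x) hx0).add h1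
    refine h2.congr_deriv ?_
    field_simp
    ring
  have hm : MonotoneOn gs (Set.Ici 1) := by
    refine monotoneOn_of_deriv_nonneg (convex_Ici 1)
      (fun x hx => (hd x hx).continuousAt.continuousWithinAt) ?_ ?_
    · intro x hx
      exact (hd x (interior_subset hx)).differentiableAt.differentiableWithinAt
    · intro x hx
      have hx1 : 1 ≤ x := interior_subset (s := Set.Ici (1 : ℝ)) hx
      rw [(hd x hx1).deriv]
      have := Real.log_le_sub_one_of_pos (x := x) (by linarith)
      exact div_nonneg (by linarith) (by positivity)
  exact hm ha (ha.trans hab) hab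

lemma mul_gs {a : ℝ} (ha : 0 < a) : a * gs a = 2 + Real.log a + a * Real.log a := by
  unfold gs
  field_simp

lemma factorial_sq_le (a : ℕ) :
    ((a ! : ℝ)) ^ 2 ≤ (a : ℝ) ^ a * Real.exp (a * gs a - 2 * a) := by
  rcases Nat.eq_zero_or_pos a with rfl | ha
  · simp
  have ha0 : (0 : ℝ) < a := by exact_mod_cast ha
  have hf : (0 : ℝ) < a ! := by positivity
  rw [← Real.log_le_log_iff (by positivity) (by positivity), Real.log_pow,
    Real.log_mul (by positivity) (by positivity), Real.log_exp, Real.log_pow, mul_gs ha0]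
  have := log_factorial_le a ha
  push_cast
  linarith

/-- The pointwise bound after Stirling's formula. -/
lemma norm_F_sq_le_exp (χ : G → AddChar G ℂ) :
    ‖F χ‖ ^ 2 ≤ Real.exp (∑ ψ, (mult χ ψ : ℝ) * gs (mult χ ψ) -
      (Fintype.card G + 1) * Real.log (Fintype.card G)) := by
  have h := norm_F_sq_le χ
  set n := Fintype.card G with hn
  have hn1 : 1 ≤ n := Fintype.card_pos
  have hn0 : (0 : ℝ) < n := by exact_mod_cast hn1
  have hP : (0 : ℝ) < ∏ ψ, (mult χ ψ : ℝ) ^ mult χ ψ := by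
    refine Finset.prod_pos fun ψ _ => ?_
    rcases Nat.eq_zero_or_pos (mult χ ψ) with h | h
    · simp [h]
    · positivity
  have h1 : (∏ ψ, ((mult χ ψ)! : ℝ)) ^ 2 ≤ (∏ ψ, (mult χ ψ : ℝ) ^ mult χ ψ) *
      Real.exp (∑ ψ, (mult χ ψ : ℝ) * gs (mult χ ψ) - 2 * n) := by
    have h2 : (∑ ψ, (mult χ ψ : ℝ) * gs (mult χ ψ) - 2 * n) =
        ∑ ψ, ((mult χ ψ : ℝ) * gs (mult χ ψ) - 2 * mult χ ψ) := by
      rw [Finset.sum_sub_distrib, ← Finset.mul_sum, ← Nat.cast_sum, sum_mult]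
    rw [h2, Real.exp_sum, ← Finset.prod_pow, ← Finset.prod_mul_distrib]
    exact Finset.prod_le_prod (fun _ _ => by positivity) fun ψ _ => factorial_sq_le _
  have h3 : ‖F χ‖ ^ 2 * ((n ! : ℕ) : ℝ) ^ 2 ≤
      (n : ℝ) ^ n * Real.exp (∑ ψ, (mult χ ψ : ℝ) * gs (mult χ ψ) - 2 * n) := by
    refine le_of_mul_le_mul_right (h.trans ?_) hP
    calc _ ≤ (n : ℝ) ^ n * ((∏ ψ, (mult χ ψ : ℝ) ^ mult χ ψ) *
          Real.exp (∑ ψ, (mult χ ψ : ℝ) * gs (mult χ ψ) - 2 * n)) :=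
          mul_le_mul_of_nonneg_left h1 (by positivity)
      _ = _ := by ring
  have h4 : Real.exp (Real.log n + 2 * (n * Real.log n) - 2 * n) ≤ ((n ! : ℕ) : ℝ) ^ 2 := by
    rw [← Real.le_log_iff_exp_le (by positivity), Real.log_pow]
    exact_mod_cast le_log_factorial n hn1
  have h5 : (n : ℝ) ^ n = Real.exp (n * Real.log n) := by
    rw [← Real.log_pow, Real.exp_log (by positivity)]
  have h6 := (mul_le_mul_of_nonneg_left h4 (sq_nonneg ‖F χ‖)).trans h3
  rw [h5, ← Real.exp_add, ← le_div_iff₀ (Real.exp_pos _), ← Real.exp_sub] at h6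
  refine h6.trans (Real.exp_le_exp.mpr (le_of_eq ?_))
  ring

lemma sum_mul_gs_le (s : Finset (AddChar G ℂ)) (a : AddChar G ℂ → ℕ) (q : ℝ)
    (h : ∀ ψ ∈ s, (a ψ : ℝ) ≤ q) :
    ∑ ψ ∈ s, (a ψ : ℝ) * gs (a ψ) ≤ (∑ ψ ∈ s, (a ψ : ℝ)) * gs q := by
  rw [Finset.sum_mul]
  refine Finset.sum_le_sum fun ψ hψ => ?_
  rcases Nat.eq_zero_or_pos (a ψ) with h0 | h0
  · simp [h0]
  · exact mul_le_mul_of_nonneg_left (gs_mono (by exact_mod_cast h0) (h ψ hψ)) (Nat.cast_nonneg _)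

/-- Pointwise bound in terms of the number `p` of zero coordinates and the support size `k`. -/
lemma norm_F_sq_le_entropy (χ : G → AddChar G ℂ) (n p k : ℕ) (hn : Fintype.card G = n)
    (hp : mult χ 0 = p) (hk : #(supp χ) = k) (hp1 : 1 ≤ p) (hk1 : 1 ≤ k) :
    ‖F χ‖ ^ 2 ≤ Real.exp (4 + Real.log k + k * Real.log (k / n) + p * Real.log (p / n)) := by
  have hpk := mult_zero_add_card_supp χ
  rw [hp, hk, hn] at hpk
  have hs := sum_mult χ
  rw [← Finset.add_sum_erase univ _ (Finset.mem_univ (0 : AddChar G ℂ)), hp, hn, ← hpk] at hs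
  have hs' : ∑ ψ ∈ univ.erase (0 : AddChar G ℂ), mult χ ψ = k := by omega
  have h := norm_F_sq_le_exp χ
  rw [← Finset.add_sum_erase univ _ (Finset.mem_univ (0 : AddChar G ℂ)), hp, hn] at h
  have h1 := sum_mul_gs_le (univ.erase (0 : AddChar G ℂ)) (mult χ) k (fun ψ hψ => by
    rw [← hs']
    exact_mod_cast Finset.single_le_sum (fun _ _ => Nat.zero_le _) hψ)
  rw [← Nat.cast_sum, hs'] at h1
  have hk0 : (0 : ℝ) < k := by exact_mod_cast hk1
  have hp0 : (0 : ℝ) < p := by exact_mod_cast hp1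
  have hn0 : (0 : ℝ) < n := by rw [← hpk]; push_cast; positivity
  rw [mul_gs hk0] at h1
  rw [mul_gs hp0] at h
  refine h.trans (Real.exp_le_exp.mpr ?_)
  rw [Real.log_div hk0.ne' hn0.ne', Real.log_div hp0.ne' hn0.ne']
  have hpn : Real.log p ≤ Real.log n := Real.log_le_log hp0 (by rw [← hpk]; push_cast; linarith)
  have hnn : (n : ℝ) * Real.log n = p * Real.log n + k * Real.log n := by
    rw [← hpk]; push_cast; ring
  linarith

/-- Pointwise bound when no value is taken more than `q` times. -/
lemma norm_F_sq_le_of_mult_le (χ : G → AddChar G ℂ) (n : ℕ) (hn : Fintype.card G = n) (q : ℝ)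
    (hq1 : 1 ≤ q) (hqn : q ≤ n) (hq : (n : ℝ) / 4 ≤ q) (h : ∀ ψ, (mult χ ψ : ℝ) ≤ q) :
    ‖F χ‖ ^ 2 ≤ Real.exp (8 + 4 * Real.log n + n * Real.log (q / n)) := by
  have hF := norm_F_sq_le_exp χ
  have h1 := sum_mul_gs_le univ (mult χ) q (fun ψ _ => h ψ)
  rw [← Nat.cast_sum, sum_mult, hn] at h1
  rw [hn] at hF
  have hq0 : 0 < q := by linarith
  have hn0 : (0 : ℝ) < n := by linarith
  refine hF.trans (Real.exp_le_exp.mpr ?_)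
  rw [Real.log_div hq0.ne' hn0.ne']
  have h2 : (n : ℝ) * gs q = n / q * (2 + Real.log q) + n * Real.log q := by
    unfold gs; ring
  have hl : 0 ≤ Real.log q := Real.log_nonneg hq1
  have hl2 : Real.log q ≤ Real.log n := Real.log_le_log hq0 hqn
  have h3 : n / q ≤ 4 := by rw [div_le_iff₀ hq0]; linarith
  have h4 : n / q * (2 + Real.log q) ≤ 4 * (2 + Real.log n) :=
    mul_le_mul h3 (by linarith) (by linarith) (by norm_num)
  linarith

/-! ### Tuples with large support -/

lemma log_five_halves_le : Real.log (5 / 2) ≤ 0.9432 := by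
  have h : (5 / 2 : ℝ) = 2 * (5 / 4) := by norm_num
  rw [h, Real.log_mul (by norm_num) (by norm_num)]
  have h1 := Real.log_le_sub_one_of_pos (x := (5 / 4 : ℝ)) (by norm_num)
  have h2 := Real.log_two_lt_d9
  linarith

lemma log_three_fifths_le : Real.log (3 / 5) ≤ -(1 / 2) := by
  rw [Real.log_le_iff_le_exp (by norm_num), Real.exp_neg]
  have h : Real.exp (1 / 2) ≤ 5 / 3 := by
    apply abs_le_of_sq_le_sq' _ (by norm_num) |>.2
    rw [← Real.exp_nat_mul]
    norm_num
    have := Real.exp_one_lt_d9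
    linarith
  calc (3 / 5 : ℝ) = (5 / 3)⁻¹ := by norm_num
    _ ≤ _ := inv_anti₀ (Real.exp_pos _) h

/-- On `[1/10, 1/2]` the binary entropy lies above its chord, and the chord lies above the line on
the left; `13 / 60 = 1 / 6 + 1 / 20`. -/
lemma entropy_chord (κ : ℝ) (h1 : 1 / 10 ≤ κ) (h2 : κ ≤ 1 / 2) :
    13 / 60 + κ * Real.log (5 / 2) ≤ -(κ * Real.log κ) - (1 - κ) * Real.log (1 - κ) := by
  have hH : ∀ x : ℝ, Real.binEntropy x = -(x * Real.log x) - (1 - x) * Real.log (1 - x) := by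
    intro x
    rw [Real.binEntropy, Real.log_inv, Real.log_inv]
    ring
  have hl2 := Real.log_two_gt_d9
  have hlt2 := Real.log_two_lt_d9
  have hL := log_five_halves_le
  have hH1 : 0.3179 ≤ Real.binEntropy (1 / 10) := by
    rw [hH]
    have e1 : Real.log (1 / 10) ≤ -2.279 := by
      have : (1 / 10 : ℝ) = (4 / 5) * (1 / 2) ^ 3 := by norm_num
      rw [this, Real.log_mul (by norm_num) (by norm_num), Real.log_pow, one_div, Real.log_inv]
      have := Real.log_le_sub_one_of_pos (x := (4 / 5 : ℝ)) (by norm_num)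
      push_cast
      linarith
    have e2 : Real.log (1 - 1 / 10) ≤ -0.1 := by
      have := Real.log_le_sub_one_of_pos (x := (1 - 1 / 10 : ℝ)) (by norm_num)
      linarith
    linarith
  have hH2 : Real.binEntropy (1 / 2) = Real.log 2 := by
    rw [one_div, Real.binEntropy_two_inv]
  have hm1 : (1 / 10 : ℝ) ∈ Set.Icc (0 : ℝ) 1 := by constructor <;> norm_num
  have hm2 : (1 / 2 : ℝ) ∈ Set.Icc (0 : ℝ) 1 := by constructor <;> norm_num
  have hc := Real.strictConcave_binEntropy.concaveOn.right hm1 hm2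
    (show (0 : ℝ) ≤ (1 / 2 - κ) / (2 / 5) from div_nonneg (by linarith) (by norm_num))
    (show (0 : ℝ) ≤ (κ - 1 / 10) / (2 / 5) from div_nonneg (by linarith) (by norm_num))
    (by field_simp; ring)
  have hκ : ((1 / 2 - κ) / (2 / 5)) • (1 / 10 : ℝ) + ((κ - 1 / 10) / (2 / 5)) • (1 / 2 : ℝ) = κ := by
    simp only [smul_eq_mul]; field_simp; ring
  rw [hκ, hH2] at hc
  simp only [smul_eq_mul] at hc
  rw [← hH]
  nlinarith

/-- Pointwise bound for tuples of large support whose most popular value is `0`. The factor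
`(2 / 5) ^ k` is tuned to the weight in `noise_mass_le` at `x = 2 / 5`. -/
lemma norm_F_sq_le_tail (χ : G → AddChar G ℂ) (n k : ℕ) (hn : Fintype.card G = n)
    (hk : #(supp χ) = k) (hn20 : 20 ≤ n) (hpop : ∀ ψ, mult χ ψ ≤ mult χ 0) (hkn : n ≤ 10 * k) :
    ‖F χ‖ ^ 2 ≤ Real.exp (8 + 4 * Real.log n - n / 20 - n / 6) * (2 / 5) ^ k := by
  obtain ⟨p, hp⟩ : ∃ p, mult χ 0 = p := ⟨_, rfl⟩
  have hpk := mult_zero_add_card_supp χ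
  rw [hp, hk, hn] at hpk
  have hpk' : (p : ℝ) + k = n := by exact_mod_cast hpk
  have hn20' : (20 : ℝ) ≤ n := by exact_mod_cast hn20
  have hkn' : (n : ℝ) ≤ 10 * k := by exact_mod_cast hkn
  have hn0 : (0 : ℝ) < n := by linarith
  have hk0 : (0 : ℝ) < k := by linarith
  have hlogn : 0 ≤ Real.log n := Real.log_nonneg (by linarith)
  have hl2 := Real.log_two_gt_d9
  have hlt2 := Real.log_two_lt_d9
  have hL := log_five_halves_le
  have hL0 : 0 ≤ Real.log (5 / 2) := Real.log_nonneg (by norm_num)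
  have h25 : ((2 : ℝ) / 5) ^ k = Real.exp (-(k * Real.log (5 / 2))) := by
    rw [← mul_neg, ← Real.log_inv, Real.exp_nat_mul, Real.exp_log (by norm_num)]
    norm_num
  rw [h25, ← Real.exp_add]
  rcases le_or_gt (2 * k) n with h | h
  · -- at least half of the coordinates vanish
    have h' : 2 * (k : ℝ) ≤ n := by exact_mod_cast h
    have hp0 : (0 : ℝ) < p := by linarith
    refine (norm_F_sq_le_entropy χ n p k hn hp hk (by exact_mod_cast hp0)
      (by exact_mod_cast hk0)).trans (Real.exp_le_exp.mpr ?_)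
    have hlk : Real.log k ≤ Real.log n := Real.log_le_log hk0 (by linarith)
    have hc := entropy_chord (k / n) (by rw [le_div_iff₀ hn0]; linarith)
      (by rw [div_le_iff₀ hn0]; linarith)
    have hpn : 1 - (k : ℝ) / n = p / n := by field_simp; linarith
    rw [hpn] at hc
    have hc' := mul_le_mul_of_nonneg_left hc hn0.le
    have e1 : (n : ℝ) * (13 / 60 + k / n * Real.log (5 / 2)) =
        n / 20 + n / 6 + k * Real.log (5 / 2) := by field_simp; ring
    have e2 : (n : ℝ) * (-(k / n * Real.log (k / n)) - p / n * Real.log (p / n)) =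
        -(k * Real.log (k / n)) - p * Real.log (p / n) := by field_simp
    rw [e1, e2] at hc'
    linarith
  · have h' : (n : ℝ) < 2 * k := by exact_mod_cast h
    rcases le_or_gt ((n : ℝ) / 4) p with h4 | h4
    · refine (norm_F_sq_le_of_mult_le χ n hn p (by linarith) (by linarith) h4
        (fun ψ => by rw [← hp]; exact_mod_cast hpop ψ)).trans (Real.exp_le_exp.mpr ?_)
      have hp0 : (0 : ℝ) < p := by linarith
      have e1 : Real.log (p / n) ≤ 2 * (p / n) - 1 - Real.log 2 := by
        have := Real.log_le_sub_one_of_pos (x := (2 * (p / n) : ℝ)) (by positivity)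
        rw [Real.log_mul (by norm_num) (by positivity)] at this
        linarith
      have e2 := mul_le_mul_of_nonneg_left e1 hn0.le
      have e3 : (n : ℝ) * (2 * (p / n) - 1 - Real.log 2) = 2 * p - n - n * Real.log 2 := by
        field_simp
      have e4 : (k : ℝ) * Real.log (5 / 2) ≤ k * 0.9432 := mul_le_mul_of_nonneg_left hL hk0.le
      have e5 : (n : ℝ) * 0.6931471803 ≤ n * Real.log 2 := mul_le_mul_of_nonneg_left hl2.le hn0.le
      linarith
    · refine (norm_F_sq_le_of_mult_le χ n hn (n / 4) (by linarith) (by linarith) le_rfl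
        (fun ψ => le_trans (by rw [← hp]; exact_mod_cast hpop ψ) h4.le)).trans
          (Real.exp_le_exp.mpr ?_)
      have e1 : Real.log ((n : ℝ) / 4 / n) = -(2 * Real.log 2) := by
        have : (n : ℝ) / 4 / n = ((2 : ℝ) ^ 2)⁻¹ := by field_simp; norm_num
        rw [this, Real.log_inv, Real.log_pow]
        norm_num
      rw [e1]
      have e4 : (k : ℝ) * Real.log (5 / 2) ≤ k * 0.9432 := mul_le_mul_of_nonneg_left hL hk0.le
      have e5 : (n : ℝ) * 0.6931471803 ≤ n * Real.log 2 := mul_le_mul_of_nonneg_left hl2.le hn0.le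
      have e6 : (0 : ℝ) ≤ p := Nat.cast_nonneg p
      linarith

/-- The exponential gain `exp (-n / 20)` beats the polynomial factor `n ^ 5`. -/
lemma tail_sum_le (n : ℕ) (hn : Fintype.card G = n) (hn20 : 20 ≤ n) :
    ∑ χ : G → AddChar G ℂ with (∀ ψ, mult χ ψ ≤ mult χ 0) ∧ n ≤ 10 * #(supp χ), ‖F χ‖ ^ 4 ≤
      Real.exp 8 * 120 * 20 ^ 5 / n := by
  have hn20' : (20 : ℝ) ≤ n := by exact_mod_cast hn20
  have hn0 : (0 : ℝ) < n := by linarith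
  set A := Real.exp (8 + 4 * Real.log n - n / 20 - n / 6) with hA
  have h1 : ∑ χ : G → AddChar G ℂ with (∀ ψ, mult χ ψ ≤ mult χ 0) ∧ n ≤ 10 * #(supp χ),
      ‖F χ‖ ^ 4 ≤ A * ∑ χ : G → AddChar G ℂ, (2 / 5) ^ #(supp χ) * ‖F χ‖ ^ 2 := by
    rw [Finset.mul_sum]
    refine le_trans (Finset.sum_le_sum fun χ hχ => ?_)
      (Finset.sum_le_sum_of_subset_of_nonneg (Finset.subset_univ _) fun _ _ _ => by positivity)
    obtain ⟨hp, hk⟩ := (Finset.mem_filter.mp hχ).2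
    have h := norm_F_sq_le_tail χ n _ hn rfl hn20 hp hk
    calc ‖F χ‖ ^ 4 = ‖F χ‖ ^ 2 * ‖F χ‖ ^ 2 := by ring
      _ ≤ _ := mul_le_mul_of_nonneg_right h (by positivity)
      _ = _ := by ring
  have h2 := noise_mass_le (G := G) (2 / 5) (by norm_num) (by norm_num)
  rw [hn] at h2
  have h3 : (1 - 2 / 5 : ℝ) ^ n * Real.exp (n * (2 / 5 / (1 - 2 / 5))) ≤ Real.exp (n / 6) := by
    have e1 : (1 - 2 / 5 : ℝ) ^ n = Real.exp (n * Real.log (3 / 5)) := by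
      rw [Real.exp_nat_mul, Real.exp_log (by norm_num)]
      norm_num
    rw [e1, ← Real.exp_add]
    apply Real.exp_le_exp.mpr
    have := mul_le_mul_of_nonneg_left log_three_fifths_le hn0.le
    linarith
  refine h1.trans ((mul_le_mul_of_nonneg_left (h2.trans h3) (Real.exp_pos _).le).trans ?_)
  rw [← Real.exp_add, le_div_iff₀ hn0]
  have h4 : Real.exp (8 + 4 * Real.log n - n / 20 - n / 6 + n / 6) =
      Real.exp 8 * n ^ 4 / Real.exp (n / 20) := by
    have : (n : ℝ) ^ 4 = Real.exp (4 * Real.log n) := by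
      have := Real.exp_nat_mul (Real.log n) 4
      rw [Real.exp_log hn0] at this
      exact_mod_cast this.symm
    rw [this, ← Real.exp_add, ← Real.exp_sub]
    ring_nf
  rw [h4, div_mul_eq_mul_div, div_le_iff₀ (Real.exp_pos _)]
  have h5 := Real.pow_div_factorial_le_exp ((n : ℝ) / 20) (by positivity) 5
  have h6 : ((n : ℝ) / 20) ^ 5 / ((5 ! : ℕ) : ℝ) * (120 * 20 ^ 5) = n ^ 5 := by
    have : ((5 ! : ℕ) : ℝ) = 120 := by norm_num [Nat.factorial]
    rw [this]
    field_simp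
  have h7 := mul_le_mul_of_nonneg_right h5 (by norm_num : (0 : ℝ) ≤ 120 * 20 ^ 5)
  rw [h6] at h7
  calc Real.exp 8 * (n : ℝ) ^ 4 * n = Real.exp 8 * n ^ 5 := by ring
    _ ≤ Real.exp 8 * (Real.exp (n / 20) * (120 * 20 ^ 5)) :=
      mul_le_mul_of_nonneg_left h7 (Real.exp_pos _).le
    _ = _ := by ring

/-! ### Tuples with small support -/

/-- For support size `k`, `noise_mass_le` is applied at `x = √(k / n) / 2`. -/
lemma level_sum_le (n k : ℕ) (hn : Fintype.card G = n) (hk2 : 2 ≤ k) (hkn : 10 * k ≤ n) :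
    ∑ χ : G → AddChar G ℂ with #(supp χ) = k, ‖F χ‖ ^ 4 ≤
      Real.exp 4 * 8 * (k ^ 2 * (9 / 10) ^ (k - 2)) / n := by
  have hk2' : (2 : ℝ) ≤ k := by exact_mod_cast hk2
  have hkn' : 10 * (k : ℝ) ≤ n := by exact_mod_cast hkn
  have hk0 : (0 : ℝ) < k := by linarith
  have hn0 : (0 : ℝ) < n := by linarith
  set κ : ℝ := k / n with hκ
  have hκ0 : 0 < κ := by positivity
  have hκ1 : κ ≤ 1 / 10 := by rw [hκ, div_le_iff₀ hn0]; linarith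
  set s := Real.sqrt κ with hs
  have hs0 : 0 < s := Real.sqrt_pos.mpr hκ0
  have hss : s ^ 2 = κ := Real.sq_sqrt hκ0.le
  have hs1 : s ≤ 1 / 3 := by
    apply (abs_le_of_sq_le_sq' _ (by norm_num)).2
    rw [hss]; linarith
  have hnκ : n * κ = k := by rw [hκ]; field_simp
  have hpt : ∀ χ : G → AddChar G ℂ, #(supp χ) = k →
      ‖F χ‖ ^ 4 ≤ Real.exp 4 * k * (2 * s) ^ k * ((s / 2) ^ #(supp χ) * ‖F χ‖ ^ 2) := by
    intro χ hχ
    obtain ⟨p, hp⟩ : ∃ p, mult χ 0 = p := ⟨_, rfl⟩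
    have hpk := mult_zero_add_card_supp χ
    rw [hp, hχ, hn] at hpk
    have hp1 : 1 ≤ p := by omega
    have hp0 : (0 : ℝ) < p := by exact_mod_cast hp1
    have h := norm_F_sq_le_entropy χ n p k hn hp hχ hp1 (by omega)
    have hlog : (p : ℝ) * Real.log (p / n) ≤ 0 := by
      refine mul_nonpos_of_nonneg_of_nonpos hp0.le (Real.log_nonpos (by positivity) ?_)
      rw [div_le_one hn0]
      exact_mod_cast (by omega : p ≤ n)
    have h1 : ‖F χ‖ ^ 2 ≤ Real.exp 4 * k * κ ^ k := by
      refine h.trans ?_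
      have : Real.exp 4 * k * κ ^ k = Real.exp (4 + Real.log k + k * Real.log κ) := by
        rw [Real.exp_add, Real.exp_add, Real.exp_log hk0, Real.exp_nat_mul, Real.exp_log hκ0]
      rw [this]
      exact Real.exp_le_exp.mpr (by linarith)
    have h2 : κ ^ k = (2 * s) ^ k * (s / 2) ^ k := by
      rw [← mul_pow, ← hss]
      congr 1
      ring
    calc ‖F χ‖ ^ 4 = ‖F χ‖ ^ 2 * ‖F χ‖ ^ 2 := by ring
      _ ≤ Real.exp 4 * k * κ ^ k * ‖F χ‖ ^ 2 := mul_le_mul_of_nonneg_right h1 (by positivity)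
      _ = _ := by rw [h2, hχ]; ring
  have hsum : ∑ χ : G → AddChar G ℂ with #(supp χ) = k, ‖F χ‖ ^ 4 ≤
      Real.exp 4 * k * (2 * s) ^ k *
        ∑ χ : G → AddChar G ℂ, (s / 2) ^ #(supp χ) * ‖F χ‖ ^ 2 := by
    rw [Finset.mul_sum]
    refine le_trans (Finset.sum_le_sum fun χ hχ => hpt χ (Finset.mem_filter.mp hχ).2) ?_
    exact Finset.sum_le_sum_of_subset_of_nonneg (Finset.subset_univ _) fun _ _ _ => by positivity
  have hnoise := noise_mass_le (G := G) (s / 2) (by positivity) (by linarith)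
  rw [hn] at hnoise
  have hM : (1 - s / 2) ^ n * Real.exp (n * (s / 2 / (1 - s / 2))) ≤ Real.exp (3 / 10) ^ k := by
    have h1 : (1 - s / 2) ^ n ≤ Real.exp (n * (-(s / 2))) := by
      rw [Real.exp_nat_mul]
      refine pow_le_pow_left₀ (by linarith) ?_ n
      have := Real.add_one_le_exp (-(s / 2))
      linarith
    refine (mul_le_mul_of_nonneg_right h1 (Real.exp_pos _).le).trans ?_
    rw [← Real.exp_add, ← Real.exp_nat_mul]
    apply Real.exp_le_exp.mpr
    have hd : 0 < 1 - s / 2 := by linarith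
    have h2 : (n : ℝ) * (-(s / 2)) + n * (s / 2 / (1 - s / 2)) = (k / 4) / (1 - s / 2) := by
      rw [← hnκ, ← hss]
      have : 2 - s ≠ 0 := by linarith
      field_simp
      ring
    rw [h2, div_le_iff₀ hd]
    nlinarith
  have he : Real.exp (3 / 10) ^ 2 ≤ 2 := by
    rw [← Real.exp_nat_mul, ← Real.le_log_iff_exp_le (by norm_num)]
    have := Real.log_two_gt_d9
    norm_num
    linarith
  set β := 2 * s * Real.exp (3 / 10) with hβ
  have hβ0 : 0 ≤ β := by positivity
  have hβ2 : β ^ 2 ≤ 8 * κ := by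
    have : β ^ 2 = 4 * κ * Real.exp (3 / 10) ^ 2 := by rw [hβ, ← hss]; ring
    rw [this]
    nlinarith
  have hβ1 : β ≤ 9 / 10 := by
    apply (abs_le_of_sq_le_sq' _ (by norm_num)).2
    linarith
  have hβk : β ^ k ≤ 8 * κ * (9 / 10) ^ (k - 2) := by
    have : β ^ k = β ^ 2 * β ^ (k - 2) := by rw [← pow_add]; congr 1; omega
    rw [this]
    exact mul_le_mul hβ2 (pow_le_pow_left₀ hβ0 hβ1 _) (by positivity) (by positivity)
  calc _ ≤ Real.exp 4 * k * (2 * s) ^ k * Real.exp (3 / 10) ^ k :=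
        hsum.trans (mul_le_mul_of_nonneg_left (hnoise.trans hM) (by positivity))
    _ = Real.exp 4 * k * β ^ k := by rw [hβ, mul_pow]; ring
    _ ≤ Real.exp 4 * k * (8 * κ * (9 / 10) ^ (k - 2)) :=
        mul_le_mul_of_nonneg_left hβk (by positivity)
    _ = _ := by rw [hκ]; ring

lemma exists_sum_sq_geometric_le :
    ∃ T : ℝ, 0 ≤ T ∧ ∀ s : Finset ℕ, ∑ k ∈ s, (k : ℝ) ^ 2 * (9 / 10) ^ k ≤ T := by
  have hs : Summable fun k : ℕ => (k : ℝ) ^ 2 * (9 / 10 : ℝ) ^ k :=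
    summable_pow_mul_geometric_of_norm_lt_one 2 (by norm_num)
  exact ⟨∑' k : ℕ, (k : ℝ) ^ 2 * (9 / 10 : ℝ) ^ k, tsum_nonneg fun k => by positivity,
    fun s => hs.sum_le_tsum s fun _ _ => by positivity⟩

lemma head_sum_le (T : ℝ) (hT : ∀ s : Finset ℕ, ∑ k ∈ s, (k : ℝ) ^ 2 * (9 / 10) ^ k ≤ T)
    (n : ℕ) (hn : Fintype.card G = n) :
    ∑ χ : G → AddChar G ℂ with 2 ≤ #(supp χ) ∧ 10 * #(supp χ) ≤ n, ‖F χ‖ ^ 4 ≤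
      Real.exp 4 * 10 * T / n := by
  have hn0 : (0 : ℝ) < n := by rw [← hn]; exact_mod_cast Fintype.card_pos
  set I : Finset ℕ := {k ∈ range (n + 1) | 2 ≤ k ∧ 10 * k ≤ n} with hI
  have hmaps : ∀ χ ∈ ({χ | 2 ≤ #(supp χ) ∧ 10 * #(supp χ) ≤ n} : Finset (G → AddChar G ℂ)),
      #(supp χ) ∈ I := by
    intro χ hχ
    have h := (Finset.mem_filter.mp hχ).2
    rw [hI, Finset.mem_filter, Finset.mem_range]
    exact ⟨by omega, h⟩
  rw [← Finset.sum_fiberwise_of_maps_to hmaps]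
  calc _ ≤ ∑ k ∈ I, Real.exp 4 * 10 / n * ((k : ℝ) ^ 2 * (9 / 10) ^ k) := by
        refine Finset.sum_le_sum fun k hk => ?_
        obtain ⟨h2, h10⟩ := (Finset.mem_filter.mp hk).2
        have h := level_sum_le (G := G) n k hn h2 h10
        refine le_trans (Finset.sum_le_sum_of_subset_of_nonneg ?_ fun _ _ _ => by positivity)
          (h.trans ?_)
        · rw [Finset.filter_filter]
          exact Finset.monotone_filter_right _ fun χ _ hχ => hχ.2
        · have e : ((9 : ℝ) / 10) ^ k = (9 / 10) ^ (k - 2) * (81 / 100) := by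
            conv_lhs => rw [show k = k - 2 + 2 by omega, pow_add]
            norm_num
          rw [e, div_mul_eq_mul_div]
          refine div_le_div_of_nonneg_right ?_ hn0.le
          have : 0 ≤ Real.exp 4 * ((k : ℝ) ^ 2 * (9 / 10) ^ (k - 2)) := by positivity
          linarith
    _ = Real.exp 4 * 10 / n * ∑ k ∈ I, ((k : ℝ) ^ 2 * (9 / 10) ^ k) := by rw [Finset.mul_sum]
    _ ≤ Real.exp 4 * 10 / n * T := mul_le_mul_of_nonneg_left (hT I) (by positivity)
    _ = _ := by ring

lemma norm_F_le_one (χ : G → AddChar G ℂ) : ‖F χ‖ ≤ 1 := by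
  have hf : (0 : ℝ) < ((Fintype.card G)! : ℝ) := by positivity
  rw [F, norm_div, Complex.norm_natCast, div_le_one hf]
  refine (norm_sum_le _ _).trans ?_
  have h : ∀ π : Equiv.Perm G, ‖pch χ π‖ = 1 := by
    intro π
    rw [pch, norm_prod]
    exact Finset.prod_eq_one fun g _ => AddChar.norm_apply _ _
  simp [h, Fintype.card_perm]

/-- Crude bound, used only for groups of bounded order. -/
lemma R_le_exp : R G ≤ Real.exp (Fintype.card G) := by
  have h := sum_sq_supported (univ : Finset G)
  have h1 : R G ≤ ∑ χ : G → AddChar G ℂ with ∀ g, g ∉ (univ : Finset G) → χ g = 0, ‖F χ‖ ^ 2 := by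
    unfold R
    refine le_trans (Finset.sum_le_sum fun χ _ => pow_le_pow_of_le_one (norm_nonneg _)
      (norm_F_le_one χ) (show 2 ≤ 4 by norm_num)) ?_
    refine Finset.sum_le_sum_of_subset_of_nonneg ?_ fun _ _ _ => by positivity
    intro χ _
    simp
  rw [h, Finset.card_univ, Nat.sub_self, Nat.factorial_zero, Nat.cast_one, mul_one_div] at h1
  exact h1.trans (Real.pow_div_factorial_le_exp _ (Nat.cast_nonneg _) _)

/-- The fourth-moment sum is `O(1 / n)`, uniformly over groups of order `n`. -/
lemma exists_R_le : ∃ C : ℝ, 0 ≤ C ∧ ∀ (G : Type) [AddCommGroup G] [Fintype G],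
    R G ≤ C / Fintype.card G := by
  obtain ⟨T, hT0, hT⟩ := exists_sum_sq_geometric_le
  refine ⟨Real.exp 4 * 10 * T + Real.exp 8 * 120 * 20 ^ 5 + 20 * Real.exp 20, by positivity, ?_⟩
  intro G _ _
  obtain ⟨n, hn⟩ : ∃ n, Fintype.card G = n := ⟨_, rfl⟩
  rw [hn]
  have hn0 : (0 : ℝ) < n := by rw [← hn]; exact_mod_cast Fintype.card_pos
  rcases le_or_gt 20 n with h20 | h20
  · have h1 := head_sum_le (G := G) T hT n hn
    have h2 := tail_sum_le (G := G) n hn h20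
    have h3 : R G ≤
        ∑ χ : G → AddChar G ℂ with 2 ≤ #(supp χ) ∧ 10 * #(supp χ) ≤ n, ‖F χ‖ ^ 4 +
        ∑ χ : G → AddChar G ℂ with (∀ ψ, mult χ ψ ≤ mult χ 0) ∧ n ≤ 10 * #(supp χ),
          ‖F χ‖ ^ 4 := by
      unfold R
      rw [Finset.sum_filter, Finset.sum_filter, Finset.sum_filter, ← Finset.sum_add_distrib]
      refine Finset.sum_le_sum fun χ _ => ?_
      have hnn : 0 ≤ ‖F χ‖ ^ 4 := by positivity
      by_cases hF : F χ = 0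
      · simp [hF]
      by_cases hp : ∀ ψ, mult χ ψ ≤ mult χ 0
      · by_cases h0 : χ = 0
        · rw [if_neg (by tauto)]
          exact add_nonneg (by split_ifs <;> positivity) (by split_ifs <;> positivity)
        · have hs := two_le_card_supp h0 hF
          rw [if_pos ⟨hp, h0⟩]
          rcases le_total (10 * #(supp χ)) n with h | h
          · rw [if_pos ⟨hs, h⟩]
            have : 0 ≤ if (∀ ψ, mult χ ψ ≤ mult χ 0) ∧ n ≤ 10 * #(supp χ) then ‖F χ‖ ^ 4 else 0 := by
              split_ifs <;> positivity
            linarith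
          · rw [if_pos (c := (∀ ψ, mult χ ψ ≤ mult χ 0) ∧ n ≤ 10 * #(supp χ)) ⟨hp, h⟩]
            have : 0 ≤ if 2 ≤ #(supp χ) ∧ 10 * #(supp χ) ≤ n then ‖F χ‖ ^ 4 else 0 := by
              split_ifs <;> positivity
            linarith
      · rw [if_neg (by tauto)]
        exact add_nonneg (by split_ifs <;> positivity) (by split_ifs <;> positivity)
    have h4 : 0 ≤ 20 * Real.exp 20 / (n : ℝ) := by positivity
    rw [add_div, add_div]
    linarith
  · have h1 := R_le_exp (G := G)
    rw [hn] at h1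
    have hn20 : (n : ℝ) ≤ 20 := by exact_mod_cast h20.le
    have h2 : Real.exp n ≤ Real.exp 20 := Real.exp_le_exp.mpr hn20
    have h3 : 0 ≤ Real.exp 4 * 10 * T + Real.exp 8 * 120 * 20 ^ 5 := by positivity
    rw [le_div_iff₀ hn0]
    have h4 : R G * n ≤ Real.exp 20 * 20 :=
      mul_le_mul (h1.trans h2) hn20 hn0.le (Real.exp_pos _).le
    linarith

/-! ### From the fourth moment to the theorem -/

lemma injInd_eq {m : ℕ} (x : Fin m → G) :
    injInd x = if Function.Injective x then 1 else 0 := by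
  unfold injInd
  congr

lemma sum_pch_right {ι : Type} [Fintype ι] [DecidableEq ι] (χ : ι → AddChar G ℂ) :
    ∑ x : ι → G, pch χ x = if χ = 0 then (Fintype.card G : ℂ) ^ Fintype.card ι else 0 := by
  have h := (Finset.prod_univ_sum (fun _ : ι => (univ : Finset G)) (fun i g => χ i g)).symm
  rw [Fintype.piFinset_univ] at h
  unfold pch
  rw [h]
  simp only [AddChar.sum_eq_ite]
  split_ifs with h0
  · simp [h0]
  · obtain ⟨i, hi⟩ := Function.ne_iff.mp h0
    exact Finset.prod_eq_zero (Finset.mem_univ i) (if_neg hi)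

/-- The normalised convolution square `h`, so that the theorem bounds `‖h - 1‖₂`. -/
def conv (G : Type) [AddCommGroup G] [Fintype G] (m : ℕ) (x : Fin m → G) : ℝ :=
  ((Fintype.card G : ℝ) ^ m * ((Fintype.card G - m)! : ℝ) / ((Fintype.card G)! : ℝ)) ^ 2 *
    ((1 / (Fintype.card G : ℝ) ^ m) * ∑ y : Fin m → G, injInd y * injInd (x - y))

/-- The Fourier coefficients of `h` are the squares of those of a uniform injection. -/
lemma sum_conv_mul_pch {m : ℕ} (e : Fin m ↪ G) (χ : Fin m → AddChar G ℂ) :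
    ∑ x, (conv G m x : ℂ) * pch χ x =
      (Fintype.card G : ℂ) ^ m * F (Function.extend e χ 0) ^ 2 := by
  have hn : (Fintype.card G : ℂ) ≠ 0 := by exact_mod_cast Fintype.card_ne_zero
  have hf : ((Fintype.card G)! : ℂ) ≠ 0 := by exact_mod_cast Nat.factorial_ne_zero _
  have hA : ∑ y : Fin m → G with Function.Injective y, pch χ y =
      ∑ y : Fin m → G, (injInd y : ℂ) * pch χ y := by
    rw [Finset.sum_filter]
    refine Finset.sum_congr rfl fun y _ => ?_
    rw [injInd_eq]
    split_ifs <;> simp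
  have hconv : ∑ x : Fin m → G, (∑ y : Fin m → G, (injInd y : ℂ) * injInd (x - y)) * pch χ x =
      (∑ y : Fin m → G, (injInd y : ℂ) * pch χ y) ^ 2 := by
    rw [sq, Finset.sum_mul_sum]
    simp only [Finset.sum_mul]
    rw [Finset.sum_comm]
    refine Finset.sum_congr rfl fun y _ => ?_
    refine Fintype.sum_equiv (Equiv.subRight y) _ _ fun x => ?_
    have : pch χ x = pch χ y * pch χ (x - y) := by rw [← pch_add]; congr 1; abel
    rw [this]
    simp only [Equiv.subRight_apply]
    ring
  rw [F_extend, hA, Fintype.card_fin, mul_pow, ← hconv]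
  simp only [conv]
  push_cast
  rw [Finset.mul_sum, Finset.mul_sum]
  refine Finset.sum_congr rfl fun x _ => ?_
  field_simp

lemma extend_eq_zero_iff {m : ℕ} (e : Fin m ↪ G) (χ : Fin m → AddChar G ℂ) :
    Function.extend e χ 0 = 0 ↔ χ = 0 := by
  constructor
  · intro h
    funext i
    have := congrFun h (e i)
    rwa [e.injective.extend_apply] at this
  · rintro rfl
    funext g
    simp [Function.extend]

/-- Parseval: the squared `L²` distance is the fourth-moment sum. -/
lemma l2_eq_S {m : ℕ} (e : Fin m ↪ G) :
    (1 / (Fintype.card G : ℝ) ^ m) * ∑ x : Fin m → G, (conv G m x - 1) ^ 2 =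
      S (univ.map e) := by
  have hn : (0 : ℝ) < Fintype.card G := by exact_mod_cast Fintype.card_pos
  have hpar := parseval (G := G) (ι := Fin m) (fun x => ((conv G m x - 1 : ℝ) : ℂ))
  have hcoef : ∀ χ : Fin m → AddChar G ℂ, ‖∑ x, ((conv G m x - 1 : ℝ) : ℂ) * pch χ x‖ ^ 2 =
      ((Fintype.card G : ℝ) ^ m) ^ 2 *
        (if Function.extend e χ 0 = 0 then 0 else ‖F (Function.extend e χ 0)‖ ^ 4) := by
    intro χ
    have h1 : ∑ x, ((conv G m x - 1 : ℝ) : ℂ) * pch χ x =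
        (Fintype.card G : ℂ) ^ m * F (Function.extend e χ 0) ^ 2 - ∑ x, pch χ x := by
      rw [← sum_conv_mul_pch, ← Finset.sum_sub_distrib]
      refine Finset.sum_congr rfl fun x _ => ?_
      push_cast
      ring
    rw [h1, sum_pch_right, Fintype.card_fin]
    by_cases h : χ = 0
    · rw [if_pos h, if_pos ((extend_eq_zero_iff e χ).mpr h), (extend_eq_zero_iff e χ).mpr h, F_zero]
      simp
    · rw [if_neg h, if_neg (mt (extend_eq_zero_iff e χ).mp h), sub_zero, norm_mul, norm_pow,
        norm_pow, Complex.norm_natCast]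
      ring
  simp only [hcoef] at hpar
  rw [← Finset.mul_sum, sum_extend e (fun χ => if χ = 0 then 0 else ‖F χ‖ ^ 4),
    Fintype.card_fin] at hpar
  have hS : S (univ.map e) = ∑ χ : G → AddChar G ℂ with ∀ g, g ∉ univ.map e → χ g = 0,
      (if χ = 0 then 0 else ‖F χ‖ ^ 4) := by
    rw [S, ← Finset.filter_filter, Finset.sum_filter _ (fun χ => ‖F χ‖ ^ 4)]
    refine Finset.sum_congr rfl fun χ _ => ?_
    by_cases h : χ = 0 <;> simp [h]
  simp only [Complex.norm_real, Real.norm_eq_abs, sq_abs] at hpar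
  rw [hS, one_div, inv_mul_eq_iff_eq_mul₀ (by positivity)]
  refine mul_left_cancel₀ (pow_ne_zero m hn.ne') ?_
  rw [← hpar]
  ring

lemma S_eq_zero_of_card_eq_zero (J : Finset G) (h : #J = 0) : S J = 0 := by
  rw [Finset.card_eq_zero] at h
  subst h
  refine Finset.sum_eq_zero fun χ hχ => ?_
  have h := (Finset.mem_filter.mp hχ).2
  exact absurd (funext fun g => h.1 g (Finset.notMem_empty g)) h.2

lemma sqrt_l2_le (C : ℝ) (hC : 0 ≤ C) (hR : R G ≤ C / Fintype.card G) (m : ℕ)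
    (hm : m < Fintype.card G) :
    Real.sqrt ((1 / (Fintype.card G : ℝ) ^ m) * ∑ x : Fin m → G, (conv G m x - 1) ^ 2) ≤
      2 * Real.sqrt C * m / (Fintype.card G : ℝ) ^ ((3 : ℝ) / 2) := by
  obtain ⟨e⟩ : Nonempty (Fin m ↪ G) :=
    Function.Embedding.nonempty_of_card_le (by rw [Fintype.card_fin]; exact hm.le)
  rw [l2_eq_S e]
  set n := Fintype.card G with hn
  have hn0 : (0 : ℝ) < n := by exact_mod_cast (Nat.zero_le m).trans_lt hm
  have hJ : #(univ.map e) = m := by rw [Finset.card_map, Finset.card_univ, Fintype.card_fin]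
  refine Real.sqrt_le_iff.mpr ⟨by positivity, ?_⟩
  have hpow : ((n : ℝ) ^ ((3 : ℝ) / 2)) ^ 2 = n ^ 3 := by
    rw [← Real.rpow_natCast, ← Real.rpow_mul hn0.le, ← Real.rpow_natCast]
    norm_num
  have hrhs : (2 * Real.sqrt C * m / (n : ℝ) ^ ((3 : ℝ) / 2)) ^ 2 = 4 * C * m ^ 2 / n ^ 3 := by
    rw [div_pow, hpow, mul_pow, mul_pow, Real.sq_sqrt hC]
    norm_num
  rw [hrhs]
  rcases Nat.eq_zero_or_pos m with h0 | h0
  · rw [S_eq_zero_of_card_eq_zero _ (hJ.trans h0)]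
    positivity
  have h1 := S_le (univ.map e) (by rw [hJ]; exact hm)
  rw [hJ, ← hn] at h1
  have hn2 : (2 : ℝ) ≤ n := by exact_mod_cast (by omega : 2 ≤ n)
  have h2 : S (univ.map e) * ((n : ℝ) ^ 2 / 4) ≤ S (univ.map e) * ((n : ℝ) - 1) ^ 2 :=
    mul_le_mul_of_nonneg_left (by nlinarith) (S_nonneg _)
  have h3 : (m : ℝ) ^ 2 * R G ≤ m ^ 2 * (C / n) := mul_le_mul_of_nonneg_left hR (by positivity)
  have h4 := (h2.trans h1).trans h3
  rw [le_div_iff₀ (by positivity)]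
  have h5 := mul_le_mul_of_nonneg_right h4 (by positivity : (0 : ℝ) ≤ 4 * n)
  have h6 : (m : ℝ) ^ 2 * (C / n) * (4 * n) = 4 * C * m ^ 2 := by field_simp
  rw [h6] at h5
  linarith

lemma natCard_injective (m : ℕ) (hm : m ≤ Fintype.card G) :
    (Nat.card {q : Fin m → G // Function.Injective q} : ℝ) =
      ((Fintype.card G)! : ℝ) / ((Fintype.card G - m)! : ℝ) := by
  rw [Nat.card_eq_fintype_card, Fintype.card_subtype, card_filter_injective, Fintype.card_fin,
    eq_div_iff (by positivity), mul_comm]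
  exact_mod_cast Nat.factorial_mul_descFactorial hm

lemma natCard_pairs {m : ℕ} (x : Fin m → G) :
    (Nat.card {p : (Fin m → G) × (Fin m → G) //
        Function.Injective p.1 ∧ Function.Injective p.2 ∧ p.1 + p.2 = x} : ℝ) =
      ∑ y : Fin m → G, injInd y * injInd (x - y) := by
  have h1 : Nat.card {p : (Fin m → G) × (Fin m → G) //
      Function.Injective p.1 ∧ Function.Injective p.2 ∧ p.1 + p.2 = x} =
      #{y : Fin m → G | Function.Injective y ∧ Function.Injective (x - y)} := by
    rw [← Fintype.card_subtype, ← Nat.card_eq_fintype_card]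
    refine Nat.card_congr
      { toFun := fun p => ⟨p.1.1, p.2.1, by
          rw [sub_eq_of_eq_add' p.2.2.2.symm]
          exact p.2.2.1⟩
        invFun := fun y => ⟨(y.1, x - y.1), y.2.1, y.2.2, by simp⟩
        left_inv := fun p => by
          ext1
          exact Prod.ext rfl (sub_eq_of_eq_add' p.2.2.2.symm)
        right_inv := fun y => rfl }
  rw [h1, Finset.card_filter, Nat.cast_sum]
  refine Finset.sum_congr rfl fun y _ => ?_
  rw [injInd_eq, injInd_eq]
  by_cases ha : Function.Injective y <;> by_cases hb : Function.Injective (x - y) <;> simp [ha, hb]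

/-- Cauchy–Schwarz: total variation is at most half the `L²` distance. -/
lemma tv_le_sqrt_l2 (m : ℕ) (hm : m < Fintype.card G) :
    (1 / 2) * ∑ x : Fin m → G,
        |(Nat.card {p : (Fin m → G) × (Fin m → G) //
            Function.Injective p.1 ∧ Function.Injective p.2 ∧ p.1 + p.2 = x} : ℝ) /
          (Nat.card {q : Fin m → G // Function.Injective q} : ℝ) ^ 2 -
            1 / (Fintype.card G : ℝ) ^ m| ≤
      Real.sqrt ((1 / (Fintype.card G : ℝ) ^ m) * ∑ x : Fin m → G, (conv G m x - 1) ^ 2) := by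
  have hn : (0 : ℝ) < Fintype.card G := by exact_mod_cast Fintype.card_pos
  have hN : (0 : ℝ) < (Fintype.card G : ℝ) ^ m := by positivity
  have h1 : ∀ x : Fin m → G,
      |(Nat.card {p : (Fin m → G) × (Fin m → G) //
            Function.Injective p.1 ∧ Function.Injective p.2 ∧ p.1 + p.2 = x} : ℝ) /
          (Nat.card {q : Fin m → G // Function.Injective q} : ℝ) ^ 2 -
            1 / (Fintype.card G : ℝ) ^ m| = (1 / (Fintype.card G : ℝ) ^ m) * |conv G m x - 1| := by
    intro x
    rw [natCard_pairs, natCard_injective m hm.le]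
    have h2 : |conv G m x - 1| * (1 / (Fintype.card G : ℝ) ^ m) =
        |(conv G m x - 1) * (1 / (Fintype.card G : ℝ) ^ m)| := by
      rw [abs_mul, abs_of_pos (show (0 : ℝ) < 1 / (Fintype.card G : ℝ) ^ m by positivity)]
    rw [mul_comm, h2]
    congr 1
    have e1 : ((Fintype.card G)! : ℝ) ≠ 0 := by positivity
    have e2 : ((Fintype.card G - m)! : ℝ) ≠ 0 := by positivity
    unfold conv
    field_simp
  simp only [h1]
  rw [← Finset.mul_sum]
  have hCS := sq_sum_le_card_mul_sum_sq (s := (univ : Finset (Fin m → G)))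
    (f := fun x => |conv G m x - 1|)
  simp only [sq_abs, Finset.card_univ, Fintype.card_fun, Fintype.card_fin, Nat.cast_pow] at hCS
  set A := ∑ x : Fin m → G, |conv G m x - 1|
  set B := ∑ x : Fin m → G, (conv G m x - 1) ^ 2
  have hA : 0 ≤ A := Finset.sum_nonneg fun _ _ => abs_nonneg _
  have h3 : (1 / (Fintype.card G : ℝ) ^ m) * A ≤
      Real.sqrt ((1 / (Fintype.card G : ℝ) ^ m) * B) := by
    apply Real.le_sqrt_of_sq_le
    rw [mul_pow, one_div, inv_pow, inv_mul_le_iff₀ (by positivity)]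
    refine hCS.trans (le_of_eq ?_)
    field_simp
  have h4 : 0 ≤ (1 / (Fintype.card G : ℝ) ^ m) * A := by positivity
  linarith

end InjSum

end

/-- There is an absolute constant `C` such that for every finite abelian group `G` of order
`n` and every `m < n`, with `S_m ⊆ G^m` the set of injective tuples:
`‖(n^m (n−m)!/n!)² · 1_{S_m} * 1_{S_m} − 1‖₂ ≤ C m / n^{3/2}`, where
`(g*h)(x) = n^{-m} Σ_y g(y) h(x−y)` and `‖g‖₂ = (n^{-m} Σ_x |g(x)|²)^{1/2}`; consequently
the total variation distance between the distribution of a sum `π₁ + π₂` of two independent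
uniform random injections and the uniform distribution on `G^m` is at most `C m / n^{3/2}`. -/
theorem sum_of_two_injections_L2_flat :
    ∃ C : ℝ, ∀ (n m : ℕ) (G : Type) [AddCommGroup G] [Fintype G],
      Fintype.card G = n → m < n →
      (Real.sqrt ((1 / (n : ℝ) ^ m) * ∑ x : Fin m → G,
          (((n : ℝ) ^ m * ((n - m).factorial : ℝ) / (n.factorial : ℝ)) ^ 2 *
              ((1 / (n : ℝ) ^ m) * ∑ y : Fin m → G, injInd y * injInd (x - y)) - 1) ^ 2)
        ≤ C * m / (n : ℝ) ^ ((3 : ℝ) / 2)) ∧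
      ((1 / 2) * ∑ x : Fin m → G,
          |(Nat.card {p : (Fin m → G) × (Fin m → G) //
              Function.Injective p.1 ∧ Function.Injective p.2 ∧ p.1 + p.2 = x} : ℝ) /
            (Nat.card {q : Fin m → G // Function.Injective q} : ℝ) ^ 2 - 1 / (n : ℝ) ^ m|
        ≤ C * m / (n : ℝ) ^ ((3 : ℝ) / 2)) := by
  obtain ⟨C, hC, hR⟩ := InjSum.exists_R_le
  refine ⟨2 * Real.sqrt C, fun n m G _ _ hn hm => ?_⟩
  subst hn
  have h := InjSum.sqrt_l2_le C hC (hR G) m hm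
  exact ⟨h, (InjSum.tv_le_sqrt_l2 m hm).trans h⟩
end

section
/- There is an absolute constant C and an N such that the following holds for all n ≥ N. Let a₁,…,a_n be nonnegative integers with a₁ + ⋯ + a_n = n, and set H = (1/n)·log( n!/(a₁!⋯a_n!) ). If H ≥ (log n)^{−100}, then | H − Σ_{i : a_i > 0} (a_i/n)·log(n/a_i) | ≤ C·(log log n / log n)·H. -/
/-!
Write `L = log n`, `h = log (n! / ∏ aᵢ!) = n H` and `S = ∑ aᵢ log (n / aᵢ)`. The elementary Stirling
bounds `a log a - a ≤ log a! ≤ a log a - a + 1 + log a` for `a ≥ 1` (`log_factorial_lower`,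
`log_factorial_upper`) give `|h - S| ≤ (1 + L) + ∑_{aᵢ > 0} (1 + log aᵢ)`; the linear terms cancel
because `∑ aᵢ = n`.

Each summand satisfies `1 + log a ≤ (2 / L) a log (n / a) + (a / √n) (1 + L)` (`stirling_error_le`):
the first term suffices when `a ≤ √n`, the second when `a > √n`. Summing,
`|h - S| ≤ (2 / L) S + (√n + 1) (1 + L)`. The last term is at most `n / (2 L ^ 101) ≤ h / (2 L)`
for large `n`, by the lower bound on `H`, and replacing `S` by `h + |h - S|` and absorbing yields
`|h - S| ≤ 5 h / L`, which is stronger than required since `log L ≥ 1`.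
-/

open Finset

lemma log_factorial_lower (a : ℕ) (ha : 1 ≤ a) :
    (a : ℝ) * Real.log a - a ≤ Real.log (a.factorial : ℝ) := by
  induction a, ha using Nat.le_induction with
  | base => simp
  | succ a ha ih =>
    have ha0 : (0 : ℝ) < a := by exact_mod_cast ha
    have h1 : Real.log (((a : ℝ) + 1) / a) ≤ ((a : ℝ) + 1) / a - 1 :=
      Real.log_le_sub_one_of_pos (by positivity)
    have h2 : ((a : ℝ) + 1) / a - 1 = 1 / a := by field_simp; ring
    rw [h2, Real.log_div (by positivity) (by positivity), le_div_iff₀ ha0] at h1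
    rw [Nat.factorial_succ]
    push_cast
    rw [Real.log_mul (by positivity) (by positivity)]
    nlinarith

lemma log_factorial_upper (a : ℕ) (ha : 1 ≤ a) :
    Real.log (a.factorial : ℝ) ≤ (a : ℝ) * Real.log a - a + (1 + Real.log a) := by
  induction a, ha using Nat.le_induction with
  | base => simp
  | succ a ha ih =>
    have ha0 : (0 : ℝ) < a := by exact_mod_cast ha
    have h1 := Real.one_sub_inv_le_log_of_pos (x := ((a : ℝ) + 1) / a) (by positivity)
    have h2 : 1 - (((a : ℝ) + 1) / a)⁻¹ = 1 / (a + 1) := by field_simp; ring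
    rw [h2, Real.log_div (by positivity) (by positivity), div_le_iff₀ (by positivity)] at h1
    rw [Nat.factorial_succ]
    push_cast
    rw [Real.log_mul (by positivity) (by positivity)]
    nlinarith

/-- The Stirling error of a single part `a`, charged partly to its entropy contribution
`a log (n / a)` and partly to its share of the total mass. -/
lemma stirling_error_le (n a : ℕ) (ha : 1 ≤ a) (han : a ≤ n) (hL : 0 < Real.log n) :
    1 + Real.log a ≤ 2 / Real.log n * (a * Real.log ((n : ℝ) / a))
      + a * ((1 + Real.log n) / √n) := by
  have ha0 : (0 : ℝ) < a := by exact_mod_cast ha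
  have hn0 : (0 : ℝ) < n := by exact_mod_cast (by omega : 0 < n)
  have han' : (a : ℝ) ≤ n := by exact_mod_cast han
  have hs : 0 < √(n : ℝ) := Real.sqrt_pos.2 hn0
  have hlan : Real.log a ≤ Real.log n := Real.log_le_log ha0 han'
  rw [Real.log_div hn0.ne' ha0.ne']
  rcases le_total (a : ℝ) (√n) with h | h
  · have h1 : Real.log a ≤ Real.log n / 2 := by
      rw [← Real.log_sqrt hn0.le]
      exact Real.log_le_log ha0 h
    have h2 : Real.log a ≤ a - 1 := Real.log_le_sub_one_of_pos ha0
    have h3 : (a : ℝ) ≤ 2 / Real.log n * (a * (Real.log n - Real.log a)) := by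
      rw [div_mul_eq_mul_div, le_div_iff₀ hL]
      nlinarith
    have h4 : 0 ≤ (a : ℝ) * ((1 + Real.log n) / √n) := by positivity
    linarith
  · have h3 : 0 ≤ 2 / Real.log n * (a * (Real.log n - Real.log a)) :=
      mul_nonneg (by positivity) (mul_nonneg ha0.le (by linarith))
    have h4 : 1 + Real.log n ≤ (a : ℝ) * ((1 + Real.log n) / √n) := by
      rw [mul_div_assoc', le_div_iff₀ hs]
      nlinarith
    linarith

/-- The unconditional estimate `|h - S| ≤ (2 / L) S + (√n + 1) (1 + L)`: no lower bound on the
entropy is assumed. -/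
lemma abs_log_multinomial_sub_le (n : ℕ) (a : Fin n → ℕ) (hsum : ∑ i, a i = n)
    (hL : 0 < Real.log n) :
    |Real.log ((n.factorial : ℝ) / ∏ i, ((a i).factorial : ℝ))
        - ∑ i with 0 < a i, (a i : ℝ) * Real.log ((n : ℝ) / a i)|
      ≤ 2 / Real.log n * (∑ i with 0 < a i, (a i : ℝ) * Real.log ((n : ℝ) / a i))
        + (√n + 1) * (1 + Real.log n) := by
  have hn : 1 ≤ n := by
    rcases Nat.eq_zero_or_pos n with rfl | h
    · simp at hL
    · exact h
  have hn0 : (0 : ℝ) < n := by exact_mod_cast hn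
  have hs : 0 < √(n : ℝ) := Real.sqrt_pos.2 hn0
  have hle : ∀ i, a i ≤ n := fun i =>
    (Finset.single_le_sum (fun j _ => Nat.zero_le (a j)) (Finset.mem_univ i)).trans_eq hsum
  have hmass : ∑ i with 0 < a i, (a i : ℝ) = n := by
    rw [Finset.sum_filter_of_ne]
    · exact_mod_cast hsum
    · intro i _ h
      exact Nat.pos_of_ne_zero (by exact_mod_cast h)
  have hfact : Real.log ((n.factorial : ℝ) / ∏ i, ((a i).factorial : ℝ))
      = Real.log (n.factorial : ℝ) - ∑ i with 0 < a i, Real.log ((a i).factorial : ℝ) := by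
    rw [Real.log_div (by positivity)
      (Finset.prod_ne_zero_iff.2 fun i _ => by positivity),
      Real.log_prod (fun i _ => by positivity), Finset.sum_filter_of_ne]
    intro i _ h
    by_contra h0
    have h0 : a i = 0 := by omega
    simp [h0] at h
  have hS : ∑ i with 0 < a i, (a i : ℝ) * Real.log ((n : ℝ) / a i)
      = n * Real.log n - ∑ i with 0 < a i, (a i : ℝ) * Real.log (a i) := by
    rw [← hmass, Finset.sum_mul, ← Finset.sum_sub_distrib, hmass]
    refine Finset.sum_congr rfl fun i hi => ?_
    have hi0 : (0 : ℝ) < a i := by exact_mod_cast (Finset.mem_filter.1 hi).2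
    rw [Real.log_div hn0.ne' hi0.ne']
    ring
  have hlow : ∑ i with 0 < a i, (a i : ℝ) * Real.log (a i) - n
      ≤ ∑ i with 0 < a i, Real.log ((a i).factorial : ℝ) := by
    rw [← hmass, ← Finset.sum_sub_distrib]
    exact Finset.sum_le_sum fun i hi => log_factorial_lower _ (Finset.mem_filter.1 hi).2
  have hup : ∑ i with 0 < a i, Real.log ((a i).factorial : ℝ)
      ≤ ∑ i with 0 < a i, (a i : ℝ) * Real.log (a i) - n
        + ∑ i with 0 < a i, (1 + Real.log (a i)) := by
    rw [← hmass, ← Finset.sum_sub_distrib, ← Finset.sum_add_distrib]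
    exact Finset.sum_le_sum fun i hi => log_factorial_upper _ (Finset.mem_filter.1 hi).2
  have herr : ∑ i with 0 < a i, (1 + Real.log (a i))
      ≤ 2 / Real.log n * (∑ i with 0 < a i, (a i : ℝ) * Real.log ((n : ℝ) / a i))
        + n * ((1 + Real.log n) / √n) := by
    calc ∑ i with 0 < a i, (1 + Real.log (a i))
        ≤ ∑ i with 0 < a i, (2 / Real.log n * (a i * Real.log ((n : ℝ) / a i))
            + a i * ((1 + Real.log n) / √n)) :=
          Finset.sum_le_sum fun i hi =>
            stirling_error_le n (a i) (Finset.mem_filter.1 hi).2 (hle i) hL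
      _ = _ := by
          rw [Finset.sum_add_distrib, ← Finset.mul_sum, ← Finset.sum_mul, hmass]
  have hsq : (n : ℝ) * ((1 + Real.log n) / √n) = √n * (1 + Real.log n) := by
    rw [mul_div_assoc', div_eq_iff hs.ne']
    nth_rewrite 1 [← Real.mul_self_sqrt hn0.le]
    ring
  have hS0 : 0 ≤ ∑ i with 0 < a i, (1 + Real.log (a i)) :=
    Finset.sum_nonneg fun i _ => by
      have := Real.log_natCast_nonneg (a i)
      linarith
  have hnlow := log_factorial_lower n hn
  have hnup := log_factorial_upper n hn
  rw [abs_le]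
  constructor <;> nlinarith

/-- Powers of `log n` are negligible against `√n`. -/
lemma eventually_growth :
    ∃ N : ℕ, ∀ n : ℕ, N ≤ n → Real.exp 1 ≤ Real.log n ∧ 4 ≤ Real.log n ∧
      8 * Real.log n ^ 102 ≤ √n := by
  have hcast := tendsto_natCast_atTop_atTop (R := ℝ)
  have hlog := Real.tendsto_log_atTop.comp hcast
  have ho := hcast.eventually
    ((Real.isLittleO_pow_log_id_atTop (n := 204)).bound (c := 1 / 64) (by norm_num))
  have hev := (hlog.eventually_ge_atTop (Real.exp 1)).and
    ((hlog.eventually_ge_atTop 4).and ho)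
  obtain ⟨N, hN⟩ := Filter.eventually_atTop.1 hev
  refine ⟨N, fun n hn => ?_⟩
  obtain ⟨h1, h2, h3⟩ := hN n hn
  simp only [Function.comp] at h1 h2
  refine ⟨h1, h2, Real.le_sqrt_of_sq_le ?_⟩
  simp only [id, norm_pow, Real.norm_eq_abs] at h3
  rw [abs_of_nonneg (by linarith : (0 : ℝ) ≤ Real.log n),
    abs_of_nonneg (Nat.cast_nonneg n)] at h3
  calc (8 * Real.log (n : ℝ) ^ 102) ^ 2 = 64 * Real.log (n : ℝ) ^ 204 := by ring
    _ ≤ (n : ℝ) := by linarith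

/-- Entropy approximation: there are constants `C` and `N` such that for all `n ≥ N` and all
nonnegative integers `a₁,…,a_n` with `a₁ + ⋯ + a_n = n`, setting
`H = (1/n)·log(n!/(a₁!⋯a_n!))`, if `H ≥ (log n)^{−100}` then
`|H − Σ_{i : aᵢ > 0} (aᵢ/n)·log(n/aᵢ)| ≤ C·(log log n / log n)·H`. -/
theorem entropy_approximation :
    ∃ C : ℝ, ∃ N : ℕ, ∀ n : ℕ, N ≤ n →
      ∀ a : Fin n → ℕ, (∑ i, a i) = n →
      ((Real.log n) ^ 100)⁻¹
          ≤ (1 / (n : ℝ)) * Real.log ((n.factorial : ℝ) / ∏ i, ((a i).factorial : ℝ)) →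
      |(1 / (n : ℝ)) * Real.log ((n.factorial : ℝ) / ∏ i, ((a i).factorial : ℝ))
          - ∑ i ∈ Finset.univ.filter (fun i => 0 < a i),
              ((a i : ℝ) / (n : ℝ)) * Real.log ((n : ℝ) / (a i : ℝ))|
        ≤ C * (Real.log (Real.log n) / Real.log n)
          * ((1 / (n : ℝ)) * Real.log ((n.factorial : ℝ) / ∏ i, ((a i).factorial : ℝ))) := by
  obtain ⟨N, hN⟩ := eventually_growth
  refine ⟨5, max N 1, fun n hn a hsum hH => ?_⟩
  obtain ⟨hexp, hL4, hgrow⟩ := hN n (le_trans (le_max_left _ _) hn)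
  have hn1 : (1 : ℝ) ≤ n := by exact_mod_cast le_trans (le_max_right _ _) hn
  have hL : 0 < Real.log n := by linarith
  have hmain := abs_log_multinomial_sub_le n a hsum hL
  have hsumdiv : ∑ i with 0 < a i, ((a i : ℝ) / (n : ℝ)) * Real.log ((n : ℝ) / (a i : ℝ))
      = 1 / (n : ℝ) * ∑ i with 0 < a i, (a i : ℝ) * Real.log ((n : ℝ) / a i) := by
    rw [Finset.mul_sum]
    exact Finset.sum_congr rfl fun i _ => by ring
  rw [hsumdiv]
  generalize Real.log ((n.factorial : ℝ) / ∏ i, ((a i).factorial : ℝ)) = h at *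
  generalize ∑ i with 0 < a i, (a i : ℝ) * Real.log ((n : ℝ) / a i) = S at *
  have hloglog : 1 ≤ Real.log (Real.log n) := by
    rwa [Real.le_log_iff_exp_le hL]
  generalize Real.log (Real.log n) = M at *
  generalize Real.log n = L at *
  have hs1 : 1 ≤ √(n : ℝ) := Real.one_le_sqrt.2 hn1
  have hss : √(n : ℝ) * √n = n := Real.mul_self_sqrt (by linarith)
  have hn0 : (0 : ℝ) < n := by linarith
  generalize √(n : ℝ) = s at *
  have hh : (n : ℝ) ≤ h * L ^ 100 := by
    rw [one_div, inv_mul_eq_div, le_div_iff₀ hn0, inv_mul_le_iff₀ (by positivity)] at hH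
    linarith
  have hh0 : 0 < h := by
    by_contra hneg
    have : h * L ^ 100 ≤ 0 := mul_nonpos_of_nonpos_of_nonneg (not_lt.1 hneg) (by positivity)
    linarith
  have hR : (s + 1) * (1 + L) ≤ h / (2 * L) := by
    have h1 : (s + 1) * (1 + L) ≤ 4 * (s * L) := by nlinarith
    have h2 : 4 * (s * L) * (2 * L) * L ^ 100 ≤ h * L ^ 100 := by
      calc 4 * (s * L) * (2 * L) * L ^ 100 = s * (8 * L ^ 102) := by ring
        _ ≤ s * s := by gcongr
        _ ≤ h * L ^ 100 := by linarith
    have h3 : 4 * (s * L) * (2 * L) ≤ h := le_of_mul_le_mul_right h2 (by positivity)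
    exact h1.trans ((le_div_iff₀ (by positivity)).2 h3)
  -- Absorption: `S ≤ h + |h - S|` and `2 / L ≤ 1 / 2`.
  have hD : |h - S| ≤ 5 * h / L := by
    have hSle : S ≤ h + |h - S| := by linarith [neg_abs_le (h - S)]
    have hmul : 2 / L * S ≤ 2 / L * h + 1 / 2 * |h - S| := by
      have h1 : 2 / L ≤ 1 / 2 := by
        rw [div_le_div_iff₀ hL (by norm_num)]
        linarith
      calc 2 / L * S ≤ 2 / L * (h + |h - S|) := by gcongr
        _ = 2 / L * h + 2 / L * |h - S| := by ring
        _ ≤ 2 / L * h + 1 / 2 * |h - S| := by gcongr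
    have e1 : h / (2 * L) = 1 / 2 * (h / L) := by field_simp
    have e2 : 2 / L * h = 2 * (h / L) := by ring
    have e3 : 5 * h / L = 5 * (h / L) := by ring
    linarith
  rw [← mul_sub, abs_mul, abs_of_pos (by positivity : 0 < 1 / (n : ℝ))]
  calc 1 / (n : ℝ) * |h - S| ≤ 1 / (n : ℝ) * (5 * h / L) := by gcongr
    _ = 5 * (1 / L) * (1 / (n : ℝ) * h) := by ring
    _ ≤ 5 * (M / L) * (1 / (n : ℝ) * h) := by gcongr
end
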